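/- arXiv:2502.08809 — 2 statements merged into one kernel-verified Lean document; each statement's English description precedes it below -/
import Mathlib

section
/- Suppose condition (C) holds. Let Ω ⊆ E_k be an open set and let Φ : Ω → A be locally bounded in Ω and differentiable in the sense of Gâteaux at every point of Ω. Then Φ is differentiable in the sense of Lorch at every point ζ of Ω, and its Lorch derivative at ζ equals its Gâteaux derivative Φ'_G(ζ). -/
open Filter Topology

/-- Local boundedness of `Φ` on `Ω`: every point of `Ω` has a neighborhood in `Ω`
on which `Φ` is bounded. -/
def IsLocBoundedOn {A : Type*} [NormedCommRing A] [NormedAlgebra ℂ A]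
    {E : Submodule ℝ A} (Ω : Set E) (Φ : E → A) : Prop :=
  ∀ ζ ∈ Ω, ∃ r > (0 : ℝ), ∃ C : ℝ, ∀ z ∈ Ω, ‖z - ζ‖ < r → ‖Φ z‖ ≤ C

/-- Differentiability in the sense of Gâteaux at `ζ` with Gâteaux derivative `g`:
for every `h ∈ E`, `(Φ(ζ + δ h) - Φ(ζ))/δ → h * g` as the real `δ → 0⁺`. -/
def GateauxDiffAt {A : Type*} [NormedCommRing A] [NormedAlgebra ℂ A]
    {E : Submodule ℝ A} (Φ : E → A) (ζ : E) (g : A) : Prop :=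
  ∀ h : E, Tendsto (fun δ : ℝ => δ⁻¹ • (Φ (ζ + δ • h) - Φ ζ))
    (𝓝[>] (0 : ℝ)) (𝓝 ((h : A) * g))

/-- Differentiability in the sense of Lorch at `ζ` (relative to `Ω`) with
Lorch derivative `L`. -/
def LorchDiffAt {A : Type*} [NormedCommRing A] [NormedAlgebra ℂ A]
    {E : Submodule ℝ A} (Ω : Set E) (Φ : E → A) (ζ : E) (L : A) : Prop :=
  ∀ ε > (0 : ℝ), ∃ δ > (0 : ℝ), ∀ h : E, ‖h‖ < δ → ζ + h ∈ Ω →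
    ‖Φ (ζ + h) - Φ ζ - (h : A) * L‖ ≤ ε * ‖h‖

/-- Condition (C): every character of `A` maps `E` onto all of `ℂ`. -/
def CondC {A : Type*} [NormedCommRing A] [NormedAlgebra ℂ A]
    (E : Submodule ℝ A) : Prop :=
  ∀ φ : A →ₐ[ℂ] ℂ, Function.Surjective fun x : E => φ (x : A)


theorem hadamard_aux {E F : Type*} [NormedAddCommGroup E] [NormedSpace ℝ E] [FiniteDimensional ℝ E]
    [NormedAddCommGroup F] [NormedSpace ℝ F] [FiniteDimensional ℝ F]
    (Φ : E → F) (D : E → E →L[ℝ] F) (ζ : E) (r : ℝ) (hr : 0 < r) (C : ℝ)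
    (hD : ∀ z ∈ Metric.ball ζ r, ‖D z‖ ≤ C)
    (hL : ∀ z ∈ Metric.ball ζ r, ∀ v, HasLineDerivAt ℝ Φ (D z v) z v) :
    HasFDerivAt Φ (D ζ) ζ := by
  have hC : 0 ≤ C := (norm_nonneg _).trans (hD ζ (Metric.mem_ball_self hr))
  have hlip : LipschitzOnWith ⟨C, hC⟩ Φ (Metric.ball ζ r) := by
    apply LipschitzOnWith.of_dist_le_mul
    intro w hw z hz
    have hmem : ∀ t ∈ Set.Icc (0:ℝ) 1, z + t • (w - z) ∈ Metric.ball ζ r := by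
      intro t ht
      exact (convex_ball ζ r).add_smul_sub_mem hz hw ht
    have hder : ∀ t ∈ Set.Icc (0:ℝ) 1, HasDerivWithinAt (fun t : ℝ => Φ (z + t • (w - z)))
        (D (z + t • (w - z)) (w - z)) (Set.Icc 0 1) t := by
      intro t ht
      apply HasDerivAt.hasDerivWithinAt
      have h := hL _ (hmem t ht) (w - z)
      unfold HasLineDerivAt at h
      have h2 := HasDerivAt.comp_sub_const t t (f := fun s : ℝ => Φ (z + t • (w - z) + s • (w - z)))
        (f' := D (z + t • (w - z)) (w - z)) (by rw [sub_self]; exact h)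
      refine h2.congr_of_eventuallyEq (Eventually.of_forall fun s => ?_)
      show Φ _ = Φ _
      congr 1
      module
    have := norm_image_sub_le_of_norm_deriv_le_segment_01' (C := C * ‖w - z‖) hder (by
      intro t ht
      refine ((D _).le_opNorm _).trans ?_
      gcongr
      exact hD _ (hmem t ⟨ht.1, ht.2.le⟩))
    rw [dist_eq_norm, dist_eq_norm]
    change _ ≤ C * _
    simpa using this
  obtain ⟨g, hg, hfg⟩ := hlip.extend_finite_dimension
  have hnear : ∀ᶠ z in 𝓝 ζ, z ∈ Metric.ball ζ r := Metric.ball_mem_nhds _ hr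
  have key : HasFDerivAt g (D ζ) ζ := by
    refine hg.hasFDerivAt_of_hasLineDerivAt_of_closure (s := Set.univ) (by simp) ?_
    intro v _
    have h := hL ζ (Metric.mem_ball_self hr) v
    unfold HasLineDerivAt at h ⊢
    refine h.congr_of_eventuallyEq ?_
    have hc : Tendsto (fun t : ℝ => ζ + t • v) (𝓝 0) (𝓝 ζ) := by
      have : Continuous (fun t : ℝ => ζ + t • v) := by fun_prop
      simpa using this.tendsto 0
    filter_upwards [hc.eventually hnear] with t ht
    exact (hfg ht).symm
  refine key.congr_of_eventuallyEq ?_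
  filter_upwards [hnear] with z hz using hfg hz

/-- maximum principle on a rectangle with exceptional corners -/
theorem rect_max (φ : ℂ → ℂ) (a b c d A B : ℝ) (hB : 0 < B)
    (hd : ∀ p : ℂ, p.re ∈ Set.Icc a b → p.im ∈ Set.Icc c d →
      (p.re ∈ Set.Ioo a b ∨ p.im ∈ Set.Ioo c d) → DifferentiableAt ℂ φ p)
    (hA : ∀ p : ℂ, p.re ∈ Set.Icc a b → p.im ∈ Set.Icc c d → ‖φ p‖ ≤ A)
    (hbd : ∀ p : ℂ, p.re ∈ Set.Icc a b → p.im ∈ Set.Icc c d →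
      (p.re = a ∨ p.re = b ∨ p.im = c ∨ p.im = d) → ‖φ p‖ ≤ B)
    (w : ℂ) (hw : w.re ∈ Set.Ioo a b) (hw' : w.im ∈ Set.Ioo c d) : ‖φ w‖ ≤ B := by
  set V : Set ℂ := Set.Ioo a b ×ℂ Set.Ioo c d with hV
  have hab : a < b := hw.1.trans hw.2
  have hcd : c < d := hw'.1.trans hw'.2
  have hVo : IsOpen V := isOpen_Ioo.reProdIm isOpen_Ioo
  have hcl : closure V = Set.Icc a b ×ℂ Set.Icc c d := by
    rw [hV, Complex.closure_reProdIm, closure_Ioo hab.ne, closure_Ioo hcd.ne]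
  have hVb : Bornology.IsBounded V := (Metric.isBounded_Ioo a b).reProdIm (Metric.isBounded_Ioo c d)
  set P : ℂ → ℂ := fun z => (z - ⟨a, c⟩) * (z - ⟨a, d⟩) * (z - ⟨b, c⟩) * (z - ⟨b, d⟩) with hP
  have hPc : Continuous P := by fun_prop
  have hPd : Differentiable ℂ P := by
    rw [hP]; fun_prop
  obtain ⟨D, hD⟩ : ∃ D, ∀ p ∈ closure V, ‖P p‖ ≤ D :=
    (hVb.isCompact_closure).exists_bound_of_continuousOn hPc.continuousOn
  have hwV : w ∈ V := ⟨hw, hw'⟩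
  have hPw : 0 < ‖P w‖ := by
    rw [norm_pos_iff]
    have h1 : ∀ x y : ℝ, (x = a ∨ x = b) → w - ⟨x, y⟩ ≠ 0 := by
      intro x y hx h
      have := congrArg Complex.re h
      simp at this
      rcases hx with rfl | rfl
      · linarith [hw.1]
      · linarith [hw.2]
    simp only [hP]
    exact mul_ne_zero (mul_ne_zero (mul_ne_zero (h1 _ _ (.inl rfl)) (h1 _ _ (.inl rfl)))
      (h1 _ _ (.inr rfl))) (h1 _ _ (.inr rfl))
  have hDpos : 0 < D := hPw.trans_le (hD w (subset_closure hwV))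
  have main : ∀ n : ℕ, ‖φ w‖ ^ n * ‖P w‖ ≤ B ^ n * D := by
    intro n
    have hdc : DiffContOnCl ℂ (fun z => φ z ^ n * P z) V := by
      constructor
      · intro p hp
        have : DifferentiableAt ℂ φ p := hd p ⟨hp.1.1.le, hp.1.2.le⟩ ⟨hp.2.1.le, hp.2.2.le⟩ (.inl hp.1)
        exact ((this.pow n).mul (hPd p)).differentiableWithinAt
      · intro p hp
        have hp' := hp
        rw [hcl] at hp
        by_cases hcor : p.re ∈ Set.Ioo a b ∨ p.im ∈ Set.Ioo c d
        · have : DifferentiableAt ℂ φ p := hd p hp.1 hp.2 hcor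
          exact ((this.pow n).mul (hPd p)).continuousAt.continuousWithinAt
        · have hP0 : P p = 0 := by
            have h1 : p.re = a ∨ p.re = b := by
              by_contra h
              push Not at h hcor
              exact hcor.1 ⟨lt_of_le_of_ne hp.1.1 (Ne.symm h.1), lt_of_le_of_ne hp.1.2 h.2⟩
            have h2 : p.im = c ∨ p.im = d := by
              by_contra h
              push Not at h hcor
              exact hcor.2 ⟨lt_of_le_of_ne hp.2.1 (Ne.symm h.1), lt_of_le_of_ne hp.2.2 h.2⟩
            have : ∀ x y : ℝ, p.re = x → p.im = y → p - ⟨x, y⟩ = 0 := by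
              intro x y hx hy
              apply Complex.ext <;> simp [hx, hy]
            simp only [hP]
            rcases h1 with h1 | h1 <;> rcases h2 with h2 | h2 <;> simp [this _ _ h1 h2]
          unfold ContinuousWithinAt
          simp only [hP0, mul_zero]
          have hA0 : 0 ≤ A := (norm_nonneg _).trans (hA p hp.1 hp.2)
          have hlim : Tendsto (fun z => A ^ n * ‖P z‖) (𝓝[closure V] p) (𝓝 0) := by
            have : Tendsto (fun z => A ^ n * ‖P z‖) (𝓝 p) (𝓝 (A ^ n * ‖P p‖)) :=
              (by fun_prop : Continuous (fun z => A ^ n * ‖P z‖)).tendsto p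
            rw [hP0, norm_zero, mul_zero] at this
            exact this.mono_left nhdsWithin_le_nhds
          refine squeeze_zero_norm' ?_ hlim
          filter_upwards [self_mem_nhdsWithin] with z hz
          rw [hcl] at hz
          rw [norm_mul, norm_pow]
          gcongr
          exact hA z hz.1 hz.2
    have := Complex.norm_le_of_forall_mem_frontier_norm_le hVb hdc (C := B ^ n * D) (by
      intro p hp
      have hpc : p ∈ closure V := frontier_subset_closure hp
      have hpn : p ∉ V := by
        rw [hVo.frontier_eq] at hp; exact hp.2
      have hDp := hD p hpc
      rw [hcl] at hpc
      rw [norm_mul, norm_pow]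
      gcongr
      apply hbd p hpc.1 hpc.2
      by_contra h
      push Not at h
      exact hpn ⟨⟨lt_of_le_of_ne hpc.1.1 (Ne.symm h.1), lt_of_le_of_ne hpc.1.2 h.2.1⟩,
        ⟨lt_of_le_of_ne hpc.2.1 (Ne.symm h.2.2.1), lt_of_le_of_ne hpc.2.2 h.2.2.2⟩⟩)
      (subset_closure hwV)
    simpa [norm_mul, norm_pow] using this
  by_contra hlt
  push Not at hlt
  have hq : 1 < ‖φ w‖ / B := by rwa [one_lt_div hB]
  obtain ⟨n, hn⟩ := pow_unbounded_of_one_lt (D / ‖P w‖) hq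
  rw [div_pow, div_lt_div_iff₀ hPw (by positivity)] at hn
  nlinarith [main n]


theorem gap_aux (X : Set ℝ) (hX : IsClosed X) (s x : ℝ) (h0 : (0:ℝ) ∈ X) (hx0 : 0 < x) (hxs : x < s)
    (hxX : x ∉ X) : ∃ a b : ℝ, a < x ∧ x < b ∧ 0 ≤ a ∧ b ≤ s ∧ (∀ t ∈ Set.Ioo a b, t ∉ X) ∧
      a ∈ X ∧ (b ∈ X ∨ b = s) := by
  have c1 : IsCompact (X ∩ Set.Icc 0 x) := isCompact_Icc.inter_left hX
  have c2 : IsCompact ((X ∪ {s}) ∩ Set.Icc x s) :=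
    isCompact_Icc.inter_left (hX.union isClosed_singleton)
  obtain ⟨a, ha, hamax⟩ := c1.exists_isGreatest ⟨0, h0, le_rfl, hx0.le⟩
  obtain ⟨b, hb, hbmin⟩ := c2.exists_isLeast ⟨s, Or.inr rfl, hxs.le, le_rfl⟩
  have hax : a < x := lt_of_le_of_ne ha.2.2 (fun h => hxX (h ▸ ha.1))
  have hxb : x < b := by
    refine lt_of_le_of_ne hb.2.1 (fun h => ?_)
    rcases hb.1 with h' | h'
    · exact hxX (h ▸ h')
    · have : b = s := h'
      linarith
  refine ⟨a, b, hax, hxb, ha.2.1, hb.2.2, ?_, ha.1, hb.1⟩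
  intro t ht htX
  rcases le_total t x with h | h
  · have := hamax ⟨htX, ha.2.1.trans ht.1.le, h⟩
    linarith [ht.1]
  · have := hbmin ⟨Or.inl htX, h, ht.2.le.trans hb.2.2⟩
    linarith [ht.2]

theorem gap (X : Set ℝ) (hX : IsClosed X) (s x : ℝ) (h0 : (0:ℝ) ∈ X) (hxs : |x| < s)
    (hxX : x ∉ X) : ∃ a b σ : ℝ, a < x ∧ x < b ∧ -s ≤ a ∧ b ≤ s ∧ (∀ t ∈ Set.Ioo a b, t ∉ X) ∧
      (∀ t ∈ Set.Icc a b, 0 ≤ σ * t) ∧ (a ∈ X ∨ σ * a = s) ∧ (b ∈ X ∨ σ * b = s) ∧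
      (σ = 1 ∨ σ = -1) := by
  have hs : 0 < s := (abs_nonneg x).trans_lt hxs
  rw [abs_lt] at hxs
  rcases lt_trichotomy x 0 with h | h | h
  · obtain ⟨a, b, h1, h2, h3, h4, h5, h6, h7⟩ := gap_aux (-X) hX.neg s (-x) (by simpa using h0)
      (by linarith) (by linarith) (by simpa using hxX)
    refine ⟨-b, -a, -1, by linarith, by linarith, by linarith, by linarith, ?_, ?_, ?_, ?_, Or.inr rfl⟩
    · intro t ht
      have := h5 (-t) ⟨by linarith [ht.2], by linarith [ht.1]⟩
      simpa using this
    · intro t ht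
      linarith [ht.2]
    · rcases h7 with h7 | h7
      · left; simpa using h7
      · right; linarith
    · left; simpa using h6
  · exact absurd (h ▸ h0) hxX
  · obtain ⟨a, b, h1, h2, h3, h4, h5, h6, h7⟩ := gap_aux X hX s x h0 h hxs.2 hxX
    refine ⟨a, b, 1, h1, h2, by linarith, h4, h5, ?_, Or.inl h6, ?_, Or.inl rfl⟩
    · intro t ht
      linarith [ht.1]
    · simpa using h7

theorem sq_step0 (f : ℂ → ℂ) (K : Set ℂ) (s N A : ℝ) (hs : 0 < s) (hN : 0 < N)
    (S : Set ℂ) (hS : S = {p : ℂ | |p.re| ≤ s ∧ |p.im| ≤ s}) (h0 : (0 : ℂ) ∈ K)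
    (hK : IsCompact (K ∩ S))
    (hdiff : ∀ p ∈ S, p ∉ K → DifferentiableAt ℂ f p)
    (hH : ∀ k ∈ K ∩ S, ∀ t : ℝ, |t| ≤ 2 * s → ‖f (k + t) - f k‖ ≤ N * |t|)
    (hV : ∀ k ∈ K ∩ S, ∀ t : ℝ, |t| ≤ 2 * s → ‖f (k + t * Complex.I) - f k‖ ≤ N * |t|)
    (hA : ∀ p ∈ S, ‖f p - f 0‖ ≤ A) (hAB : 4 * N * s ≤ A) (w : ℂ)
    (hwr : |w.re| ≤ s / 4) (hwi : |w.im| ≤ s / 4) :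
    ‖f w - f 0‖ ≤ √(A * (4 * N * s)) := by
  set B := 4 * N * s with hBdef
  have hB : 0 < B := by positivity
  have hApos : 0 < A := hB.trans_le hAB
  have hBsq : B ≤ √(A * B) := by
    apply Real.le_sqrt_of_sq_le
    nlinarith
  have h0S : (0:ℂ) ∈ S := by rw [hS]; simp [hs.le]
  set X := Complex.re '' (K ∩ S) with hX
  set Y := Complex.im '' (K ∩ S) with hY
  have hXc : IsClosed X := (hK.image Complex.continuous_re).isClosed
  have hYc : IsClosed Y := (hK.image Complex.continuous_im).isClosed
  have h0X : (0:ℝ) ∈ X := ⟨0, ⟨h0, h0S⟩, rfl⟩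
  have h0Y : (0:ℝ) ∈ Y := ⟨0, ⟨h0, h0S⟩, rfl⟩
  -- controlled points of K
  have hctlK : ∀ k ∈ K ∩ S, ‖f k - f 0‖ ≤ 2 * N * s := by
    intro k hk
    have hkS := hk.2
    rw [hS] at hkS
    have e1 := hV k hk (-k.im) (by rw [abs_neg]; linarith [hkS.2])
    have e2 := hH 0 ⟨h0, h0S⟩ k.re (by linarith [hkS.1])
    have : k + ((-k.im : ℝ) : ℂ) * Complex.I = 0 + (k.re : ℂ) := by
      apply Complex.ext <;> simp
    rw [this] at e1
    rw [abs_neg] at e1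
    have e3 : ‖f k - f 0‖ ≤ ‖f (0 + (k.re : ℂ)) - f k‖ + ‖f (0 + (k.re : ℂ)) - f 0‖ := by
      rw [norm_sub_rev _ (f k)]
      exact norm_sub_le_norm_sub_add_norm_sub _ _ _
    nlinarith [hkS.1, hkS.2]
  have hctlX : ∀ p ∈ S, p.re ∈ X → ‖f p - f 0‖ ≤ B := by
    rintro p hp ⟨k, hk, hkp⟩
    have h1 := hctlK k hk
    have hkS := hk.2
    rw [hS] at hkS hp
    have hab : |p.im - k.im| ≤ 2 * s := by
      have := abs_sub p.im k.im
      linarith [hkS.2, hp.2]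
    have h2 := hV k hk (p.im - k.im) hab
    have : k + ((p.im - k.im : ℝ) : ℂ) * Complex.I = p := by
      apply Complex.ext <;> simp [hkp]
    rw [this] at h2
    have := norm_sub_le_norm_sub_add_norm_sub (f p) (f k) (f 0)
    nlinarith
  have hctlY : ∀ p ∈ S, p.im ∈ Y → ‖f p - f 0‖ ≤ B := by
    rintro p hp ⟨k, hk, hkp⟩
    have h1 := hctlK k hk
    have hkS := hk.2
    rw [hS] at hkS hp
    have hab : |p.re - k.re| ≤ 2 * s := by
      have := abs_sub p.re k.re
      linarith [hkS.1, hp.1]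
    have h2 := hH k hk (p.re - k.re) hab
    have : k + ((p.re - k.re : ℝ) : ℂ) = p := by
      apply Complex.ext <;> simp [hkp]
    rw [this] at h2
    have := norm_sub_le_norm_sub_add_norm_sub (f p) (f k) (f 0)
    nlinarith
  have hwS : w ∈ S := by rw [hS]; exact ⟨by linarith, by linarith⟩
  by_cases hwX : w.re ∈ X
  · exact (hctlX w hwS hwX).trans hBsq
  by_cases hwY : w.im ∈ Y
  · exact (hctlY w hwS hwY).trans hBsq
  obtain ⟨a, b, σ, ha, hb, has, hbs, hIoo, hσ, haX, hbX, hσ1⟩ :=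
    gap X hXc s w.re h0X (by linarith) hwX
  obtain ⟨c, d, τ, hc, hd, hcs, hds, hIoo', hτ, hcY, hdY, hτ1⟩ :=
    gap Y hYc s w.im h0Y (by linarith) hwY
  set κ := Real.log (A / B) / s with hκ
  have hκ0 : 0 ≤ κ := by
    apply div_nonneg _ hs.le
    apply Real.log_nonneg
    rwa [one_le_div hB]
  have hexpκ : Real.exp (-(κ * s)) = B / A := by
    rw [hκ, div_mul_cancel₀ _ hs.ne', Real.exp_neg, Real.exp_log (by positivity), inv_div]
  set φ : ℂ → ℂ := fun z => (f z - f 0) * Complex.exp (-κ * ((σ - τ * Complex.I) * z)) with hφ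
  have hnorm : ∀ p, ‖φ p‖ = ‖f p - f 0‖ * Real.exp (-(κ * (σ * p.re + τ * p.im))) := by
    intro p
    simp only [hφ, norm_mul, Complex.norm_exp]
    congr 2
    simp
  have hRS : ∀ p : ℂ, p.re ∈ Set.Icc a b → p.im ∈ Set.Icc c d → p ∈ S := by
    intro p h1 h2
    rw [hS]
    exact ⟨abs_le.2 ⟨by linarith [h1.1], by linarith [h1.2]⟩,
      abs_le.2 ⟨by linarith [h2.1], by linarith [h2.2]⟩⟩
  have hexp1 : ∀ p : ℂ, p.re ∈ Set.Icc a b → p.im ∈ Set.Icc c d →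
      Real.exp (-(κ * (σ * p.re + τ * p.im))) ≤ 1 := by
    intro p h1 h2
    rw [Real.exp_le_one_iff]
    have := mul_nonneg hκ0 (add_nonneg (hσ _ h1) (hτ _ h2))
    linarith
  have hexp2 : ∀ p : ℂ, s ≤ σ * p.re + τ * p.im →
      Real.exp (-(κ * (σ * p.re + τ * p.im))) ≤ B / A := by
    intro p h1
    rw [← hexpκ]
    apply Real.exp_le_exp.2
    have := mul_le_mul_of_nonneg_left h1 hκ0
    linarith
  have hres := rect_max φ a b c d A B hB ?_ ?_ ?_ w ⟨ha, hb⟩ ⟨hc, hd⟩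
  · rw [hnorm] at hres
    have hle : σ * w.re + τ * w.im ≤ s / 2 := by
      have h1 : σ * w.re ≤ s / 4 := by
        rcases hσ1 with h | h <;> rw [h] <;> linarith [abs_le.1 hwr]
      have h2 : τ * w.im ≤ s / 4 := by
        rcases hτ1 with h | h <;> rw [h] <;> linarith [abs_le.1 hwi]
      linarith
    have hge : Real.exp (-(κ * (s / 2))) ≤ Real.exp (-(κ * (σ * w.re + τ * w.im))) := by
      apply Real.exp_le_exp.2
      have := mul_le_mul_of_nonneg_left hle hκ0
      linarith
    have h3 : ‖f w - f 0‖ * Real.exp (-(κ * (s / 2))) ≤ B :=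
      (mul_le_mul_of_nonneg_left hge (norm_nonneg _)).trans hres
    apply Real.le_sqrt_of_sq_le
    have h4 : (‖f w - f 0‖ * Real.exp (-(κ * (s / 2)))) ^ 2 ≤ B ^ 2 := by
      gcongr
    rw [mul_pow, ← Real.exp_nat_mul] at h4
    have : ((2 : ℕ) : ℝ) * -(κ * (s / 2)) = -(κ * s) := by push_cast; ring
    rw [this, hexpκ, mul_div_assoc', div_le_iff₀ hApos] at h4
    have h5 : ‖f w - f 0‖ ^ 2 * B ≤ (A * B) * B := by linarith
    exact le_of_mul_le_mul_right h5 hB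
  · intro p h1 h2 h3
    have hpS := hRS p h1 h2
    have hpK : p ∉ K := by
      intro hpK
      rcases h3 with h3 | h3
      · exact hIoo _ h3 ⟨p, ⟨hpK, hpS⟩, rfl⟩
      · exact hIoo' _ h3 ⟨p, ⟨hpK, hpS⟩, rfl⟩
    have := hdiff p hpS hpK
    rw [hφ]
    fun_prop
  · intro p h1 h2
    rw [hnorm]
    have := hA p (hRS p h1 h2)
    calc _ ≤ A * 1 := by
          gcongr
          exact hexp1 p h1 h2
      _ = A := mul_one _
  · intro p h1 h2 h3
    rw [hnorm]
    have hpS := hRS p h1 h2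
    have n1 := hσ _ h1
    have n2 := hτ _ h2
    have hcase : (p.re ∈ X ∨ p.im ∈ Y) ∨ s ≤ σ * p.re + τ * p.im := by
      rcases h3 with h | h | h | h
      · rw [← h] at haX
        rcases haX with h | h
        · exact .inl (.inl h)
        · right; linarith
      · rw [← h] at hbX
        rcases hbX with h | h
        · exact .inl (.inl h)
        · right; linarith
      · rw [← h] at hcY
        rcases hcY with h | h
        · exact .inl (.inr h)
        · right; linarith
      · rw [← h] at hdY
        rcases hdY with h | h
        · exact .inl (.inr h)
        · right; linarith
    rcases hcase with h | h
    · have hfB : ‖f p - f 0‖ ≤ B := by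
        rcases h with h | h
        · exact hctlX p hpS h
        · exact hctlY p hpS h
      calc _ ≤ B * 1 := by
            gcongr
            exact hexp1 p h1 h2
        _ = B := mul_one _
    · calc _ ≤ A * (B / A) := by
            gcongr
            · exact hA p hpS
            · exact hexp2 p h
        _ = B := by field_simp

/-- Lipschitz bound at points of the exceptional set. -/
theorem sq_lip (f : ℂ → ℂ) (K : Set ℂ) (s N M : ℝ) (hs : 0 < s) (hN : 0 < N) (hM : 0 ≤ M)
    (S : ℝ → Set ℂ) (hS : S = fun s => {p : ℂ | |p.re| ≤ s ∧ |p.im| ≤ s}) (h0 : (0 : ℂ) ∈ K)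
    (hK : IsCompact (K ∩ S s))
    (hdiff : ∀ p ∈ S s, p ∉ K → DifferentiableAt ℂ f p)
    (hH : ∀ k ∈ K ∩ S s, ∀ t : ℝ, |t| ≤ 2 * s → ‖f (k + t) - f k‖ ≤ N * |t|)
    (hV : ∀ k ∈ K ∩ S s, ∀ t : ℝ, |t| ≤ 2 * s → ‖f (k + t * Complex.I) - f k‖ ≤ N * |t|)
    (hA : ∀ p ∈ S s, ‖f p - f 0‖ ≤ M) (w : ℂ) (hw : ‖w‖ ≤ s) :
    ‖f w - f 0‖ ≤ 4 * (M / s + 64 * N) * ‖w‖ := by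
  set C := M / s + 64 * N with hC
  have hCpos : 0 < C := by positivity
  have hCN : 64 * N ≤ C := by
    have : 0 ≤ M / s := by positivity
    linarith
  have hSmono : ∀ s' ≤ s, S s' ⊆ S s := by
    intro s' h p hp
    rw [hS] at hp ⊢
    exact ⟨hp.1.trans h, hp.2.trans h⟩
  have hSclosed : ∀ s', IsClosed (S s') := by
    intro s'
    rw [hS]
    exact (isClosed_le (f := fun p : ℂ => |p.re|) (g := fun _ => s') (by fun_prop) (by fun_prop)).inter
      (isClosed_le (f := fun p : ℂ => |p.im|) (g := fun _ => s') (by fun_prop) (by fun_prop))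
  have main : ∀ n : ℕ, ∀ p ∈ S (s / 4 ^ n), ‖f p - f 0‖ ≤ C * (s / 4 ^ n) := by
    intro n
    induction n with
    | zero =>
      intro p hp
      rw [pow_zero, div_one] at hp ⊢
      refine (hA p hp).trans ?_
      rw [hC, add_mul, div_mul_cancel₀ _ hs.ne']
      have : 0 ≤ 64 * N * s := by positivity
      linarith
    | succ n ih =>
      intro p hp
      set s' := s / 4 ^ n with hs'
      have hs'0 : 0 < s' := by positivity
      have hs's : s' ≤ s := div_le_self hs.le (one_le_pow₀ (by norm_num))
      have hsucc : s / 4 ^ (n + 1) = s' / 4 := by rw [hs', pow_succ]; field_simp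
      rw [hsucc] at hp ⊢
      have hsub := hSmono s' hs's
      have hc' : IsCompact (K ∩ S s') := by
        have : K ∩ S s' = (K ∩ S s) ∩ S s' := by
          ext q; constructor
          · rintro ⟨h1, h2⟩; exact ⟨⟨h1, hsub h2⟩, h2⟩
          · rintro ⟨⟨h1, _⟩, h2⟩; exact ⟨h1, h2⟩
        rw [this]
        exact hK.inter_right (hSclosed s')
      rw [hS] at hp
      have := sq_step0 f K s' N (C * s') hs'0 hN (S s') (by rw [hS]) h0 hc'
        (fun q hq => hdiff q (hsub hq))
        (fun k hk t ht => hH k ⟨hk.1, hsub hk.2⟩ t (by linarith))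
        (fun k hk t ht => hV k ⟨hk.1, hsub hk.2⟩ t (by linarith))
        ih (by nlinarith) p hp.1 hp.2
      refine this.trans ?_
      apply Real.sqrt_le_iff.2
      refine ⟨by positivity, ?_⟩
      nlinarith [mul_pos hCpos (mul_pos hs'0 hs'0)]
  rcases eq_or_ne w 0 with rfl | hw0
  · simp
  have hwpos : 0 < ‖w‖ := norm_pos_iff.2 hw0
  obtain ⟨n, hn1, hn2⟩ := exists_nat_pow_near (x := s / ‖w‖) (y := 4)
    (by rwa [one_le_div hwpos]) (by norm_num)
  have hle : ‖w‖ ≤ s / 4 ^ n := by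
    rw [le_div_iff₀ hwpos] at hn1
    rw [le_div_iff₀ (by positivity)]
    linarith
  have hlt : s / 4 ^ n ≤ 4 * ‖w‖ := by
    rw [div_lt_iff₀ hwpos, pow_succ] at hn2
    rw [div_le_iff₀ (by positivity)]
    nlinarith
  have := main n w (by
    rw [hS]
    exact ⟨(Complex.abs_re_le_norm w).trans hle, (Complex.abs_im_le_norm w).trans hle⟩)
  nlinarith


theorem lineDeriv_cont {E : Type*} [NormedAddCommGroup E] [NormedSpace ℝ E] {f : E → ℂ} {f' : ℂ} {z v : E}
    (h : HasLineDerivAt ℝ f f' z v) {ι : Type*} {l : Filter ι} {u : ι → ℝ} (hu : Tendsto u l (𝓝 0)) :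
    Tendsto (fun i => f (z + u i • v)) l (𝓝 (f z)) := by
  have h1 : HasDerivAt (fun t : ℝ => f (z + t • v)) f' 0 := h
  have := h1.continuousAt.tendsto.comp hu
  simpa [Function.comp_def] using this

theorem lineDeriv_bound {f : ℂ → ℂ} {f' : ℂ} {z v : ℂ} (h : HasLineDerivAt ℝ f f' z v) :
    ∃ C : ℝ, ∃ δ > 0, ∀ t : ℝ, |t| < δ → ‖f (z + t * v) - f z‖ ≤ C * |t| := by
  have h1 : HasDerivAt (fun t : ℝ => f (z + t • v)) f' 0 := h
  have h2 := h1.differentiableAt.isBigO_sub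
  obtain ⟨C, hC⟩ := h2.bound
  obtain ⟨δ, hδ, hb⟩ := Metric.eventually_nhds_iff.1 hC
  refine ⟨C, δ, hδ, fun t ht => ?_⟩
  have := hb (y := t) (by simpa using ht)
  simpa using this

/-- A set of uniform horizontal/vertical Lipschitz points is closed. -/
theorem closed_aux (f g : ℂ → ℂ) (U : Set ℂ) (K : Set ℂ) (hK : IsClosed K) (ρ N : ℝ) (hρ : 0 < ρ)
    (hU : ∀ z ∈ K, ∀ w : ℂ, ‖w‖ < ρ → z + w ∈ U)
    (hG : ∀ z ∈ U, ∀ v, HasLineDerivAt ℝ f (v * g z) z v) :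
    IsClosed {z | z ∈ K ∧ ∀ t : ℝ, |t| < ρ → ‖f (z + t) - f z‖ ≤ N * |t| ∧
      ‖f (z + t * Complex.I) - f z‖ ≤ N * |t|} := by
  apply IsSeqClosed.isClosed
  intro u z hu huz
  have hzK : z ∈ K := hK.mem_of_tendsto huz (Eventually.of_forall fun n => (hu n).1)
  have hre : Tendsto (fun n => (u n).re - z.re) atTop (𝓝 0) := by
    have := ((Complex.continuous_re.tendsto z).comp huz).sub_const z.re
    simpa using this
  have him : Tendsto (fun n => (u n).im - z.im) atTop (𝓝 0) := by
    have := ((Complex.continuous_im.tendsto z).comp huz).sub_const z.im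
    simpa using this
  have hre' : Tendsto (fun n => |z.re - (u n).re|) atTop (𝓝 0) := by
    have := hre.abs
    simpa [abs_sub_comm] using this
  -- vertical continuity along the line through `z + t`
  have hvert : ∀ t : ℝ, |t| < ρ →
      Tendsto (fun n => f (z + t + ((u n).im - z.im : ℝ) • Complex.I)) atTop (𝓝 (f (z + t))) := by
    intro t ht
    exact lineDeriv_cont (hG _ (hU z hzK t (by simpa using ht)) Complex.I) him
  have hhor : ∀ t : ℝ, |t| < ρ →
      Tendsto (fun n => f (z + t * Complex.I + ((u n).re - z.re : ℝ) • (1:ℂ))) atTop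
        (𝓝 (f (z + t * Complex.I))) := by
    intro t ht
    exact lineDeriv_cont (hG _ (hU z hzK _ (by simpa using ht)) 1) hre
  have hfu : Tendsto (fun n => f (u n)) atTop (𝓝 (f z)) := by
    have h1 := hvert 0 (by simpa using hρ)
    have h2 : Tendsto (fun n => f (u n) - f (z + (0:ℝ) + ((u n).im - z.im : ℝ) • Complex.I)) atTop
        (𝓝 0) := by
      have hb : Tendsto (fun n => N * |z.re - (u n).re|) atTop (𝓝 0) := by
        simpa using hre'.const_mul N
      refine squeeze_zero_norm' ?_ hb
      filter_upwards [hre'.eventually (gt_mem_nhds hρ)] with n hn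
      have := ((hu n).2 (z.re - (u n).re) hn).1
      have e : z + (0:ℝ) + ((u n).im - z.im : ℝ) • Complex.I = u n + ((z.re - (u n).re : ℝ) : ℂ) := by
        apply Complex.ext <;> simp
      rw [e, norm_sub_rev]
      exact this
    have := h2.add h1
    simpa using this
  refine ⟨hzK, fun t ht => ⟨?_, ?_⟩⟩
  · have hl := ((hvert t ht).sub hfu).norm
    have hrlim : Tendsto (fun n => N * |t - ((u n).re - z.re)|) atTop (𝓝 (N * |t|)) := by
      have := ((hre.const_sub t).abs).const_mul N
      simpa using this
    refine le_of_tendsto_of_tendsto hl hrlim ?_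
    have : ∀ᶠ n in atTop, |t - ((u n).re - z.re)| < ρ := by
      have h := (hre.const_sub t).abs
      rw [sub_zero] at h
      exact h.eventually (gt_mem_nhds ht)
    filter_upwards [this] with n hn
    have := ((hu n).2 _ hn).1
    have e : z + t + ((u n).im - z.im : ℝ) • Complex.I
        = u n + ((t - ((u n).re - z.re) : ℝ) : ℂ) := by
      apply Complex.ext <;> simp
      ring
    rw [e]
    exact this
  · have hl := ((hhor t ht).sub hfu).norm
    have hrlim : Tendsto (fun n => N * |t - ((u n).im - z.im)|) atTop (𝓝 (N * |t|)) := by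
      have := ((him.const_sub t).abs).const_mul N
      simpa using this
    refine le_of_tendsto_of_tendsto hl hrlim ?_
    have : ∀ᶠ n in atTop, |t - ((u n).im - z.im)| < ρ := by
      have h := (him.const_sub t).abs
      rw [sub_zero] at h
      exact h.eventually (gt_mem_nhds ht)
    filter_upwards [this] with n hn
    have := ((hu n).2 _ hn).2
    have e : z + t * Complex.I + ((u n).re - z.re : ℝ) • (1:ℂ)
        = u n + ((t - ((u n).im - z.im) : ℝ) : ℂ) * Complex.I := by
      apply Complex.ext <;> simp
      ring
    rw [e]
    exact this

theorem tolstov (f g : ℂ → ℂ) (c : ℂ) (R M : ℝ) (hM : ∀ z ∈ Metric.ball c R, ‖f z‖ ≤ M)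
    (hG : ∀ z ∈ Metric.ball c R, ∀ v, HasLineDerivAt ℝ f (v * g z) z v) :
    DifferentiableOn ℂ f (Metric.ball c R) := by
  set Bad : Set ℂ := {z | ¬ AnalyticAt ℂ f z} with hBad
  have hBadc : IsClosed Bad := by
    have := (isOpen_analyticAt ℂ f).isClosed_compl
    exact this
  suffices h : ∀ z ∈ Metric.ball c R, z ∉ Bad by
    intro z hz
    have := h z hz
    simp only [hBad, Set.mem_ofPred_eq, not_not] at this
    exact this.differentiableAt.differentiableWithinAt
  intro z1 hz1 hz1B
  obtain ⟨r, hr, hball⟩ : ∃ r > 0, Metric.ball z1 (2 * r) ⊆ Metric.ball c R := by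
    obtain ⟨ε, hε, h⟩ := Metric.isOpen_iff.1 Metric.isOpen_ball z1 hz1
    exact ⟨ε / 2, by positivity, by rwa [mul_div_cancel₀ _ two_ne_zero]⟩
  have hM0 : 0 ≤ M := (norm_nonneg _).trans (hM z1 hz1)
  set K1 : Set ℂ := Bad ∩ Metric.closedBall z1 r with hK1
  have hK1c : IsClosed K1 := hBadc.inter Metric.isClosed_closedBall
  have hK1U : ∀ z ∈ K1, ∀ w : ℂ, ‖w‖ < r → z + w ∈ Metric.ball c R := by
    intro z hz w hw
    apply hball
    have h2 := hz.2
    rw [Metric.mem_closedBall, dist_eq_norm] at h2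
    rw [Metric.mem_ball, dist_eq_norm]
    calc ‖z + w - z1‖ = ‖(z - z1) + w‖ := by ring_nf
      _ ≤ ‖z - z1‖ + ‖w‖ := norm_add_le _ _
      _ < 2 * r := by linarith
  set F : ℕ → Set ℂ := fun N => {z | z ∈ K1 ∧ ∀ t : ℝ, |t| < r / (N + 1) →
      ‖f (z + t) - f z‖ ≤ N * |t| ∧ ‖f (z + t * Complex.I) - f z‖ ≤ N * |t|} with hF
  have hFc : ∀ N, IsClosed (F N) := by
    intro N
    refine closed_aux f g (Metric.ball c R) K1 hK1c (r / (N + 1)) N (by positivity) ?_ hG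
    intro z hz w hw
    refine hK1U z hz w (hw.trans_le ?_)
    exact div_le_self hr.le (by linarith [Nat.cast_nonneg (α := ℝ) N])
  have hFcov : ∀ z ∈ K1, ∃ N, z ∈ F N := by
    intro z hz
    have hzU : z ∈ Metric.ball c R := by simpa using hK1U z hz 0 (by simpa using hr)
    obtain ⟨C1, δ1, hδ1, h1⟩ := lineDeriv_bound (hG z hzU 1)
    obtain ⟨C2, δ2, hδ2, h2⟩ := lineDeriv_bound (hG z hzU Complex.I)
    obtain ⟨N, hN⟩ := exists_nat_gt (max (max C1 C2) (max (r / δ1) (r / δ2)))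
    simp only [max_lt_iff] at hN
    refine ⟨N, hz, fun t ht => ?_⟩
    have hd : ∀ δ > 0, r / δ < N → |t| < δ := by
      intro δ hδ h
      rw [div_lt_iff₀ hδ] at h
      refine ht.trans ?_
      rw [div_lt_iff₀ (by positivity)]
      nlinarith
    have e1 := h1 t (hd δ1 hδ1 hN.2.1)
    have e2 := h2 t (hd δ2 hδ2 hN.2.2)
    rw [mul_one] at e1
    exact ⟨e1.trans (by gcongr; exact hN.1.1.le), e2.trans (by gcongr; exact hN.1.2.le)⟩
  -- Baire
  obtain ⟨N, z0, hz0B, ρ, hρ, hρF⟩ : ∃ N : ℕ, ∃ z0 ∈ Bad, ∃ ρ > 0,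
      ∀ z ∈ Metric.ball z0 ρ, z ∈ Metric.ball c R ∧ (z ∈ Bad → z ∈ F N) := by
    have : CompleteSpace K1 := hK1c.completeSpace_coe
    have hd := dense_iUnion_interior_of_closed (X := K1) (f := fun N => (Subtype.val ⁻¹' (F N) : Set K1))
      (fun N => (hFc N).preimage continuous_subtype_val) (by
        rw [Set.eq_univ_iff_forall]
        intro z
        obtain ⟨N, hN⟩ := hFcov z.1 z.2
        exact Set.mem_iUnion.2 ⟨N, hN⟩)
    have ho : IsOpen (Subtype.val ⁻¹' (Metric.ball z1 r) : Set K1) :=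
      Metric.isOpen_ball.preimage continuous_subtype_val
    have hne : (Subtype.val ⁻¹' (Metric.ball z1 r) : Set K1).Nonempty :=
      ⟨⟨z1, hz1B, Metric.mem_closedBall_self hr.le⟩, Metric.mem_ball_self hr⟩
    obtain ⟨⟨z0, hz0⟩, hz0r, hz0i⟩ := hd.inter_open_nonempty _ ho hne
    obtain ⟨N, hN⟩ := Set.mem_iUnion.1 hz0i
    rw [mem_interior_iff_mem_nhds, Metric.mem_nhds_iff] at hN
    obtain ⟨ε, hε, hεs⟩ := hN
    obtain ⟨ε', hε', hεs'⟩ := Metric.isOpen_iff.1 Metric.isOpen_ball z0 hz0r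
    refine ⟨N, z0, hz0.1, min ε ε', lt_min hε hε', fun z hz => ?_⟩
    have hz' : z ∈ Metric.ball z1 r := hεs' (Metric.ball_subset_ball (min_le_right _ _) hz)
    refine ⟨hball (Metric.ball_subset_ball (by linarith) hz'), fun hzB => ?_⟩
    have hzK1 : z ∈ K1 := ⟨hzB, Metric.ball_subset_closedBall hz'⟩
    exact hεs (a := ⟨z, hzK1⟩) (Metric.ball_subset_ball (min_le_left _ _) hz)
  set s := min ρ (r / (N + 1)) / 8 with hs
  have hs0 : 0 < s := by positivity
  have hsρ : 8 * s ≤ ρ := by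
    have := min_le_left ρ (r / (N + 1)); rw [hs]; linarith
  have hsr : 8 * s ≤ r / (N + 1) := by
    have := min_le_right ρ (r / (N + 1)); rw [hs]; linarith
  obtain ⟨C, hC0, hlip⟩ : ∃ C : ℝ, 0 ≤ C ∧ ∀ z ∈ Bad, z ∈ Metric.ball z0 s → ∀ w : ℂ, ‖w‖ ≤ s →
      ‖f (z + w) - f z‖ ≤ C * ‖w‖ := by
    refine ⟨4 * (2 * M / s + 64 * (N + 1)), by positivity, ?_⟩
    intro z hz hzs w hw
    rw [Metric.mem_ball, dist_eq_norm] at hzs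
    have hin : ∀ p : ℂ, |p.re| ≤ s → |p.im| ≤ s → z + p ∈ Metric.ball z0 ρ := by
      intro p h1 h2
      rw [Metric.mem_ball, dist_eq_norm]
      have h3 : ‖p‖ ≤ |p.re| + |p.im| := Complex.norm_le_abs_re_add_abs_im p
      calc ‖z + p - z0‖ = ‖(z - z0) + p‖ := by ring_nf
        _ ≤ ‖z - z0‖ + ‖p‖ := norm_add_le _ _
        _ < ρ := by linarith
    have key := sq_lip (fun p => f (z + p)) {p | z + p ∈ Bad} s (N + 1) (2 * M) hs0 (by positivity)
      (by positivity) _ rfl (by simpa using hz) ?_ ?_ ?_ ?_ ?_ w hw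
    · simpa using key
    · have hcl : IsClosed ({p : ℂ | z + p ∈ Bad} ∩ {p : ℂ | |p.re| ≤ s ∧ |p.im| ≤ s}) := by
        refine IsClosed.inter (hBadc.preimage (by fun_prop : Continuous fun p => z + p)) ?_
        exact (isClosed_le (f := fun p : ℂ => |p.re|) (g := fun _ => s) (by fun_prop) (by fun_prop)).inter
          (isClosed_le (f := fun p : ℂ => |p.im|) (g := fun _ => s) (by fun_prop) (by fun_prop))
      refine Metric.isCompact_of_isClosed_isBounded hcl ?_
      refine (Metric.isBounded_closedBall (x := (0:ℂ)) (r := 2 * s)).subset ?_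
      rintro p ⟨-, h1, h2⟩
      rw [mem_closedBall_zero_iff]
      have h3 : ‖p‖ ≤ |p.re| + |p.im| := Complex.norm_le_abs_re_add_abs_im p
      linarith
    · intro p hp hpB
      simp only [hBad, Set.mem_ofPred_eq, not_not] at hpB
      have h1 := hpB.differentiableAt
      exact DifferentiableAt.comp (f := fun p => z + p) p h1 (by fun_prop)
    · intro k hk t ht
      have := ((hρF _ (hin k hk.2.1 hk.2.2)).2 hk.1).2 t (by linarith)
      have := this.1
      rw [add_assoc] at this
      exact this.trans (by gcongr; linarith)
    · intro k hk t ht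
      have := ((hρF _ (hin k hk.2.1 hk.2.2)).2 hk.1).2 t (by linarith)
      have := this.2
      rw [add_assoc] at this
      exact this.trans (by gcongr; linarith)
    · intro p hp
      have h1 := hM _ (hρF _ (hin p hp.1 hp.2)).1
      have h2 := hM _ (hρF _ (hin 0 (by simpa using hs0.le) (by simpa using hs0.le))).1
      exact (norm_sub_le _ _).trans (by linarith)
  -- bound of the derivative
  have hgb : ∀ w ∈ Metric.ball z0 (s / 4), ‖g w‖ ≤ 3 * C := by
    intro w hw
    have hwR : w ∈ Metric.ball c R := (hρF w (Metric.ball_subset_ball (by linarith) hw)).1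
    have hld := hG w hwR 1
    rw [one_mul] at hld
    by_cases hwB : w ∈ Bad
    · have h1 : HasDerivAt (fun t : ℝ => f (w + t • (1:ℂ))) (g w) 0 := hld
      have := h1.le_of_lip' hC0 (by
        filter_upwards [Metric.ball_mem_nhds (0:ℝ) hs0] with t ht
        have := hlip w hwB (Metric.ball_subset_ball (by linarith) hw) (t • (1:ℂ))
          (by simpa using (mem_ball_zero_iff.1 ht).le)
        simpa using this)
      linarith
    · set K2 : Set ℂ := Bad ∩ Metric.closedBall z0 s with hK2
      have hK2c : IsCompact K2 := (isCompact_closedBall z0 s).inter_left hBadc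
      obtain ⟨z, hz, hzd⟩ := hK2c.exists_infDist_eq_dist ⟨z0, hz0B, Metric.mem_closedBall_self hs0.le⟩ w
      set d := dist w z with hd
      have hdpos : 0 < d := by
        rw [hd, dist_pos]; rintro rfl; exact hwB hz.1
      have hwz0 : dist w z0 < s / 4 := hw
      have hdle : d < s / 4 := by
        rw [← hzd]
        exact (Metric.infDist_le_dist_of_mem (s := K2) ⟨hz0B, Metric.mem_closedBall_self hs0.le⟩).trans_lt hw
      have hnot : ∀ p ∈ Metric.closedBall w (d / 2), p ∉ Bad := by
        intro p hp hpB
        rw [Metric.mem_closedBall] at hp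
        have hp0 : dist p z0 ≤ s := by
          have := dist_triangle p w z0
          linarith
        have := Metric.infDist_le_dist_of_mem (x := w) (s := K2) ⟨hpB, hp0⟩
        rw [hzd, dist_comm w p] at this
        linarith
      have hanal : ∀ p ∈ Metric.closedBall w (d / 2), DifferentiableAt ℂ f p := by
        intro p hp
        have := hnot p hp
        simp only [hBad, Set.mem_ofPred_eq, not_not] at this
        exact this.differentiableAt
      have hcau := Complex.norm_deriv_le_of_forall_mem_sphere_norm_le (f := fun p => f p - f z)
        (c := w) (R := d / 2) (C := C * (3 * d / 2)) (by positivity) (by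
          apply DifferentiableOn.diffContOnCl
          rw [closure_ball _ (by positivity)]
          intro p hp
          exact ((hanal p hp).sub_const _).differentiableWithinAt) (by
          intro p hp
          rw [Metric.mem_sphere] at hp
          have hpz : dist p z ≤ 3 * d / 2 := by
            have := dist_triangle p w z
            linarith
          rw [dist_eq_norm] at hpz
          have hzz : z ∈ Metric.ball z0 s := by
            rw [Metric.mem_ball]
            have := dist_triangle z w z0
            rw [dist_comm z w] at this
            linarith
          have := hlip z hz.1 hzz (p - z) (by linarith)
          rw [add_sub_cancel] at this
          exact this.trans (by gcongr))
      have hder : deriv (fun p => f p - f z) w = g w := by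
        rw [deriv_sub_const]
        have h1 := (hanal w (Metric.mem_closedBall_self (by positivity))).hasDerivAt
        have h2 : HasLineDerivAt ℝ f (deriv f w) w 1 := by
          have := (h1.hasFDerivAt.restrictScalars ℝ).hasLineDerivAt 1
          simpa using this
        exact h2.lineDeriv.symm.trans hld.lineDeriv
      rw [hder] at hcau
      refine hcau.trans (le_of_eq ?_)
      field_simp
  have hdiffb : DifferentiableOn ℂ f (Metric.ball z0 (s / 4)) := by
    intro z hz
    obtain ⟨ε, hε, hεs⟩ := Metric.isOpen_iff.1 Metric.isOpen_ball z hz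
    have := hadamard_aux f (fun z => (ContinuousLinearMap.toSpanSingleton ℂ (g z)).restrictScalars ℝ)
      z ε hε (3 * C) (by
        intro p hp
        rw [ContinuousLinearMap.norm_restrictScalars, ContinuousLinearMap.norm_toSpanSingleton]
        exact hgb p (hεs hp)) (by
        intro p hp v
        have hpR := (hρF p (Metric.ball_subset_ball (by linarith) (hεs hp))).1
        simpa using hG p hpR v)
    exact (hasFDerivAt_of_restrictScalars ℝ this rfl).differentiableAt.differentiableWithinAt
  exact hz0B (hdiffb.analyticAt (Metric.ball_mem_nhds _ (by positivity)))


theorem term_line (y : ℂ →L[ℝ] ℝ) (q : ℂ → ℂ) (z v : ℂ) (hq : DifferentiableAt ℂ q z) (n : ℕ) :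
    HasLineDerivAt ℝ (fun z => (y z : ℂ) ^ n * q z)
      (n * (y z : ℂ) ^ (n - 1) * (y v) * q z + (y z : ℂ) ^ n * (v * deriv q z)) z v := by
  have h1 : HasDerivAt (fun t : ℝ => q (z + t • v)) (v * deriv q z) 0 := by
    have := (hq.hasDerivAt.hasFDerivAt.restrictScalars ℝ).hasLineDerivAt v
    simpa [HasLineDerivAt] using this
  have h2 : HasDerivAt (fun t : ℝ => ((y (z + t • v) : ℝ) : ℂ)) ((y v : ℝ) : ℂ) 0 := by
    have : HasDerivAt (fun t : ℝ => y (z + t • v)) (y v) 0 := y.hasFDerivAt.hasLineDerivAt v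
    exact this.ofReal_comp
  have h3 := (h2.fun_pow n).mul h1
  simp only [zero_smul, add_zero] at h3
  exact h3

theorem gamma_eq (y : ℂ →L[ℝ] ℝ) (hy1 : y 1 = 0) (m : ℕ) (R : ℝ) (f : ℂ → ℂ) (h : ℕ → ℂ → ℂ)
    (hd : ∀ i, DifferentiableOn ℂ (h i) (Metric.ball 0 R))
    (hf : ∀ z ∈ Metric.ball 0 R, f z = ∑ i ∈ Finset.range m, (y z : ℂ) ^ i * h i z)
    (z : ℂ) (hz : z ∈ Metric.ball 0 R) (γ : ℂ) (hγ : HasLineDerivAt ℝ f γ z 1) :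
    γ = ∑ i ∈ Finset.range m, (y z : ℂ) ^ i * deriv (h i) z := by
  have h1 : HasLineDerivAt ℝ (fun z => ∑ i ∈ Finset.range m, (y z : ℂ) ^ i * h i z)
      (∑ i ∈ Finset.range m, (y z : ℂ) ^ i * deriv (h i) z) z 1 := by
    unfold HasLineDerivAt
    apply HasDerivAt.fun_sum
    intro i _
    have := term_line y (h i) z 1 ((hd i).differentiableAt (Metric.isOpen_ball.mem_nhds hz)) i
    simpa [hy1, HasLineDerivAt] using this
  have h2 := h1.congr_of_eventuallyEq (f₁ := f) (by
    filter_upwards [Metric.isOpen_ball.mem_nhds hz] with p hp using hf p hp)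
  exact hγ.lineDeriv.symm.trans h2.lineDeriv

theorem deriv_bd (h : ℂ → ℂ) (R C : ℝ) (hR : 0 < R)
    (hd : DifferentiableOn ℂ h (Metric.ball 0 R)) (hb : ∀ z ∈ Metric.ball 0 R, ‖h z‖ ≤ C)
    (z : ℂ) (hz : z ∈ Metric.ball 0 (R / 2)) : ‖deriv h z‖ ≤ C / (R / 4) := by
  have hsub : Metric.closedBall z (R / 4) ⊆ Metric.ball 0 R := by
    intro p hp
    rw [Metric.mem_closedBall] at hp
    rw [Metric.mem_ball] at hz ⊢
    have := dist_triangle p z 0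
    linarith
  refine Complex.norm_deriv_le_of_forall_mem_sphere_norm_le (by positivity) ?_ ?_
  · apply DifferentiableOn.diffContOnCl
    rw [closure_ball _ (by positivity)]
    exact hd.mono hsub
  · intro p hp
    exact hb p (hsub (Metric.sphere_subset_closedBall hp))

theorem jordan_nice (y : ℂ →L[ℝ] ℝ) (hy1 : y 1 = 0) (m : ℕ) : ∀ R M : ℝ, 0 < R → 0 ≤ M →
    ∃ C : ℝ, 0 ≤ C ∧ ∀ f γ : ℕ → ℂ → ℂ,
      (∀ j ≥ m, ∀ z ∈ Metric.ball 0 R, f j z = 0) →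
      (∀ j, ∀ z ∈ Metric.ball 0 R, ‖f j z‖ ≤ M) →
      (∀ j, ∀ z ∈ Metric.ball 0 R, ∀ v,
        HasLineDerivAt ℝ (f j) (v * γ j z + y v * γ (j + 1) z) z v) →
      ∃ h : ℕ → ℂ → ℂ, (∀ i, DifferentiableOn ℂ (h i) (Metric.ball 0 (R / 2 ^ m))) ∧
        (∀ i, ∀ z ∈ Metric.ball 0 (R / 2 ^ m), ‖h i z‖ ≤ C) ∧
        ∀ z ∈ Metric.ball 0 (R / 2 ^ m), f 0 z = ∑ i ∈ Finset.range m, (y z : ℂ) ^ i * h i z := by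
  induction m with
  | zero =>
    intro R M hR hM
    refine ⟨0, le_rfl, fun f γ h0 _ _ => ⟨fun _ _ => 0, ?_, ?_, ?_⟩⟩
    · intro i; fun_prop
    · intro i z _; simp
    · intro z hz
      simpa using h0 0 le_rfl z (by simpa using hz)
  | succ m ih =>
    intro R M hR hM
    obtain ⟨C, hC0, hC⟩ := ih R M hR hM
    set R0 := R / 2 ^ m with hR0
    have hR0pos : 0 < R0 := by positivity
    have hR0R : R0 ≤ R := div_le_self hR.le (one_le_pow₀ (by norm_num))
    have hR1 : R / 2 ^ (m + 1) = R0 / 2 := by rw [hR0, pow_succ]; field_simp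
    set D := C / (R0 / 4) with hD
    have hD0 : 0 ≤ D := by positivity
    set U := ∑ i ∈ Finset.range m, (‖y‖ * R) ^ (i + 1) * D with hU
    have hU0 : 0 ≤ U := by positivity
    refine ⟨M + U + D, by positivity, ?_⟩
    intro f γ hf0 hfM hfd
    obtain ⟨h, hh1, hh2, hh3⟩ := hC (fun j => f (j + 1)) (fun j => γ (j + 1))
      (fun j hj => hf0 (j + 1) (by omega)) (fun j => hfM (j + 1)) (fun j => hfd (j + 1))
    rw [hR1]
    have hsub0 : Metric.ball (0:ℂ) (R0 / 2) ⊆ Metric.ball 0 R0 := Metric.ball_subset_ball (by linarith)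
    have hsub1 : Metric.ball (0:ℂ) (R0 / 2) ⊆ Metric.ball 0 R := Metric.ball_subset_ball (by linarith)
    set q : ℕ → ℂ → ℂ := fun i z => deriv (h i) z / ((i : ℂ) + 1) with hq
    have hqd : ∀ i, DifferentiableOn ℂ (q i) (Metric.ball 0 R0) := by
      intro i
      exact ((hh1 i).deriv Metric.isOpen_ball).div_const _
    have hqb : ∀ i, ∀ z ∈ Metric.ball 0 (R0 / 2), ‖q i z‖ ≤ D := by
      intro i z hz
      have h1 := deriv_bd (h i) R0 C hR0pos (hh1 i) (hh2 i) z hz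
      simp only [hq, norm_div]
      have h2 : ‖(i : ℂ) + 1‖ = i + 1 := by
        have : (i : ℂ) + 1 = ((i + 1 : ℕ) : ℂ) := by push_cast; ring
        rw [this, Complex.norm_natCast]; push_cast; ring
      rw [h2]
      exact (div_le_self (norm_nonneg _) (by linarith [Nat.cast_nonneg (α := ℝ) i])).trans h1
    set u : ℂ → ℂ := fun z => ∑ i ∈ Finset.range m, (y z : ℂ) ^ (i + 1) * q i z with hu
    have hub : ∀ z ∈ Metric.ball 0 (R0 / 2), ‖u z‖ ≤ U := by
      intro z hz
      refine (norm_sum_le _ _).trans (Finset.sum_le_sum fun i _ => ?_)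
      rw [norm_mul, norm_pow, Complex.norm_real]
      have hyz : ‖y z‖ ≤ ‖y‖ * R := by
        refine (y.le_opNorm z).trans ?_
        gcongr
        exact (mem_ball_zero_iff.1 (hsub1 hz)).le
      gcongr
      exact hqb i z hz
    have hbound : ∀ z ∈ Metric.ball 0 (R0 / 2), ‖f 0 z - u z‖ ≤ M + U := fun z hz =>
      (norm_sub_le _ _).trans (add_le_add (hfM 0 z (hsub1 hz)) (hub z hz))
    have hhol : DifferentiableOn ℂ (fun z => f 0 z - u z) (Metric.ball 0 (R0 / 2)) := by
      refine tolstov _ (fun z => γ 0 z - ∑ i ∈ Finset.range m, (y z : ℂ) ^ (i + 1) * deriv (q i) z)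
        0 (R0 / 2) (M + U) hbound ?_
      intro z hz v
      have hγ1 : γ 1 z = ∑ i ∈ Finset.range m, (y z : ℂ) ^ i * deriv (h i) z := by
        refine gamma_eq y hy1 m R0 (f 1) h hh1 hh3 z (hsub0 hz) (γ 1 z) ?_
        simpa [hy1] using hfd 1 z (hsub1 hz) 1
      have hul : HasLineDerivAt ℝ u (∑ i ∈ Finset.range m,
          (((i + 1 : ℕ) : ℂ) * (y z : ℂ) ^ (i + 1 - 1) * (y v) * q i z
            + (y z : ℂ) ^ (i + 1) * (v * deriv (q i) z))) z v := by
        unfold HasLineDerivAt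
        apply HasDerivAt.fun_sum
        intro i _
        exact term_line y (q i) z v
          ((hqd i).differentiableAt (Metric.isOpen_ball.mem_nhds (hsub0 hz))) (i + 1)
      have h0 := hfd 0 z (hsub1 hz) v
      have hs : HasLineDerivAt ℝ (fun z => f 0 z - u z) _ z v := HasDerivAt.fun_sub h0 hul
      convert hs using 1
      rw [zero_add, hγ1, mul_sub, Finset.sum_add_distrib, Finset.mul_sum, Finset.mul_sum]
      have e1 : ∑ i ∈ Finset.range m, ((i + 1 : ℕ) : ℂ) * (y z : ℂ) ^ (i + 1 - 1) * (y v) * q i z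
          = ∑ i ∈ Finset.range m, (y v : ℂ) * ((y z : ℂ) ^ i * deriv (h i) z) := by
        refine Finset.sum_congr rfl fun i _ => ?_
        have : (i : ℂ) + 1 ≠ 0 := by exact_mod_cast Nat.succ_ne_zero i
        simp only [hq, Nat.add_sub_cancel]
        push_cast
        field_simp
      have e2 : ∑ i ∈ Finset.range m, v * ((y z : ℂ) ^ (i + 1) * deriv (q i) z)
          = ∑ i ∈ Finset.range m, (y z : ℂ) ^ (i + 1) * (v * deriv (q i) z) :=
        Finset.sum_congr rfl fun i _ => by ring
      rw [e1, e2]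
      ring
    refine ⟨fun i => Nat.casesOn i (fun z => f 0 z - u z) q, ?_, ?_, ?_⟩
    · intro i
      cases i with
      | zero => exact hhol
      | succ i => exact (hqd i).mono hsub0
    · intro i z hz
      cases i with
      | zero => exact (hbound z hz).trans (by linarith)
      | succ i => exact (hqb i z hz).trans (by linarith)
    · intro z hz
      rw [Finset.sum_range_succ']
      simp [hu]

theorem jordan_bound (y : ℂ →L[ℝ] ℝ) (hy1 : y 1 = 0) (m : ℕ) (R M : ℝ) (hR : 0 < R) (hM : 0 ≤ M) :
    ∃ C : ℝ, ∀ f γ : ℕ → ℂ → ℂ,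
      (∀ j ≥ m, ∀ z ∈ Metric.ball 0 R, f j z = 0) →
      (∀ j, ∀ z ∈ Metric.ball 0 R, ‖f j z‖ ≤ M) →
      (∀ j, ∀ z ∈ Metric.ball 0 R, ∀ v,
        HasLineDerivAt ℝ (f j) (v * γ j z + y v * γ (j + 1) z) z v) →
      ‖γ 0 0‖ ≤ C := by
  obtain ⟨C, hC0, hC⟩ := jordan_nice y hy1 m R M hR hM
  refine ⟨∑ i ∈ Finset.range m, C / (R / 2 ^ m / 4), ?_⟩
  intro f γ h1 h2 h3
  obtain ⟨h, hh1, hh2, hh3⟩ := hC f γ h1 h2 h3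
  have hpos : 0 < R / 2 ^ m := by positivity
  rw [gamma_eq y hy1 m (R / 2 ^ m) (f 0) h hh1 hh3 0 (Metric.mem_ball_self hpos) (γ 0 0)
    (by simpa [hy1] using h3 0 0 (Metric.mem_ball_self hR) 1)]
  refine (norm_sum_le _ _).trans (Finset.sum_le_sum fun i _ => ?_)
  have := deriv_bd (h i) _ C hpos (hh1 i) (hh2 i) 0 (Metric.mem_ball_self (by positivity))
  rw [norm_mul]
  have h4 : ‖((y 0 : ℝ) : ℂ) ^ i‖ ≤ 1 := by
    rw [map_zero, Complex.ofReal_zero, norm_pow, norm_zero]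
    exact pow_le_one₀ le_rfl zero_le_one
  calc _ ≤ 1 * ‖deriv (h i) 0‖ := by gcongr
    _ ≤ _ := by rw [one_mul]; exact this


theorem gateaux_line {A : Type*} [NormedCommRing A] [NormedAlgebra ℂ A]
    {E : Submodule ℝ A} (Φ : E → A) (ζ : E) (g : A) (hG : GateauxDiffAt Φ ζ g) (h : E) :
    HasLineDerivAt ℝ Φ ((h : A) * g) ζ h := by
  unfold HasLineDerivAt
  rw [hasDerivAt_iff_tendsto_slope_zero, ← Set.Iio_union_Ioi, nhdsWithin_union,
    tendsto_sup]
  simp only [zero_add, zero_smul, add_zero]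
  refine ⟨?_, hG h⟩
  have h1 := (hG (-h)).neg
  have hneg : Tendsto (fun t : ℝ => -t) (𝓝[<] 0) (𝓝[>] 0) := by
    have := tendsto_neg_nhdsLT (a := (0:ℝ))
    simpa using this
  have h2 := h1.comp hneg
  have e : -(((-h : E) : A) * g) = (h : A) * g := by simp
  rw [e] at h2
  refine h2.congr fun t => ?_
  simp only [Function.comp, smul_neg, neg_smul, neg_neg, inv_neg]

theorem exists_nonreal {A : Type*} [NormedCommRing A] [NormedAlgebra ℂ A] [FiniteDimensional ℂ A]
    (E : Submodule ℝ A) (hC : CondC E) : ∃ e0 : E, ∀ φ : A →ₐ[ℂ] ℂ, (φ (e0 : A)).im ≠ 0 := by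
  classical
  have : Fintype (A →ₐ[ℂ] ℂ) := Fintype.ofFinite _
  set W : (A →ₐ[ℂ] ℂ) → Submodule ℝ E := fun φ =>
    LinearMap.ker (Complex.imLm ∘ₗ (φ.toLinearMap.restrictScalars ℝ) ∘ₗ E.subtype) with hW
  have hs : (⊤ : Submodule ℝ E) ∉ Finset.univ.image W := by
    intro h
    obtain ⟨φ, -, hφ⟩ := Finset.mem_image.1 h
    obtain ⟨x, hx⟩ := hC φ Complex.I
    have : x ∈ W φ := by rw [hφ]; trivial
    simp only [hW, LinearMap.mem_ker] at this
    have hx' : φ (x : A) = Complex.I := hx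
    simp [hx'] at this
  have hne := Subspace.biUnion_ne_univ_of_top_notMem hs
  rw [Set.ne_univ_iff_exists_notMem] at hne
  obtain ⟨x, hx⟩ := hne
  refine ⟨x, fun φ h => hx ?_⟩
  refine Set.mem_iUnion₂.2 ⟨W φ, Finset.mem_image_of_mem _ (Finset.mem_univ _), ?_⟩
  simpa [hW] using h

theorem deriv_bounded {A : Type*} [NormedCommRing A] [NormedAlgebra ℂ A] [FiniteDimensional ℂ A]
    (E : Submodule ℝ A) (h1E : (1 : A) ∈ E) (hC : CondC E) (Φ Φ' : E → A) (ζ : E) (r M : ℝ) (hr : 0 < r)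
    (hM : ∀ z ∈ Metric.ball ζ r, ‖Φ z‖ ≤ M)
    (hG : ∀ z ∈ Metric.ball ζ r, ∀ v : E, HasLineDerivAt ℝ Φ ((v : A) * Φ' z) z v) :
    ∃ C : ℝ, ∀ z ∈ Metric.ball ζ (r / 2), ‖Φ' z‖ ≤ C := by
  have hcomp : CompleteSpace A := FiniteDimensional.complete ℂ A
  have hM0 : 0 ≤ M := (norm_nonneg _).trans (hM ζ (Metric.mem_ball_self hr))
  obtain ⟨e0, he0⟩ := exists_nonreal E hC
  have key : ∀ ℓ : Module.Dual ℂ A, ∃ C : ℝ, ∀ z ∈ Metric.ball ζ (r / 2), ‖ℓ (Φ' z)‖ ≤ C := by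
    set G : Submodule ℂ (Module.Dual ℂ A) :=
      { carrier := {ℓ | ∃ C : ℝ, ∀ z ∈ Metric.ball ζ (r / 2), ‖ℓ (Φ' z)‖ ≤ C}
        add_mem' := by
          rintro a b ⟨C1, h1⟩ ⟨C2, h2⟩
          exact ⟨C1 + C2, fun z hz => (norm_add_le _ _).trans (add_le_add (h1 z hz) (h2 z hz))⟩
        zero_mem' := ⟨0, fun z _ => by simp⟩
        smul_mem' := by
          rintro c a ⟨C1, h1⟩
          refine ⟨‖c‖ * C1, fun z hz => ?_⟩
          rw [LinearMap.smul_apply, norm_smul]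
          exact mul_le_mul_of_nonneg_left (h1 z hz) (norm_nonneg _) } with hGdef
    set T : Module.End ℂ (Module.Dual ℂ A) := (LinearMap.mulLeft ℂ (e0 : A)).dualMap with hT
    have htop : G = ⊤ := by
      rw [eq_top_iff, ← Module.End.iSup_maxGenEigenspace_eq_top T]
      apply iSup_le
      intro lam ℓ hℓ
      rw [Module.End.mem_maxGenEigenspace] at hℓ
      obtain ⟨m, hm⟩ := hℓ
      set n : A := (e0 : A) - algebraMap ℂ A lam with hn
      have hpow : ∀ j : ℕ, ∀ b : A, (((T - lam • 1) ^ j) ℓ) b = ℓ (n ^ j * b) := by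
        intro j
        induction j with
        | zero => intro b; simp
        | succ j ih =>
          intro b
          rw [pow_succ']
          have e1 : ((T - lam • 1) * (T - lam • 1) ^ j) ℓ
              = (T - lam • 1) (((T - lam • 1) ^ j) ℓ) := rfl
          rw [e1]
          have e2 : ∀ ℓ' : Module.Dual ℂ A, ((T - lam • 1) ℓ') b = ℓ' (n * b) := by
            intro ℓ'
            simp [hT, hn, sub_mul, LinearMap.dualMap_apply, ← Algebra.smul_def]
          rw [e2, ih, pow_succ, mul_assoc]
      have hkill : ∀ j ≥ m, ∀ b : A, ℓ (n ^ j * b) = 0 := by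
        intro j hj b
        obtain ⟨i, rfl⟩ := Nat.exists_eq_add_of_le hj
        rw [pow_add, mul_assoc, ← hpow m, hm]
        rfl
      by_cases him : lam.im = 0
      · have hunit : IsUnit n := by
          by_contra hnu
          obtain ⟨φ, hφ⟩ := WeakDual.CharacterSpace.exists_apply_eq_zero hnu
          have h2 := he0 (WeakDual.CharacterSpace.toAlgHom φ)
          apply h2
          have h3 : φ (e0 : A) = lam := by
            rw [hn, map_sub, AlgHomClass.commutes, sub_eq_zero] at hφ
            simpa using hφ
          have h4 : (WeakDual.CharacterSpace.toAlgHom φ) (e0 : A) = φ (e0 : A) := rfl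
          rw [h4, h3, him]
        have hz : ℓ = 0 := by
          ext b
          obtain ⟨c, hc⟩ := (hunit.pow m).exists_right_inv
          have := hkill m le_rfl (c * b)
          rw [← mul_assoc, hc, one_mul] at this
          simpa using this
        rw [hz]
        exact G.zero_mem
      · set y : ℂ →L[ℝ] ℝ := (lam.im)⁻¹ • Complex.imCLM with hy
        have hy1 : y 1 = 0 := by simp [hy]
        set P : ℂ →L[ℝ] E := (Complex.reCLM - lam.re • y).smulRight (⟨1, h1E⟩ : E) + y.smulRight e0
          with hP
        have hPA : ∀ v : ℂ, ((P v : E) : A) = v • (1 : A) + (y v : ℂ) • n := by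
          intro v
          have e1 : ((P v : E) : A) = ((v.re - lam.re * y v : ℝ) : ℂ) • (1 : A) + (y v : ℂ) • (e0 : A) := by
            rw [Complex.coe_smul, Complex.coe_smul]
            simp [hP]
          rw [e1, hn, smul_sub, Algebra.algebraMap_eq_smul_one, smul_smul]
          have e2 : v = ((v.re - lam.re * y v : ℝ) : ℂ) + (y v : ℂ) * lam := by
            apply Complex.ext
            · simp; ring
            · simp [hy]; field_simp
          have e3 : v • (1 : A) = ((v.re - lam.re * y v : ℝ) : ℂ) • (1 : A)
              + ((y v : ℂ) * lam) • (1 : A) := by rw [← add_smul, ← e2]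
          rw [e3]
          abel
        set R := r / 2 / (‖P‖ + 1) with hR
        have hRpos : 0 < R := by positivity
        have hin : ∀ z' ∈ Metric.ball ζ (r / 2), ∀ z ∈ Metric.ball (0:ℂ) R,
            z' + P z ∈ Metric.ball ζ r := by
          intro z' hz' z hz
          rw [mem_ball_zero_iff] at hz
          rw [Metric.mem_ball, dist_eq_norm] at hz' ⊢
          have h2 : ‖P z‖ ≤ r / 2 := by
            refine (P.le_opNorm z).trans ?_
            rw [hR, lt_div_iff₀ (by positivity)] at hz
            nlinarith [norm_nonneg z]
          calc ‖z' + P z - ζ‖ = ‖(z' - ζ) + P z‖ := by congr 1; abel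
            _ ≤ ‖z' - ζ‖ + ‖P z‖ := norm_add_le _ _
            _ < r := by linarith
        set ℓc : A →L[ℂ] ℂ := LinearMap.toContinuousLinearMap ℓ with hℓc
        set M' := ∑ j ∈ Finset.range m, ‖ℓc‖ * (‖n ^ j‖ * M) with hM'
        obtain ⟨C, hCb⟩ := jordan_bound y hy1 m R M' hRpos (by positivity)
        refine ⟨C, fun z' hz' => ?_⟩
        have := hCb (fun j z => ℓ (n ^ j * Φ (z' + P z))) (fun j z => ℓ (n ^ j * Φ' (z' + P z)))
          (fun j hj z _ => hkill j hj _) ?_ ?_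
        · simpa using this
        · intro j z hz
          by_cases hj : j < m
          · have hle : ‖ℓc‖ * (‖n ^ j‖ * M) ≤ M' :=
              Finset.single_le_sum (f := fun j => ‖ℓc‖ * (‖n ^ j‖ * M))
                (fun i _ => by positivity) (Finset.mem_range.2 hj)
            refine le_trans ?_ hle
            refine (ℓc.le_opNorm (n ^ j * Φ (z' + P z))).trans ?_
            gcongr
            refine (norm_mul_le _ _).trans ?_
            gcongr
            exact hM _ (hin z' hz' z hz)
          · have e := hkill j (not_lt.1 hj) (Φ (z' + P z))
            simp only [e, norm_zero]
            positivity
        · intro j z hz v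
          have hl := hG _ (hin z' hz' z hz) (P v)
          set Lj : A →L[ℝ] ℂ := (ℓc.restrictScalars ℝ).comp (ContinuousLinearMap.mul ℝ A (n ^ j)) with hLj
          have h2 : HasDerivAt (fun t : ℝ => Lj (Φ (z' + P z + t • P v)))
              (Lj (((P v : E) : A) * Φ' (z' + P z))) 0 := Lj.hasFDerivAt.comp_hasDerivAt 0 hl
          have h3 : Lj (((P v : E) : A) * Φ' (z' + P z)) = v * ℓ (n ^ j * Φ' (z' + P z))
              + (y v : ℂ) * ℓ (n ^ (j + 1) * Φ' (z' + P z)) := by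
            have : Lj (((P v : E) : A) * Φ' (z' + P z))
                = ℓ (n ^ j * (((P v : E) : A) * Φ' (z' + P z))) := rfl
            rw [this, hPA]
            have e : n ^ j * ((v • (1:A) + (y v : ℂ) • n) * Φ' (z' + P z))
                = v • (n ^ j * Φ' (z' + P z)) + (y v : ℂ) • (n ^ (j + 1) * Φ' (z' + P z)) := by
              simp only [Algebra.smul_def]
              ring
            rw [e, map_add, map_smul, map_smul, smul_eq_mul, smul_eq_mul]
          rw [h3] at h2
          unfold HasLineDerivAt
          refine h2.congr_of_eventuallyEq (Eventually.of_forall fun t => ?_)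
          have : z' + P (z + t • v) = z' + P z + t • P v := by
            rw [map_add, map_smul, add_assoc]
          simp only [this]
          rfl
    intro ℓ
    have : ℓ ∈ G := by rw [htop]; trivial
    exact this
  set b := Module.finBasis ℂ A with hb
  choose C hCc using fun i => key (b.coord i)
  refine ⟨∑ i, C i * ‖b i‖, fun z hz => ?_⟩
  rw [← b.sum_repr (Φ' z)]
  refine (norm_sum_le _ _).trans (Finset.sum_le_sum fun i _ => ?_)
  rw [norm_smul]
  gcongr
  simpa using hCc i z hz


theorem gateaux_lorch_aux {A : Type*} [NormedCommRing A] [NormedAlgebra ℂ A]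
    [FiniteDimensional ℂ A] (E : Submodule ℝ A) (h1E : (1 : A) ∈ E) (hC : CondC E)
    (Ω : Set E) (hΩ : IsOpen Ω) (Φ Φ' : E → A) (hlb : IsLocBoundedOn Ω Φ)
    (hG : ∀ ζ ∈ Ω, GateauxDiffAt Φ ζ (Φ' ζ)) :
    ∀ ζ ∈ Ω, LorchDiffAt Ω Φ ζ (Φ' ζ) := by
  intro ζ hζ
  have hfA : FiniteDimensional ℝ A := FiniteDimensional.complexToReal A
  obtain ⟨r1, hr1, M, hM⟩ := hlb ζ hζ
  obtain ⟨r2, hr2, hball⟩ := Metric.isOpen_iff.1 hΩ ζ hζ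
  set r := min r1 r2 with hr
  have hr0 : 0 < r := lt_min hr1 hr2
  have hsub : Metric.ball ζ r ⊆ Ω := (Metric.ball_subset_ball (min_le_right _ _)).trans hball
  have hline : ∀ z ∈ Metric.ball ζ r, ∀ v : E, HasLineDerivAt ℝ Φ ((v : A) * Φ' z) z v :=
    fun z hz v => gateaux_line Φ z (Φ' z) (hG z (hsub hz)) v
  obtain ⟨C, hCb⟩ := deriv_bounded E h1E hC Φ Φ' ζ r M hr0 (by
    intro z hz
    refine hM z (hsub hz) ?_
    rw [← dist_eq_norm]
    exact (Metric.mem_ball.1 hz).trans_le (min_le_left _ _)) hline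
  have hF := hadamard_aux Φ
    (fun z => ((ContinuousLinearMap.mul ℝ A).flip (Φ' z)).comp E.subtypeL) ζ (r / 2) (by positivity) C
    (by
      intro z hz
      have hC0 : 0 ≤ C := (norm_nonneg _).trans (hCb z hz)
      refine ContinuousLinearMap.opNorm_le_bound _ hC0 fun v => ?_
      have : ‖(v : A) * Φ' z‖ ≤ C * ‖(v : A)‖ := by
        refine (norm_mul_le _ _).trans ?_
        rw [mul_comm]
        gcongr
        exact hCb z hz
      simpa [mul_comm] using this)
    (by
      intro z hz v
      have := hline z (Metric.ball_subset_ball (by linarith) hz) v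
      simpa [mul_comm] using this)
  intro ε hε
  rw [hasFDerivAt_iff_isLittleO_nhds_zero, Asymptotics.isLittleO_iff] at hF
  obtain ⟨δ, hδ, hb⟩ := Metric.eventually_nhds_iff.1 (hF hε)
  refine ⟨δ, hδ, fun h hh _ => ?_⟩
  have := hb (y := h) (by simpa using hh)
  simpa [mul_comm] using this

/-- An analog of the Hille theorem: under condition (C), a locally bounded,
Gâteaux differentiable function on an open subset of `E_k` is Lorch
differentiable, with the same derivative. -/
theorem gateaux_implies_lorch
    {A : Type*} [NormedCommRing A] [NormedAlgebra ℂ A] [FiniteDimensional ℂ A]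
    {k : ℕ} (hk : 2 ≤ k) (e : Fin k → A) (he0 : e ⟨0, by omega⟩ = 1)
    (hli : LinearIndependent ℝ e)
    (hC : CondC (Submodule.span ℝ (Set.range e)))
    (Ω : Set (Submodule.span ℝ (Set.range e))) (hΩ : IsOpen Ω)
    (Φ Φ' : Submodule.span ℝ (Set.range e) → A)
    (hlb : IsLocBoundedOn Ω Φ)
    (hG : ∀ ζ ∈ Ω, GateauxDiffAt Φ ζ (Φ' ζ)) :
    ∀ ζ ∈ Ω, LorchDiffAt Ω Φ ζ (Φ' ζ) := by
  have h1E : (1 : A) ∈ Submodule.span ℝ (Set.range e) := by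
    rw [← he0]
    exact Submodule.subset_span ⟨_, rfl⟩
  exact gateaux_lorch_aux _ h1E hC Ω hΩ Φ Φ' hlb hG
end

section
/- Suppose condition (C) holds and let Ω ⊆ E_k be an open set. For a function Φ : Ω → A the following three properties are equivalent: (I) Φ is locally bounded in Ω and differentiable in the sense of Gâteaux at every point of Ω; (II) Φ is monogenic in Ω (continuous in Ω and differentiable in the sense of Gâteaux at every point of Ω); (III) Φ is differentiable in the sense of Lorch at every point of Ω. -/
open Filter Topology

theorem lm_oneD_real {u D : ℝ → ℝ} {c d N : ℝ} (hcd : c ≤ d) {S : Set ℝ} (hS : IsClosed S)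
    (hne : (S ∩ Set.Icc c d).Nonempty) (hN : 0 ≤ N)
    (hL : ∀ s ∈ S, s ∈ Set.Icc c d → ∀ y ∈ Set.Icc c d, |u y - u s| ≤ N * |y - s|)
    (hD : ∀ s ∈ S, s ∈ Set.Icc c d → HasDerivAt u (D s) s) (hD0 : ∀ s, s ∉ S → D s = 0) :
    IntervalIntegrable D MeasureTheory.volume c d ∧
    |u d - u c - ∫ y in c..d, D y| ≤ N * ∫ y in c..d, Sᶜ.indicator (fun _ => (1 : ℝ)) y := by
  classical
  obtain ⟨s0, hs0S, hs0⟩ := hne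
  set T : Set ℝ := (S ∩ Set.Icc c d) ∪ {c, d} with hT
  have hTl : LipschitzOnWith ⟨N, hN⟩ u T := by
    apply LipschitzOnWith.of_dist_le_mul
    have hTI : ∀ x ∈ T, x ∈ Set.Icc c d := by
      rintro x (hx | hx | hx)
      · exact hx.2
      · subst hx; exact ⟨le_rfl, hcd⟩
      · rw [Set.mem_singleton_iff] at hx; subst hx; exact ⟨hcd, le_rfl⟩
    have key : |u c - u d| ≤ N * |c - d| := by
      have h1 := hL s0 hs0S hs0 c ⟨le_rfl, hcd⟩
      have h2 := hL s0 hs0S hs0 d ⟨hcd, le_rfl⟩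
      have e1 : |c - s0| = s0 - c := by rw [abs_sub_comm]; exact abs_of_nonneg (by linarith [hs0.1])
      have e2 : |d - s0| = d - s0 := abs_of_nonneg (by linarith [hs0.2])
      have e3 : |c - d| = d - c := by rw [abs_sub_comm]; exact abs_of_nonneg (by linarith)
      rw [e1] at h1; rw [e2] at h2; rw [e3]
      calc |u c - u d| = |(u c - u s0) - (u d - u s0)| := by ring_nf
        _ ≤ |u c - u s0| + |u d - u s0| := abs_sub _ _
        _ ≤ N * (d - c) := by nlinarith
    intro x hx y hy
    rw [Real.dist_eq, Real.dist_eq]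
    change _ ≤ N * _
    rcases hx with hx' | hx'
    · have := hL x hx'.1 hx'.2 y (hTI y hy)
      rw [abs_sub_comm, abs_sub_comm x y]; exact this
    · rcases hy with hy' | hy'
      · exact hL y hy'.1 hy'.2 x (hTI x (Or.inr hx'))
      · rcases hx' with rfl | hx' <;> rcases hy' with rfl | hy'
        · simp
        · rw [Set.mem_singleton_iff] at hy'; subst hy'; exact key
        · rw [Set.mem_singleton_iff] at hx'; subst hx'; rw [abs_sub_comm, abs_sub_comm x y]; exact key
        · rw [Set.mem_singleton_iff] at hx' hy'; subst hx'; subst hy'; simp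
  obtain ⟨v, hv, hvu⟩ := hTl.extend_real
  have hac : AbsolutelyContinuousOnInterval v c d :=
    (hv.lipschitzOnWith (s := Set.uIcc c d)).absolutelyContinuousOnInterval
  have hftc := hac.integral_deriv_eq_sub
  have hvInt := hac.intervalIntegrable_deriv
  have hbd : ∀ x, |deriv v x| ≤ N := fun x => norm_deriv_le_of_lipschitz hv
  have hae : ∀ᵐ x : ℝ, x ∈ S → x ∈ Set.Icc c d → deriv v x = D x := by
    have hc := (countable_setOfPred_isolated_right_within (s := S ∩ Set.Icc c d)).ae_notMem
      MeasureTheory.volume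
    filter_upwards [hv.ae_differentiableAt_real, hc] with x h1 h2 hxS hxI
    have hacc : AccPt x (𝓟 (S ∩ Set.Icc c d)) := by
      have hne : (𝓝[(S ∩ Set.Icc c d) ∩ Set.Ioi x] x).NeBot := by
        refine ⟨fun h => h2 ?_⟩
        exact ⟨⟨hxS, hxI⟩, h⟩
      rw [accPt_principal_iff_nhdsWithin]
      refine hne.mono (nhdsWithin_mono _ ?_)
      rintro y ⟨hy1, hy2⟩
      exact ⟨hy1, (ne_of_gt hy2)⟩
    have hu := uniqueDiffWithinAt_iff_accPt.2 hacc
    refine hu.eq_deriv _ h1.hasDerivAt.hasDerivWithinAt ?_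
    refine ((hD x hxS hxI).hasDerivWithinAt).congr (fun y hy => ?_) ?_
    · exact (hvu (Or.inl hy)).symm
    · exact (hvu (Or.inl ⟨hxS, hxI⟩)).symm
  have hDeq : ∀ᵐ x : ℝ, x ∈ Set.uIoc c d → D x = S.indicator (deriv v) x := by
    filter_upwards [hae] with x hx hxI
    rw [Set.uIoc_of_le hcd] at hxI
    by_cases hxS : x ∈ S
    · rw [Set.indicator_of_mem hxS, hx hxS ⟨hxI.1.le, hxI.2⟩]
    · rw [Set.indicator_of_notMem hxS, hD0 x hxS]
  have hint2 : IntervalIntegrable (S.indicator (deriv v)) MeasureTheory.volume c d := by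
    rw [intervalIntegrable_iff] at hvInt ⊢
    exact hvInt.indicator hS.measurableSet
  have hint3 : IntervalIntegrable D MeasureTheory.volume c d := by
    refine hint2.congr_ae ?_
    rw [EventuallyEq, MeasureTheory.ae_restrict_iff' measurableSet_uIoc]
    filter_upwards [hDeq] with x hx hxI
    exact (hx hxI).symm
  refine ⟨hint3, ?_⟩
  have hc : v c = u c := (hvu (Or.inr (by simp))).symm
  have hd : v d = u d := (hvu (Or.inr (by simp))).symm
  rw [← hc, ← hd, ← hftc, intervalIntegral.integral_congr_ae hDeq,
    ← intervalIntegral.integral_sub hvInt hint2, ← intervalIntegral.integral_const_mul,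
    ← Real.norm_eq_abs]
  refine intervalIntegral.norm_integral_le_of_norm_le hcd ?_ ?_
  · refine Eventually.of_forall fun x hx => ?_
    by_cases hxS : x ∈ S
    · simp [hxS]
    · simpa [hxS] using hbd x
  · apply IntervalIntegrable.const_mul
    rw [intervalIntegrable_iff]
    refine MeasureTheory.IntegrableOn.indicator ?_ hS.measurableSet.compl
    exact MeasureTheory.integrableOn_const (by simp)

theorem lm_oneD {u D : ℝ → ℂ} {c d N : ℝ} (hcd : c ≤ d) {S : Set ℝ} (hS : IsClosed S)
    (hne : (S ∩ Set.Icc c d).Nonempty) (hN : 0 ≤ N)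
    (hL : ∀ s ∈ S, s ∈ Set.Icc c d → ∀ y ∈ Set.Icc c d, ‖u y - u s‖ ≤ N * |y - s|)
    (hD : ∀ s ∈ S, s ∈ Set.Icc c d → HasDerivAt u (D s) s) (hD0 : ∀ s, s ∉ S → D s = 0) :
    ‖u d - u c - ∫ y in c..d, D y‖ ≤ 2 * N * ∫ y in c..d, Sᶜ.indicator (fun _ => (1 : ℝ)) y := by
  obtain ⟨i1, h1⟩ := lm_oneD_real (u := fun y => (u y).re) (D := fun y => (D y).re) hcd hS hne hN
    (fun s hs hsI y hy => by
      have := (Complex.abs_re_le_norm (u y - u s)).trans (hL s hs hsI y hy)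
      simpa using this)
    (fun s hs hsI => by
      have := Complex.reCLM.hasFDerivAt.comp_hasDerivAt s (hD s hs hsI)
      exact this) (fun s hs => by simp [hD0 s hs])
  obtain ⟨i2, h2⟩ := lm_oneD_real (u := fun y => (u y).im) (D := fun y => (D y).im) hcd hS hne hN
    (fun s hs hsI y hy => by
      have := (Complex.abs_im_le_norm (u y - u s)).trans (hL s hs hsI y hy)
      simpa using this)
    (fun s hs hsI => by
      have := Complex.imCLM.hasFDerivAt.comp_hasDerivAt s (hD s hs hsI)
      exact this) (fun s hs => by simp [hD0 s hs])
  have hi : IntervalIntegrable D MeasureTheory.volume c d := by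
    rw [intervalIntegrable_iff] at i1 i2 ⊢
    have h3 : MeasureTheory.IntegrableOn (fun y => ((D y).re : ℂ)) (Set.uIoc c d) :=
      MeasureTheory.Integrable.ofReal i1
    have h4 : MeasureTheory.IntegrableOn (fun y => ((D y).im : ℂ) * Complex.I) (Set.uIoc c d) :=
      (MeasureTheory.Integrable.ofReal i2).mul_const _
    refine (h3.add h4).congr (Eventually.of_forall fun y => ?_)
    simp [Complex.re_add_im]
  have er : (∫ y in c..d, D y).re = ∫ y in c..d, (D y).re := by
    have := Complex.reCLM.intervalIntegral_comp_comm hi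
    simpa using this.symm
  have ei : (∫ y in c..d, D y).im = ∫ y in c..d, (D y).im := by
    have := Complex.imCLM.intervalIntegral_comp_comm hi
    simpa using this.symm
  refine (Complex.norm_le_abs_re_add_abs_im _).trans ?_
  simp only [Complex.sub_re, Complex.sub_im, er, ei]
  linarith


theorem lm_ii_of_bdd {F : Type*} [NormedAddCommGroup F] {g : ℝ → F} {M : ℝ}
    (hg : MeasureTheory.StronglyMeasurable g) (hb : ∀ x, ‖g x‖ ≤ M) (a b : ℝ) :
    IntervalIntegrable g MeasureTheory.volume a b := by
  rw [intervalIntegrable_iff]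
  exact MeasureTheory.Measure.integrableOn_of_bounded (by simp)
    hg.aestronglyMeasurable (Eventually.of_forall hb)

theorem lm_slice_meas {F : Type*} [NormedAddCommGroup F] {G : ℝ → ℝ → F}
    (hG : MeasureTheory.StronglyMeasurable (Function.uncurry G)) (x : ℝ) :
    MeasureTheory.StronglyMeasurable (G x) :=
  hG.comp_measurable (measurable_const.prodMk measurable_id)

theorem lm_swap_meas {F : Type*} [NormedAddCommGroup F] {G : ℝ → ℝ → F}
    (hG : MeasureTheory.StronglyMeasurable (Function.uncurry G)) :
    MeasureTheory.StronglyMeasurable (Function.uncurry fun x y => G y x) :=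
  hG.comp_measurable measurable_swap

theorem lm_inner_ii {F : Type*} [NormedAddCommGroup F] [NormedSpace ℝ F] {G : ℝ → ℝ → F} {M : ℝ}
    (hG : MeasureTheory.StronglyMeasurable (Function.uncurry G)) (hb : ∀ x y, ‖G x y‖ ≤ M)
    (a b c d : ℝ) :
    IntervalIntegrable (fun x => ∫ y in c..d, G x y) MeasureTheory.volume a b := by
  refine lm_ii_of_bdd (M := M * |d - c|) ?_ (fun x => ?_) a b
  · simp only [intervalIntegral]
    exact (hG.integral_prod_right).sub hG.integral_prod_right
  · exact intervalIntegral.norm_integral_le_of_norm_le_const fun y _ => hb x y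

theorem lm_swap {F : Type*} [NormedAddCommGroup F] [NormedSpace ℝ F] [CompleteSpace F]
    {G : ℝ → ℝ → F} {M : ℝ}
    (hG : MeasureTheory.StronglyMeasurable (Function.uncurry G)) (hb : ∀ x y, ‖G x y‖ ≤ M)
    {a b c d : ℝ} :
    ∫ x in a..b, ∫ y in c..d, G x y = ∫ y in c..d, ∫ x in a..b, G x y := by
  rw [MeasureTheory.intervalIntegral_intervalIntegral_swap]
  refine MeasureTheory.Measure.integrableOn_of_bounded (M := M) ?_ hG.aestronglyMeasurable
    (Eventually.of_forall fun p => hb p.1 p.2)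
  rw [MeasureTheory.Measure.volume_eq_prod, MeasureTheory.Measure.prod_prod]
  exact ENNReal.mul_ne_top (by simp) (by simp)

theorem lm_slice {w D : ℝ → ℝ → ℂ} {S : Set (ℝ × ℝ)} (hS : IsClosed S)
    {a b c d a' b' c' d' N κ : ℝ} (hN : 0 ≤ N) (hκ : b - a ≤ κ * (d - c)) (hκ0 : 0 ≤ κ)
    (ha : a ≤ a') (hb : b' ≤ b) (hc : c ≤ c') (hd : d' ≤ d) (hcd : c' ≤ d')
    (hR : ∀ x y, (x, y) ∈ S → x ∈ Set.Icc a b → y ∈ Set.Icc c d → y ∈ Set.Icc c' d')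
    {x1 x2 : ℝ} (hx1 : x1 ∈ Set.Icc a' b') (hx2 : x2 ∈ Set.Icc a' b') (h1 : (x1, c') ∈ S)
    (h2 : (x2, d') ∈ S)
    (hL1 : ∀ x y, (x, y) ∈ S → x ∈ Set.Icc a b → y ∈ Set.Icc c d → ∀ t ∈ Set.Icc c d,
      ‖w x t - w x y‖ ≤ N * |t - y|)
    (hL2 : ∀ x y, (x, y) ∈ S → x ∈ Set.Icc a b → y ∈ Set.Icc c d → ∀ t ∈ Set.Icc a b,
      ‖w t y - w x y‖ ≤ N * |t - x|)
    (hD : ∀ x y, (x, y) ∈ S → x ∈ Set.Icc a b → y ∈ Set.Icc c d → HasDerivAt (w x) (D x y) y)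
    (hD0 : ∀ x y, (x, y) ∉ S → D x y = 0) {x : ℝ} (hx : x ∈ Set.Icc a' b') :
    ‖w x d' - w x c' - ∫ y in c'..d', D x y‖ ≤
      (N * (3 * κ + 2)) * ∫ y in c..d, Sᶜ.indicator (fun _ => (1 : ℝ)) (x, y) := by
  have hxab : x ∈ Set.Icc a b := ⟨ha.trans hx.1, hx.2.trans hb⟩
  have hsub : ∀ y ∈ Set.Icc c' d', y ∈ Set.Icc c d := fun y hy => ⟨hc.trans hy.1, hy.2.trans hd⟩
  set Sx : Set ℝ := (fun y => (x, y)) ⁻¹' S with hSx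
  have hSxc : IsClosed Sx := hS.preimage (by fun_prop)
  have hind : ∀ y, Sᶜ.indicator (fun _ => (1 : ℝ)) (x, y) = Sxᶜ.indicator (fun _ => (1 : ℝ)) y := by
    intro y
    by_cases h : (x, y) ∈ S
    · have h' : y ∈ Sx := h
      simp [h, h']
    · have h' : y ∉ Sx := h
      simp [h, h']
  simp only [hind]
  have hmeas : MeasureTheory.StronglyMeasurable (Sxᶜ.indicator (fun _ => (1 : ℝ))) :=
    (MeasureTheory.stronglyMeasurable_const).indicator hSxc.measurableSet.compl
  have hii : ∀ p q, IntervalIntegrable (Sxᶜ.indicator (fun _ => (1 : ℝ))) MeasureTheory.volume p q := by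
    intro p q
    refine lm_ii_of_bdd (M := 1) hmeas (fun y => ?_) p q
    by_cases h : y ∈ Sx <;> simp [h]
  have hnn : 0 ≤ ∫ y in c..d, Sxᶜ.indicator (fun _ => (1 : ℝ)) y :=
    intervalIntegral.integral_nonneg (by linarith) fun y _ =>
      Set.indicator_nonneg (fun _ _ => zero_le_one) _
  have hmono : ∫ y in c'..d', Sxᶜ.indicator (fun _ => (1 : ℝ)) y ≤
      ∫ y in c..d, Sxᶜ.indicator (fun _ => (1 : ℝ)) y := by
    refine intervalIntegral.integral_mono_interval hc hcd hd ?_ (hii _ _)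
    exact Eventually.of_forall fun y => Set.indicator_nonneg (fun _ _ => zero_le_one) _
  by_cases hne : (Sx ∩ Set.Icc c' d').Nonempty
  · have := lm_oneD (u := w x) (D := D x) hcd hSxc hne hN
      (fun s hs hsI y hy => hL1 x s hs hxab (hsub s hsI) y (hsub y hy))
      (fun s hs hsI => hD x s hs hxab (hsub s hsI)) (fun s hs => hD0 x s hs)
    refine this.trans ?_
    have h0 : 0 ≤ N * κ := mul_nonneg hN hκ0
    calc _ ≤ 2 * N * ∫ y in c..d, Sxᶜ.indicator (fun _ => (1 : ℝ)) y := by gcongr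
      _ ≤ _ := mul_le_mul_of_nonneg_right (by nlinarith) hnn
  · have hemp : ∀ y ∈ Set.Icc c d, y ∉ Sx := by
      intro y hy hyS
      exact hne ⟨y, hyS, hR x y hyS hxab hy⟩
    have e1 : ∫ y in c'..d', D x y = 0 := by
      rw [intervalIntegral.integral_congr (g := fun _ => 0)]
      · simp
      · intro y hy
        rw [Set.uIcc_of_le hcd] at hy
        exact hD0 x y (hemp y (hsub y hy))
    have e2 : ∫ y in c..d, Sxᶜ.indicator (fun _ => (1 : ℝ)) y = d - c := by
      rw [intervalIntegral.integral_congr (g := fun _ => 1)]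
      · simp
      · intro y hy
        rw [Set.uIcc_of_le (by linarith)] at hy
        simp [hemp y hy]
    rw [e1, e2, sub_zero]
    have hx1ab : x1 ∈ Set.Icc a b := ⟨ha.trans hx1.1, hx1.2.trans hb⟩
    have hx2ab : x2 ∈ Set.Icc a b := ⟨ha.trans hx2.1, hx2.2.trans hb⟩
    have hc'm : c' ∈ Set.Icc c d := hsub _ ⟨le_rfl, hcd⟩
    have hd'm : d' ∈ Set.Icc c d := hsub _ ⟨hcd, le_rfl⟩
    have k1 := hL2 x2 d' h2 hx2ab hd'm x hxab
    have k2 := hL2 x2 d' h2 hx2ab hd'm x1 hx1ab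
    have k3 := hL1 x1 c' h1 hx1ab hc'm d' hd'm
    have k4 := hL2 x1 c' h1 hx1ab hc'm x hxab
    have hw : ∀ p ∈ Set.Icc a b, ∀ q ∈ Set.Icc a b, N * |p - q| ≤ N * (b - a) := by
      intro p hp q hq
      refine mul_le_mul_of_nonneg_left (abs_le.2 ⟨?_, ?_⟩) hN <;> linarith [hp.1, hp.2, hq.1, hq.2]
    have hw2 : N * |d' - c'| ≤ N * (d - c) := by
      refine mul_le_mul_of_nonneg_left (abs_le.2 ⟨?_, ?_⟩) hN <;> linarith
    have m1 := hw x hxab x2 hx2ab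
    have m2 := hw x1 hx1ab x2 hx2ab
    have m3 := hw x hxab x1 hx1ab
    have hdec : w x d' - w x c' = (w x d' - w x2 d') - (w x1 d' - w x2 d') + (w x1 d' - w x1 c')
        - (w x c' - w x1 c') := by ring
    have hNκ : N * (b - a) ≤ N * (κ * (d - c)) := mul_le_mul_of_nonneg_left hκ hN
    rw [hdec]
    calc _ ≤ ‖w x d' - w x2 d'‖ + ‖w x1 d' - w x2 d'‖ + ‖w x1 d' - w x1 c'‖ + ‖w x c' - w x1 c'‖ :=
          (norm_sub_le _ _).trans (by gcongr; exact (norm_add_le _ _).trans (by gcongr; exact norm_sub_le _ _))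
      _ ≤ N * (b - a) + N * (b - a) + N * (d - c) + N * (b - a) := by linarith
      _ ≤ _ := by nlinarith [mul_nonneg hN (show (0:ℝ) ≤ d - c by linarith)]

theorem lm_slab {w D : ℝ → ℝ → ℂ} {S : Set (ℝ × ℝ)} (hS : IsClosed S)
    {a b c d a' b' c' d' N κ : ℝ} (hN : 0 ≤ N) (hκ : b - a ≤ κ * (d - c)) (hκ0 : 0 ≤ κ)
    (ha : a ≤ a') (hb : b' ≤ b) (hc : c ≤ c') (hd : d' ≤ d) (hab : a' ≤ b') (hcd : c' ≤ d')
    (hR : ∀ x y, (x, y) ∈ S → x ∈ Set.Icc a b → y ∈ Set.Icc c d → y ∈ Set.Icc c' d')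
    {x1 x2 : ℝ} (hx1 : x1 ∈ Set.Icc a' b') (hx2 : x2 ∈ Set.Icc a' b') (h1 : (x1, c') ∈ S)
    (h2 : (x2, d') ∈ S)
    (hL1 : ∀ x y, (x, y) ∈ S → x ∈ Set.Icc a b → y ∈ Set.Icc c d → ∀ t ∈ Set.Icc c d,
      ‖w x t - w x y‖ ≤ N * |t - y|)
    (hL2 : ∀ x y, (x, y) ∈ S → x ∈ Set.Icc a b → y ∈ Set.Icc c d → ∀ t ∈ Set.Icc a b,
      ‖w t y - w x y‖ ≤ N * |t - x|)
    (hD : ∀ x y, (x, y) ∈ S → x ∈ Set.Icc a b → y ∈ Set.Icc c d → HasDerivAt (w x) (D x y) y)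
    (hD0 : ∀ x y, (x, y) ∉ S → D x y = 0)
    (hDm : MeasureTheory.StronglyMeasurable (Function.uncurry D)) {M : ℝ} (hDb : ∀ x y, ‖D x y‖ ≤ M)
    (hi1 : IntervalIntegrable (fun x => w x d') MeasureTheory.volume a' b')
    (hi2 : IntervalIntegrable (fun x => w x c') MeasureTheory.volume a' b') :
    ‖(∫ x in a'..b', w x d') - (∫ x in a'..b', w x c') - ∫ x in a'..b', ∫ y in c'..d', D x y‖ ≤
      (N * (3 * κ + 2)) * ∫ x in a..b, ∫ y in c..d, Sᶜ.indicator (fun _ => (1 : ℝ)) (x, y) := by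
  have hm : MeasureTheory.StronglyMeasurable
      (Function.uncurry fun x y => Sᶜ.indicator (fun _ => (1 : ℝ)) (x, y)) :=
    (MeasureTheory.stronglyMeasurable_const).indicator hS.measurableSet.compl
  have hmb : ∀ x y, ‖Sᶜ.indicator (fun _ => (1 : ℝ)) (x, y)‖ ≤ 1 := by
    intro x y
    by_cases h : (x, y) ∈ S <;> simp [h]
  rw [← intervalIntegral.integral_sub hi1 hi2,
    ← intervalIntegral.integral_sub (hi1.sub hi2) (lm_inner_ii hDm hDb _ _ _ _)]
  have hb1 : ‖∫ x in a'..b', (w x d' - w x c' - ∫ y in c'..d', D x y)‖ ≤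
      ∫ x in a'..b', (N * (3 * κ + 2)) * ∫ y in c..d, Sᶜ.indicator (fun _ => (1 : ℝ)) (x, y) := by
    refine intervalIntegral.norm_integral_le_of_norm_le hab ?_ ?_
    · exact Eventually.of_forall fun x hx =>
        lm_slice hS hN hκ hκ0 ha hb hc hd hcd hR hx1 hx2 h1 h2 hL1 hL2 hD hD0 ⟨hx.1.le, hx.2⟩
    · exact (lm_inner_ii hm hmb _ _ _ _).const_mul _
  refine hb1.trans ?_
  rw [intervalIntegral.integral_const_mul]
  have : 0 ≤ N * (3 * κ + 2) := by positivity
  refine mul_le_mul_of_nonneg_left ?_ this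
  refine intervalIntegral.integral_mono_interval ha hab hb ?_ (lm_inner_ii hm hmb _ _ _ _)
  refine Eventually.of_forall fun x => ?_
  exact intervalIntegral.integral_nonneg (by linarith) fun y _ =>
      Set.indicator_nonneg (fun _ _ => zero_le_one) _


/-- boundary integral over a rectangle -/
noncomputable def lmBI (w : ℝ → ℝ → ℂ) (a b c d : ℝ) : ℂ :=
  (∫ x in a..b, w x c) - (∫ x in a..b, w x d) + Complex.I * (∫ y in c..d, w b y)
    - Complex.I * (∫ y in c..d, w a y)

/-- separately continuous and bounded on a rectangle -/
structure LMSep (w : ℝ → ℝ → ℂ) (A1 B1 A2 B2 C : ℝ) : Prop where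
  cx : ∀ y ∈ Set.Icc A2 B2, ContinuousOn (fun x => w x y) (Set.Icc A1 B1)
  cy : ∀ x ∈ Set.Icc A1 B1, ContinuousOn (w x) (Set.Icc A2 B2)
  bd : ∀ x ∈ Set.Icc A1 B1, ∀ y ∈ Set.Icc A2 B2, ‖w x y‖ ≤ C

theorem LMSep.iix {w : ℝ → ℝ → ℂ} {A1 B1 A2 B2 C : ℝ} (h : LMSep w A1 B1 A2 B2 C) {a b y : ℝ}
    (ha : a ∈ Set.Icc A1 B1) (hb : b ∈ Set.Icc A1 B1) (hy : y ∈ Set.Icc A2 B2) :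
    IntervalIntegrable (fun x => w x y) MeasureTheory.volume a b :=
  ((h.cx y hy).mono (Set.uIcc_subset_Icc ha hb)).intervalIntegrable

theorem LMSep.iiy {w : ℝ → ℝ → ℂ} {A1 B1 A2 B2 C : ℝ} (h : LMSep w A1 B1 A2 B2 C) {c d x : ℝ}
    (hc : c ∈ Set.Icc A2 B2) (hd : d ∈ Set.Icc A2 B2) (hx : x ∈ Set.Icc A1 B1) :
    IntervalIntegrable (w x) MeasureTheory.volume c d :=
  ((h.cy x hx).mono (Set.uIcc_subset_Icc hc hd)).intervalIntegrable

theorem LMSep.splitx {w : ℝ → ℝ → ℂ} {A1 B1 A2 B2 C : ℝ} (h : LMSep w A1 B1 A2 B2 C) {a b e c d : ℝ}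
    (ha : a ∈ Set.Icc A1 B1) (hb : b ∈ Set.Icc A1 B1) (he : e ∈ Set.Icc A1 B1)
    (hc : c ∈ Set.Icc A2 B2) (hd : d ∈ Set.Icc A2 B2) :
    lmBI w a b c d = lmBI w a e c d + lmBI w e b c d := by
  unfold lmBI
  rw [← intervalIntegral.integral_add_adjacent_intervals (h.iix ha he hc) (h.iix he hb hc),
    ← intervalIntegral.integral_add_adjacent_intervals (h.iix ha he hd) (h.iix he hb hd)]
  ring

theorem LMSep.splity {w : ℝ → ℝ → ℂ} {A1 B1 A2 B2 C : ℝ} (h : LMSep w A1 B1 A2 B2 C) {a b e c d : ℝ}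
    (ha : a ∈ Set.Icc A1 B1) (hb : b ∈ Set.Icc A1 B1) (he : e ∈ Set.Icc A2 B2)
    (hc : c ∈ Set.Icc A2 B2) (hd : d ∈ Set.Icc A2 B2) :
    lmBI w a b c d = lmBI w a b c e + lmBI w a b e d := by
  unfold lmBI
  rw [← intervalIntegral.integral_add_adjacent_intervals (h.iiy hc he ha) (h.iiy he hd ha),
    ← intervalIntegral.integral_add_adjacent_intervals (h.iiy hc he hb) (h.iiy he hd hb)]
  ring

theorem lm_tend {a b C : ℝ} (hab : a < b) {g : ℝ → ℝ → ℂ} {g0 : ℝ → ℂ}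
    (hg : ∀ᶠ ε in 𝓝[>] (0 : ℝ), ContinuousOn (g ε) (Set.Icc a b) ∧ ∀ x ∈ Set.Icc a b, ‖g ε x‖ ≤ C)
    (hl : ∀ x ∈ Set.Icc a b, Tendsto (fun ε => g ε x) (𝓝[>] 0) (𝓝 (g0 x))) :
    Tendsto (fun ε => ∫ x in (a + ε)..(b - ε), g ε x) (𝓝[>] 0) (𝓝 (∫ x in a..b, g0 x)) := by
  have hev : ∀ᶠ ε in 𝓝[>] (0 : ℝ), ∫ x in a..b, (Set.Ioc (a + ε) (b - ε)).indicator (g ε) x =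
      ∫ x in (a + ε)..(b - ε), g ε x := by
    have : ∀ᶠ ε in 𝓝[>] (0 : ℝ), ε ∈ Set.Ioo 0 ((b - a) / 2) :=
      Ioo_mem_nhdsGT (by linarith)
    filter_upwards [this] with ε hε
    rw [intervalIntegral.integral_of_le hab.le, intervalIntegral.integral_of_le (by linarith [hε.2]),
      MeasureTheory.setIntegral_indicator measurableSet_Ioc]
    congr 2
    rw [Set.inter_eq_right]
    exact Set.Ioc_subset_Ioc (by linarith [hε.1]) (by linarith [hε.1])
  refine Tendsto.congr' hev ?_
  have hC : 0 ≤ max C 0 := le_max_right _ _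
  refine intervalIntegral.tendsto_integral_filter_of_dominated_convergence (fun _ => max C 0) ?_ ?_ ?_ ?_
  · filter_upwards [hg] with ε hε
    refine MeasureTheory.AEStronglyMeasurable.indicator ?_ measurableSet_Ioc
    rw [Set.uIoc_of_le hab.le]
    exact (hε.1.mono Set.Ioc_subset_Icc_self).aestronglyMeasurable measurableSet_Ioc
  · filter_upwards [hg] with ε hε
    refine Eventually.of_forall fun x hx => ?_
    rw [Set.uIoc_of_le hab.le] at hx
    refine (Set.indicator_apply_le' (f := fun x => ‖g ε x‖) (s := Set.Ioc (a + ε) (b - ε)) (a := x)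
      (y := max C 0) ?_ ?_).trans' ?_
    · intro _; exact (hε.2 x ⟨hx.1.le, hx.2⟩).trans (le_max_left _ _)
    · intro _; exact hC
    · exact (norm_indicator_eq_indicator_norm (g ε) x).le
  · simp
  · have hb : ∀ᵐ x : ℝ, x ≠ b := by
      simp [MeasureTheory.ae_iff]
    filter_upwards [hb] with x hxb hx
    rw [Set.uIoc_of_le hab.le] at hx
    have hxb' : x < b := lt_of_le_of_ne hx.2 hxb
    refine (hl x ⟨hx.1.le, hx.2⟩).congr' ?_
    have : ∀ᶠ ε in 𝓝[>] (0 : ℝ), ε ∈ Set.Ioo 0 (min (x - a) (b - x)) :=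
      Ioo_mem_nhdsGT (lt_min (by linarith [hx.1]) (by linarith))
    filter_upwards [this] with ε hε
    rw [Set.indicator_of_mem]
    have h1 := hε.2.trans_le (min_le_left _ _)
    have h2 := hε.2.trans_le (min_le_right _ _)
    exact ⟨by linarith, by linarith⟩

theorem lmBI_zero_of_diff {f : ℂ → ℂ} {a b c d : ℝ} (hab : a ≤ b) (hcd : c ≤ d)
    (hd : ∀ x ∈ Set.Icc a b, ∀ y ∈ Set.Icc c d, DifferentiableAt ℂ f (x + y * Complex.I)) :
    lmBI (fun x y => f (x + y * Complex.I)) a b c d = 0 := by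
  have := Complex.integral_boundary_rect_eq_zero_of_differentiableOn f ⟨a, c⟩ ⟨b, d⟩ (by
    intro z hz
    rw [Complex.mem_reProdIm] at hz
    simp only [Set.uIcc_of_le hab, Set.uIcc_of_le hcd] at hz
    have := hd z.re hz.1 z.im hz.2
    rw [Complex.re_add_im] at this
    exact this.differentiableWithinAt)
  simpa [lmBI] using this

theorem lmBI_zero_open {f : ℂ → ℂ} {A1 B1 A2 B2 C : ℝ}
    (h : LMSep (fun x y => f (x + y * Complex.I)) A1 B1 A2 B2 C) {a b c d : ℝ}
    (hab : a ≤ b) (hcd : c ≤ d)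
    (ha : a ∈ Set.Icc A1 B1) (hb : b ∈ Set.Icc A1 B1)
    (hc : c ∈ Set.Icc A2 B2) (hd : d ∈ Set.Icc A2 B2)
    (hdiff : ∀ x ∈ Set.Ioo a b, ∀ y ∈ Set.Ioo c d, DifferentiableAt ℂ f (x + y * Complex.I)) :
    lmBI (fun x y => f (x + y * Complex.I)) a b c d = 0 := by
  rcases hab.eq_or_lt with rfl | hab
  · simp [lmBI]
  rcases hcd.eq_or_lt with rfl | hcd
  · simp [lmBI]
  set w : ℝ → ℝ → ℂ := fun x y => f (x + y * Complex.I) with hw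
  have hsx : Set.Icc a b ⊆ Set.Icc A1 B1 := Set.Icc_subset_Icc ha.1 hb.2
  have hsy : Set.Icc c d ⊆ Set.Icc A2 B2 := Set.Icc_subset_Icc hc.1 hd.2
  have hev : ∀ᶠ ε in 𝓝[>] (0 : ℝ), ε ∈ Set.Ioo 0 (min ((b - a) / 2) ((d - c) / 2)) :=
    Ioo_mem_nhdsGT (lt_min (by linarith) (by linarith))
  have hev' : ∀ᶠ ε in 𝓝[>] (0 : ℝ), (a + ε ∈ Set.Ioo a b ∧ b - ε ∈ Set.Ioo a b) ∧
      (c + ε ∈ Set.Ioo c d ∧ d - ε ∈ Set.Ioo c d) ∧ a + ε ≤ b - ε ∧ c + ε ≤ d - ε := by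
    filter_upwards [hev] with ε hε
    have h1 := hε.2.trans_le (min_le_left _ _)
    have h2 := hε.2.trans_le (min_le_right _ _)
    have h0 := hε.1
    refine ⟨⟨⟨?_, ?_⟩, ⟨?_, ?_⟩⟩, ⟨⟨?_, ?_⟩, ⟨?_, ?_⟩⟩, ?_, ?_⟩ <;> linarith
  have tp : ∀ p : ℝ, Tendsto (fun ε : ℝ => p + ε) (𝓝[>] 0) (𝓝 p) := fun p => by
    have : Tendsto (fun ε : ℝ => p + ε) (𝓝 0) (𝓝 (p + 0)) := by
      apply Continuous.tendsto; fun_prop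
    rw [add_zero] at this
    exact this.mono_left nhdsWithin_le_nhds
  have tm : ∀ p : ℝ, Tendsto (fun ε : ℝ => p - ε) (𝓝[>] 0) (𝓝 p) := fun p => by
    have : Tendsto (fun ε : ℝ => p - ε) (𝓝 0) (𝓝 (p - 0)) := by
      apply Continuous.tendsto; fun_prop
    rw [sub_zero] at this
    exact this.mono_left nhdsWithin_le_nhds
  have hor : ∀ (k : ℝ → ℝ) (k0 : ℝ), k0 ∈ Set.Icc c d → Tendsto k (𝓝[>] 0) (𝓝 k0) →
      (∀ᶠ ε in 𝓝[>] (0 : ℝ), k ε ∈ Set.Icc c d) →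
      Tendsto (fun ε => ∫ x in (a + ε)..(b - ε), w x (k ε)) (𝓝[>] 0) (𝓝 (∫ x in a..b, w x k0)) := by
    intro k k0 hk0 hk hke
    refine lm_tend (C := C) (g := fun ε x => w x (k ε)) hab ?_ ?_
    · filter_upwards [hke] with ε hε
      exact ⟨(h.cx _ (hsy hε)).mono hsx, fun x hx => h.bd x (hsx hx) _ (hsy hε)⟩
    · intro x hx
      have := (h.cy x (hsx hx) k0 (hsy hk0)).tendsto
      refine this.comp (tendsto_nhdsWithin_iff.2 ⟨hk, ?_⟩)
      filter_upwards [hke] with ε hε using hsy hε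
  have ver : ∀ (k : ℝ → ℝ) (k0 : ℝ), k0 ∈ Set.Icc a b → Tendsto k (𝓝[>] 0) (𝓝 k0) →
      (∀ᶠ ε in 𝓝[>] (0 : ℝ), k ε ∈ Set.Icc a b) →
      Tendsto (fun ε => ∫ y in (c + ε)..(d - ε), w (k ε) y) (𝓝[>] 0) (𝓝 (∫ y in c..d, w k0 y)) := by
    intro k k0 hk0 hk hke
    refine lm_tend (C := C) (g := fun ε y => w (k ε) y) hcd ?_ ?_
    · filter_upwards [hke] with ε hε
      exact ⟨(h.cy _ (hsx hε)).mono hsy, fun y hy => h.bd _ (hsx hε) y (hsy hy)⟩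
    · intro y hy
      have := (h.cx y (hsy hy) k0 (hsx hk0)).tendsto
      refine this.comp (tendsto_nhdsWithin_iff.2 ⟨hk, ?_⟩)
      filter_upwards [hke] with ε hε using hsx hε
  have T : Tendsto (fun ε => lmBI w (a + ε) (b - ε) (c + ε) (d - ε)) (𝓝[>] 0) (𝓝 (lmBI w a b c d)) := by
    unfold lmBI
    refine Tendsto.sub (Tendsto.add (Tendsto.sub ?_ ?_) (Tendsto.const_mul _ ?_)) (Tendsto.const_mul _ ?_)
    · exact hor _ c ⟨le_rfl, hcd.le⟩ (tp c) (hev'.mono fun ε hε => Set.Ioo_subset_Icc_self hε.2.1.1)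
    · exact hor _ d ⟨hcd.le, le_rfl⟩ (tm d) (hev'.mono fun ε hε => Set.Ioo_subset_Icc_self hε.2.1.2)
    · exact ver _ b ⟨hab.le, le_rfl⟩ (tm b) (hev'.mono fun ε hε => Set.Ioo_subset_Icc_self hε.1.2)
    · exact ver _ a ⟨le_rfl, hab.le⟩ (tp a) (hev'.mono fun ε hε => Set.Ioo_subset_Icc_self hε.1.1)
  have Z : Tendsto (fun ε => lmBI w (a + ε) (b - ε) (c + ε) (d - ε)) (𝓝[>] 0) (𝓝 0) := by
    refine tendsto_const_nhds.congr' ?_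
    filter_upwards [hev'] with ε hε
    refine (lmBI_zero_of_diff hε.2.2.1 hε.2.2.2 fun x hx y hy => hdiff x ?_ y ?_).symm
    · exact ⟨hε.1.1.1.trans_le hx.1, hx.2.trans_lt hε.1.2.2⟩
    · exact ⟨hε.2.1.1.1.trans_le hy.1, hy.2.trans_lt hε.2.1.2.2⟩
  exact tendsto_nhds_unique T Z


/-- data for the Looman-Menchoff type argument on a rectangle -/
structure LMData (f : ℂ → ℂ) (S : Set (ℝ × ℝ)) (D : ℝ → ℝ → ℂ) (A1 B1 A2 B2 C N M : ℝ) : Prop where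
  sep : LMSep (fun x y => f (x + y * Complex.I)) A1 B1 A2 B2 C
  closed : IsClosed S
  N0 : 0 ≤ N
  L1 : ∀ x y, (x, y) ∈ S → x ∈ Set.Icc A1 B1 → y ∈ Set.Icc A2 B2 → ∀ t ∈ Set.Icc A2 B2,
      ‖f (x + t * Complex.I) - f (x + y * Complex.I)‖ ≤ N * |t - y|
  L2 : ∀ x y, (x, y) ∈ S → x ∈ Set.Icc A1 B1 → y ∈ Set.Icc A2 B2 → ∀ t ∈ Set.Icc A1 B1,
      ‖f (t + y * Complex.I) - f (x + y * Complex.I)‖ ≤ N * |t - x|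
  Dx : ∀ x y : ℝ, (x, y) ∈ S → x ∈ Set.Icc A1 B1 → y ∈ Set.Icc A2 B2 →
      HasDerivAt (fun t : ℝ => f (t + y * Complex.I)) (D x y) x
  Dy : ∀ x y : ℝ, (x, y) ∈ S → x ∈ Set.Icc A1 B1 → y ∈ Set.Icc A2 B2 →
      HasDerivAt (fun t : ℝ => f (x + t * Complex.I)) (Complex.I * D x y) y
  D0 : ∀ x y, (x, y) ∉ S → D x y = 0
  Dm : MeasureTheory.StronglyMeasurable (Function.uncurry D)
  Db : ∀ x y, ‖D x y‖ ≤ M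
  diff : ∀ x y : ℝ, (x, y) ∉ S → x ∈ Set.Icc A1 B1 → y ∈ Set.Icc A2 B2 →
    DifferentiableAt ℂ f (x + y * Complex.I)

theorem LMData.box {f : ℂ → ℂ} {S : Set (ℝ × ℝ)} {D : ℝ → ℝ → ℂ} {A1 B1 A2 B2 C N M : ℝ}
    (h : LMData f S D A1 B1 A2 B2 C N M) {a b c d κ : ℝ} (hκ0 : 0 ≤ κ)
    (hab : a ≤ b) (hcd : c ≤ d) (ha : A1 ≤ a) (hb : b ≤ B1) (hc : A2 ≤ c) (hd : d ≤ B2)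
    (hκ1 : b - a ≤ κ * (d - c)) (hκ2 : d - c ≤ κ * (b - a))
    (hne : (S ∩ Set.Icc a b ×ˢ Set.Icc c d).Nonempty) :
    ‖lmBI (fun x y => f (x + y * Complex.I)) a b c d‖ ≤
      (2 * (N * (3 * κ + 2))) *
        ∫ x in a..b, ∫ y in c..d, Sᶜ.indicator (fun _ => (1 : ℝ)) (x, y) := by
  have hcomp : IsCompact (S ∩ Set.Icc a b ×ˢ Set.Icc c d) :=
    (isCompact_Icc.prod isCompact_Icc).inter_left h.closed
  obtain ⟨⟨a', ya⟩, ⟨haS, ha1, ha2⟩, hamin⟩ := hcomp.exists_isMinOn hne (f := Prod.fst) (by fun_prop)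
  obtain ⟨⟨b', yb⟩, ⟨hbS, hb1, hb2⟩, hbmax⟩ := hcomp.exists_isMaxOn hne (f := Prod.fst) (by fun_prop)
  obtain ⟨⟨xc, c'⟩, ⟨hcS, hc1, hc2⟩, hcmin⟩ := hcomp.exists_isMinOn hne (f := Prod.snd) (by fun_prop)
  obtain ⟨⟨xd, d'⟩, ⟨hdS, hd1, hd2⟩, hdmax⟩ := hcomp.exists_isMaxOn hne (f := Prod.snd) (by fun_prop)
  simp only at ha1 ha2 hb1 hb2 hc1 hc2 hd1 hd2
  have hmx : ∀ x y, (x, y) ∈ S → x ∈ Set.Icc a b → y ∈ Set.Icc c d → x ∈ Set.Icc a' b' :=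
    fun x y hS hx hy => ⟨hamin ⟨hS, hx, hy⟩, hbmax ⟨hS, hx, hy⟩⟩
  have hmy : ∀ x y, (x, y) ∈ S → x ∈ Set.Icc a b → y ∈ Set.Icc c d → y ∈ Set.Icc c' d' :=
    fun x y hS hx hy => ⟨hcmin ⟨hS, hx, hy⟩, hdmax ⟨hS, hx, hy⟩⟩
  have hab' : a' ≤ b' := (hmx a' ya haS ha1 ha2).2
  have hcd' : c' ≤ d' := (hmy xc c' hcS hc1 hc2).2
  have hsx : Set.Icc a b ⊆ Set.Icc A1 B1 := Set.Icc_subset_Icc ha hb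
  have hsy : Set.Icc c d ⊆ Set.Icc A2 B2 := Set.Icc_subset_Icc hc hd
  have hxc := hmx xc c' hcS hc1 hc2
  have hxd := hmx xd d' hdS hd1 hd2
  have hya := hmy a' ya haS ha1 ha2
  have hyb := hmy b' yb hbS hb1 hb2
  have maa : a ∈ Set.Icc a b := ⟨le_rfl, hab⟩
  have mbb : b ∈ Set.Icc a b := ⟨hab, le_rfl⟩
  have mcc : c ∈ Set.Icc c d := ⟨le_rfl, hcd⟩
  have mdd : d ∈ Set.Icc c d := ⟨hcd, le_rfl⟩
  set w : ℝ → ℝ → ℂ := fun x y => f (x + y * Complex.I) with hw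
  have hred : lmBI w a b c d = lmBI w a' b' c' d' := by
    have z1 : lmBI w a b c c' = 0 := by
      refine lmBI_zero_open h.sep hab hc2.1 (hsx maa) (hsx mbb) (hsy mcc) (hsy hc2) ?_
      intro x hx y hy
      have hx' := Set.Ioo_subset_Icc_self hx
      have hy' : y ∈ Set.Icc c d := ⟨hy.1.le, hy.2.le.trans hc2.2⟩
      refine h.diff x y (fun hS => ?_) (hsx hx') (hsy hy')
      exact absurd (hmy x y hS hx' hy').1 (not_le.2 hy.2)
    have z2 : lmBI w a b d' d = 0 := by
      refine lmBI_zero_open h.sep hab hd2.2 (hsx maa) (hsx mbb) (hsy hd2) (hsy mdd) ?_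
      intro x hx y hy
      have hx' := Set.Ioo_subset_Icc_self hx
      have hy' : y ∈ Set.Icc c d := ⟨hd2.1.trans hy.1.le, hy.2.le⟩
      refine h.diff x y (fun hS => ?_) (hsx hx') (hsy hy')
      exact absurd (hmy x y hS hx' hy').2 (not_le.2 hy.1)
    have z3 : lmBI w a a' c' d' = 0 := by
      refine lmBI_zero_open h.sep ha1.1 hcd' (hsx maa) (hsx ha1) (hsy hc2) (hsy hd2) ?_
      intro x hx y hy
      have hx' : x ∈ Set.Icc a b := ⟨hx.1.le, hx.2.le.trans ha1.2⟩
      have hy' : y ∈ Set.Icc c d := ⟨hc2.1.trans hy.1.le, hy.2.le.trans hd2.2⟩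
      refine h.diff x y (fun hS => ?_) (hsx hx') (hsy hy')
      exact absurd (hmx x y hS hx' hy').1 (not_le.2 hx.2)
    have z4 : lmBI w b' b c' d' = 0 := by
      refine lmBI_zero_open h.sep hb1.2 hcd' (hsx hb1) (hsx mbb) (hsy hc2) (hsy hd2) ?_
      intro x hx y hy
      have hx' : x ∈ Set.Icc a b := ⟨hb1.1.trans hx.1.le, hx.2.le⟩
      have hy' : y ∈ Set.Icc c d := ⟨hc2.1.trans hy.1.le, hy.2.le.trans hd2.2⟩
      refine h.diff x y (fun hS => ?_) (hsx hx') (hsy hy')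
      exact absurd (hmx x y hS hx' hy').2 (not_le.2 hx.1)
    rw [h.sep.splity (hsx maa) (hsx mbb) (hsy hc2) (hsy mcc) (hsy mdd), z1,
      h.sep.splity (hsx maa) (hsx mbb) (hsy hd2) (hsy hc2) (hsy mdd), z2,
      h.sep.splitx (hsx maa) (hsx mbb) (hsx ha1) (hsy hc2) (hsy hd2), z3,
      h.sep.splitx (hsx ha1) (hsx mbb) (hsx hb1) (hsy hc2) (hsy hd2), z4]
    ring
  have s1 := lm_slab (w := w) (D := fun x y => Complex.I * D x y) h.closed h.N0 hκ1 hκ0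
    ha1.1 hb1.2 hc2.1 hd2.2 hab' hcd' hmy hxc hxd hcS hdS
    (fun x y hS hx hy t ht => h.L1 x y hS (hsx hx) (hsy hy) t (hsy ht))
    (fun x y hS hx hy t ht => h.L2 x y hS (hsx hx) (hsy hy) t (hsx ht))
    (fun x y hS hx hy => h.Dy x y hS (hsx hx) (hsy hy))
    (fun x y hS => by rw [h.D0 x y hS, mul_zero])
    (M := M) (h.Dm.const_mul Complex.I) (fun x y => by simpa using h.Db x y)
    (h.sep.iix (hsx ha1) (hsx hb1) (hsy hd2)) (h.sep.iix (hsx ha1) (hsx hb1) (hsy hc2))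
  have s2 := lm_slab (w := fun y x => w x y) (D := fun y x => D x y) (S := Prod.swap ⁻¹' S)
    (h.closed.preimage continuous_swap) h.N0 hκ2 hκ0
    hc2.1 hd2.2 ha1.1 hb1.2 hcd' hab' (fun y x hS hy hx => hmx x y hS hx hy) hya hyb haS hbS
    (fun y x hS hy hx t ht => h.L2 x y hS (hsx hx) (hsy hy) t (hsx ht))
    (fun y x hS hy hx t ht => h.L1 x y hS (hsx hx) (hsy hy) t (hsy ht))
    (fun y x hS hy hx => h.Dx x y hS (hsx hx) (hsy hy))
    (fun y x hS => h.D0 x y hS)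
    (M := M) (lm_swap_meas h.Dm) (fun y x => h.Db x y)
    (h.sep.iiy (hsy hc2) (hsy hd2) (hsx hb1)) (h.sep.iiy (hsy hc2) (hsy hd2) (hsx ha1))
  have hm : MeasureTheory.StronglyMeasurable
      (Function.uncurry fun x y => Sᶜ.indicator (fun _ => (1 : ℝ)) (x, y)) :=
    (MeasureTheory.stronglyMeasurable_const).indicator h.closed.measurableSet.compl
  have hmb : ∀ x y, ‖Sᶜ.indicator (fun _ => (1 : ℝ)) (x, y)‖ ≤ 1 := by
    intro x y
    by_cases h : (x, y) ∈ S <;> simp [h]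
  have e1 : ∫ y in c..d, ∫ x in a..b, (Prod.swap ⁻¹' S)ᶜ.indicator (fun _ => (1 : ℝ)) (y, x) =
      ∫ x in a..b, ∫ y in c..d, Sᶜ.indicator (fun _ => (1 : ℝ)) (x, y) := by
    rw [lm_swap hm hmb]
    rfl
  have e2 : ∫ y in c'..d', ∫ x in a'..b', D x y = ∫ x in a'..b', ∫ y in c'..d', D x y :=
    (lm_swap h.Dm h.Db).symm
  rw [e1, e2] at s2
  simp only [intervalIntegral.integral_const_mul] at s1
  rw [hred]
  set J := ∫ x in a'..b', ∫ y in c'..d', D x y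
  have hfin : lmBI w a' b' c' d' =
      - ((∫ x in a'..b', w x d') - (∫ x in a'..b', w x c') - Complex.I * J)
      + Complex.I * ((∫ y in c'..d', w b' y) - (∫ y in c'..d', w a' y) - J) := by
    unfold lmBI; ring
  rw [hfin]
  refine (norm_add_le _ _).trans ?_
  rw [norm_neg, norm_mul, Complex.norm_I, one_mul]
  linarith

theorem LMData.bis {f : ℂ → ℂ} {S : Set (ℝ × ℝ)} {D : ℝ → ℝ → ℂ} {A1 B1 A2 B2 C N M : ℝ}
    (h : LMData f S D A1 B1 A2 B2 C N M) {κ δ : ℝ} (hκ0 : 0 ≤ κ) (hδ : 0 < δ) (m : ℕ) :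
    ∀ a b c d : ℝ, a ≤ b → c ≤ d → A1 ≤ a → b ≤ B1 → A2 ≤ c → d ≤ B2 →
    b - a ≤ κ * (d - c) → d - c ≤ κ * (b - a) → b - a ≤ 2 ^ m * δ → d - c ≤ 2 ^ m * δ →
    ‖lmBI (fun x y => f (x + y * Complex.I)) a b c d‖ ≤
      (2 * (N * (3 * κ + 2))) *
        ∫ x in a..b, ∫ y in c..d, (Metric.cthickening δ S \ S).indicator (fun _ => (1 : ℝ)) (x, y) := by
  have hK : 0 ≤ 2 * (N * (3 * κ + 2)) := by
    have := h.N0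
    positivity
  have hm : MeasureTheory.StronglyMeasurable
      (Function.uncurry fun x y => (Metric.cthickening δ S \ S).indicator (fun _ => (1 : ℝ)) (x, y)) :=
    (MeasureTheory.stronglyMeasurable_const).indicator
      (Metric.isClosed_cthickening.measurableSet.diff h.closed.measurableSet)
  have hnn : ∀ p : ℝ × ℝ, 0 ≤ (Metric.cthickening δ S \ S).indicator (fun _ => (1 : ℝ)) p :=
    fun p => Set.indicator_nonneg (fun _ _ => zero_le_one) _
  have hmb : ∀ x y, ‖(Metric.cthickening δ S \ S).indicator (fun _ => (1 : ℝ)) (x, y)‖ ≤ 1 := by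
    intro x y
    rw [Real.norm_of_nonneg (hnn _)]
    exact Set.indicator_le_self' (fun _ _ => zero_le_one) _
  induction m with
  | zero =>
    intro a b c d hab hcd ha hb hc hd hκ1 hκ2 h1 h2
    simp only [pow_zero, one_mul] at h1 h2
    by_cases hne : (S ∩ Set.Icc a b ×ˢ Set.Icc c d).Nonempty
    · refine (h.box hκ0 hab hcd ha hb hc hd hκ1 hκ2 hne).trans (le_of_eq ?_)
      congr 1
      obtain ⟨⟨p, q⟩, hpS, hp, hq⟩ := hne
      simp only at hp hq
      refine intervalIntegral.integral_congr fun x hx => intervalIntegral.integral_congr fun y hy => ?_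
      rw [Set.uIcc_of_le hab] at hx
      rw [Set.uIcc_of_le hcd] at hy
      have hth : (x, y) ∈ Metric.cthickening δ S := by
        refine Metric.mem_cthickening_of_dist_le (x, y) (p, q) δ S hpS ?_
        rw [Prod.dist_eq, Real.dist_eq, Real.dist_eq]
        refine max_le (abs_le.2 ⟨?_, ?_⟩) (abs_le.2 ⟨?_, ?_⟩) <;>
          linarith [hx.1, hx.2, hy.1, hy.2, hp.1, hp.2, hq.1, hq.2]
      by_cases hS : (x, y) ∈ S
      · simp [hS]
      · simp [hS, hth]
    · rw [lmBI_zero_of_diff hab hcd, norm_zero]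
      · refine mul_nonneg hK ?_
        exact intervalIntegral.integral_nonneg hab fun x _ =>
          intervalIntegral.integral_nonneg hcd fun y _ => hnn _
      · intro x hx y hy
        refine h.diff x y (fun hS => hne ⟨(x, y), hS, hx, hy⟩) ?_ ?_
        · exact ⟨ha.trans hx.1, hx.2.trans hb⟩
        · exact ⟨hc.trans hy.1, hy.2.trans hd⟩
  | succ m ih =>
    intro a b c d hab hcd ha hb hc hd hκ1 hκ2 h1 h2
    set e := (a + b) / 2 with he
    set g := (c + d) / 2 with hg
    have hae : a ≤ e := by linarith
    have heb : e ≤ b := by linarith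
    have hcg : c ≤ g := by linarith
    have hgd : g ≤ d := by linarith
    rw [pow_succ] at h1 h2
    have i1 := ih a e c g hae hcg ha (by linarith) hc (by linarith) (by rw [he, hg]; linarith)
      (by rw [he, hg]; linarith) (by rw [he]; linarith) (by rw [hg]; linarith)
    have i2 := ih e b c g heb hcg (by linarith) hb hc (by linarith) (by rw [he, hg]; linarith)
      (by rw [he, hg]; linarith) (by rw [he]; linarith) (by rw [hg]; linarith)
    have i3 := ih a e g d hae hgd ha (by linarith) (by linarith) hd (by rw [he, hg]; linarith)
      (by rw [he, hg]; linarith) (by rw [he]; linarith) (by rw [hg]; linarith)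
    have i4 := ih e b g d heb hgd (by linarith) hb (by linarith) hd (by rw [he, hg]; linarith)
      (by rw [he, hg]; linarith) (by rw [he]; linarith) (by rw [hg]; linarith)
    have ma : a ∈ Set.Icc A1 B1 := ⟨ha, hab.trans hb⟩
    have mb : b ∈ Set.Icc A1 B1 := ⟨ha.trans hab, hb⟩
    have me : e ∈ Set.Icc A1 B1 := ⟨ha.trans hae, heb.trans hb⟩
    have mc : c ∈ Set.Icc A2 B2 := ⟨hc, hcd.trans hd⟩
    have md : d ∈ Set.Icc A2 B2 := ⟨hc.trans hcd, hd⟩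
    have mg : g ∈ Set.Icc A2 B2 := ⟨hc.trans hcg, hgd.trans hd⟩
    rw [h.sep.splity ma mb mg mc md, h.sep.splitx ma mb me mc mg, h.sep.splitx ma mb me mg md]
    have hsy : ∀ p q, ∫ x in p..q, ∫ y in c..d,
        (Metric.cthickening δ S \ S).indicator (fun _ => (1 : ℝ)) (x, y) =
        (∫ x in p..q, ∫ y in c..g, (Metric.cthickening δ S \ S).indicator (fun _ => (1 : ℝ)) (x, y)) +
        ∫ x in p..q, ∫ y in g..d, (Metric.cthickening δ S \ S).indicator (fun _ => (1 : ℝ)) (x, y) := by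
      intro p q
      rw [← intervalIntegral.integral_add (lm_inner_ii hm hmb _ _ _ _) (lm_inner_ii hm hmb _ _ _ _)]
      refine intervalIntegral.integral_congr fun x _ => ?_
      have hx := lm_slice_meas hm x
      exact (intervalIntegral.integral_add_adjacent_intervals (lm_ii_of_bdd hx (hmb x) _ _)
        (lm_ii_of_bdd hx (hmb x) _ _)).symm
    have hsx := intervalIntegral.integral_add_adjacent_intervals (lm_inner_ii hm hmb a e c d)
      (lm_inner_ii hm hmb e b c d)
    rw [← hsx, hsy, hsy]
    have n1 := norm_add_le (lmBI (fun x y => f (x + y * Complex.I)) a e c g)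
      (lmBI (fun x y => f (x + y * Complex.I)) e b c g)
    have n2 := norm_add_le (lmBI (fun x y => f (x + y * Complex.I)) a e g d)
      (lmBI (fun x y => f (x + y * Complex.I)) e b g d)
    refine (norm_add_le _ _).trans ?_
    linarith

theorem LMData.zero {f : ℂ → ℂ} {S : Set (ℝ × ℝ)} {D : ℝ → ℝ → ℂ} {A1 B1 A2 B2 C N M : ℝ}
    (h : LMData f S D A1 B1 A2 B2 C N M) {a b c d : ℝ}
    (hab : a ≤ b) (hcd : c ≤ d) (ha : A1 ≤ a) (hb : b ≤ B1) (hc : A2 ≤ c) (hd : d ≤ B2) :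
    lmBI (fun x y => f (x + y * Complex.I)) a b c d = 0 := by
  rcases hab.eq_or_lt with rfl | hab
  · simp [lmBI]
  rcases hcd.eq_or_lt with rfl | hcd
  · simp [lmBI]
  have p1 : 0 < b - a := by linarith
  have p2 : 0 < d - c := by linarith
  set κ := (b - a) / (d - c) + (d - c) / (b - a) with hκ
  have hκ0 : 0 ≤ κ := by positivity
  have hκ1 : b - a ≤ κ * (d - c) := by
    have : κ * (d - c) = (b - a) + (d - c) / (b - a) * (d - c) := by rw [hκ]; field_simp
    rw [this]
    have : 0 ≤ (d - c) / (b - a) * (d - c) := by positivity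
    linarith
  have hκ2 : d - c ≤ κ * (b - a) := by
    have : κ * (b - a) = (d - c) + (b - a) / (d - c) * (b - a) := by rw [hκ]; field_simp; ring
    rw [this]
    have : 0 ≤ (b - a) / (d - c) * (b - a) := by positivity
    linarith
  set T : ℕ → ℝ := fun n => ∫ x in a..b, ∫ y in c..d,
    (Metric.cthickening (1 / ((n : ℝ) + 1)) S \ S).indicator (fun _ => (1 : ℝ)) (x, y) with hT
  have key : ∀ n : ℕ, ‖lmBI (fun x y => f (x + y * Complex.I)) a b c d‖ ≤
      (2 * (N * (3 * κ + 2))) * T n := by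
    intro n
    have hδ : (0 : ℝ) < 1 / ((n : ℝ) + 1) := by positivity
    obtain ⟨m, hm⟩ := pow_unbounded_of_one_lt (((b - a) + (d - c)) / (1 / ((n : ℝ) + 1))) one_lt_two
    rw [div_lt_iff₀ hδ] at hm
    exact h.bis hκ0 hδ m a b c d hab.le hcd.le ha hb hc hd hκ1 hκ2 (by linarith) (by linarith)
  have hms : ∀ n : ℕ, MeasureTheory.StronglyMeasurable (Function.uncurry fun x y =>
      (Metric.cthickening (1 / ((n : ℝ) + 1)) S \ S).indicator (fun _ => (1 : ℝ)) (x, y)) := fun n =>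
    (MeasureTheory.stronglyMeasurable_const).indicator
      (Metric.isClosed_cthickening.measurableSet.diff h.closed.measurableSet)
  have hmb : ∀ n : ℕ, ∀ x y, ‖(Metric.cthickening (1 / ((n : ℝ) + 1)) S \ S).indicator
      (fun _ => (1 : ℝ)) (x, y)‖ ≤ 1 := by
    intro n x y
    rw [Real.norm_of_nonneg (Set.indicator_nonneg (fun _ _ => zero_le_one) _)]
    exact Set.indicator_le_self' (fun _ _ => zero_le_one) _
  have hpt : ∀ p : ℝ × ℝ, Tendsto (fun n : ℕ =>
      (Metric.cthickening (1 / ((n : ℝ) + 1)) S \ S).indicator (fun _ => (1 : ℝ)) p) atTop (𝓝 0) := by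
    intro p
    by_cases hp : p ∈ S
    · simp [hp]
    · have hinf := Metric.closure_eq_iInter_cthickening S
      rw [h.closed.closure_eq] at hinf
      rw [hinf] at hp
      simp only [Set.mem_iInter, not_forall] at hp
      obtain ⟨δ, hδ, hp⟩ := hp
      refine tendsto_const_nhds.congr' ?_
      have := (tendsto_one_div_add_atTop_nhds_zero_nat (𝕜 := ℝ)).eventually (gt_mem_nhds hδ)
      filter_upwards [this] with n hn
      rw [Set.indicator_of_notMem]
      exact fun hh => hp (Metric.cthickening_mono hn.le S hh.1)
  have hlim : Tendsto T atTop (𝓝 0) := by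
    have : (0 : ℝ) = ∫ x in a..b, (0 : ℝ) := by simp
    rw [this]
    refine intervalIntegral.tendsto_integral_filter_of_dominated_convergence (fun _ => 1 * |d - c|) ?_ ?_ ?_ ?_
    · exact Eventually.of_forall fun n => (lm_inner_ii (hms n) (hmb n) a b c d).def'.aestronglyMeasurable
    · exact Eventually.of_forall fun n => Eventually.of_forall fun x _ =>
        intervalIntegral.norm_integral_le_of_norm_le_const fun y _ => hmb n x y
    · simp
    · refine Eventually.of_forall fun x _ => ?_
      have : (0 : ℝ) = ∫ y in c..d, (0 : ℝ) := by simp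
      rw [this]
      refine intervalIntegral.tendsto_integral_filter_of_dominated_convergence (fun _ => 1) ?_ ?_ ?_ ?_
      · exact Eventually.of_forall fun n => (lm_slice_meas (hms n) x).aestronglyMeasurable
      · exact Eventually.of_forall fun n => Eventually.of_forall fun y _ => hmb n x y
      · simp
      · exact Eventually.of_forall fun y _ => hpt (x, y)
  have := ge_of_tendsto' (hlim.const_mul (2 * (N * (3 * κ + 2)))) key
  rw [mul_zero] at this
  exact norm_le_zero_iff.1 this


theorem lmBI_symx (w : ℝ → ℝ → ℂ) (a b c d : ℝ) : lmBI w b a c d = - lmBI w a b c d := by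
  unfold lmBI
  rw [intervalIntegral.integral_symm a b, intervalIntegral.integral_symm a b]
  ring

theorem lmBI_symy (w : ℝ → ℝ → ℂ) (a b c d : ℝ) : lmBI w a b d c = - lmBI w a b c d := by
  unfold lmBI
  rw [intervalIntegral.integral_symm c d, intervalIntegral.integral_symm c d]
  ring

theorem lm_morera {f : ℂ → ℂ} {G : ℝ → ℝ → ℂ} {A1 B1 A2 B2 C : ℝ}
    (hsep : LMSep (fun x y => f (x + y * Complex.I)) A1 B1 A2 B2 C)
    (hG : MeasureTheory.StronglyMeasurable (Function.uncurry G))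
    (hGb : ∀ x y, ‖G x y‖ ≤ C)
    (hGf : ∀ x ∈ Set.Icc A1 B1, ∀ y ∈ Set.Icc A2 B2, G x y = f (x + y * Complex.I))
    (hz0 : ∀ a b c d, a ≤ b → c ≤ d → A1 ≤ a → b ≤ B1 → A2 ≤ c → d ≤ B2 →
      lmBI (fun x y => f (x + y * Complex.I)) a b c d = 0)
    {z0 : ℂ} {r : ℝ}
    (hball : ∀ z ∈ Metric.ball z0 r, z.re ∈ Set.Ioo A1 B1 ∧ z.im ∈ Set.Ioo A2 B2) :
    DifferentiableOn ℂ f (Metric.ball z0 r) := by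
  by_cases hr : 0 < r
  swap
  · rw [Metric.ball_eq_empty.2 (not_lt.1 hr)]; exact differentiableOn_empty
  have hz1 := hball z0 (Metric.mem_ball_self hr)
  have hA : A1 ≤ B1 := (hz1.1.1.trans hz1.1.2).le
  have hB : A2 ≤ B2 := (hz1.2.1.trans hz1.2.2).le
  have mA : A1 ∈ Set.Icc A1 B1 := ⟨le_rfl, hA⟩
  have mB : A2 ∈ Set.Icc A2 B2 := ⟨le_rfl, hB⟩
  set w : ℝ → ℝ → ℂ := fun x y => f (x + y * Complex.I) with hw
  have hz : ∀ a ∈ Set.Icc A1 B1, ∀ b ∈ Set.Icc A1 B1, ∀ c ∈ Set.Icc A2 B2, ∀ d ∈ Set.Icc A2 B2,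
      lmBI w a b c d = 0 := by
    intro a ha b hb c hc d hd
    rcases le_total a b with hab | hab <;> rcases le_total c d with hcd | hcd
    · exact hz0 _ _ _ _ hab hcd ha.1 hb.2 hc.1 hd.2
    · rw [lmBI_symy, hz0 _ _ _ _ hab hcd ha.1 hb.2 hd.1 hc.2, neg_zero]
    · rw [lmBI_symx, hz0 _ _ _ _ hab hcd hb.1 ha.2 hc.1 hd.2, neg_zero]
    · rw [lmBI_symx, lmBI_symy, hz0 _ _ _ _ hab hcd hb.1 ha.2 hd.1 hc.2]; simp
  set F : ℝ → ℝ → ℂ := fun x y => (∫ t in A1..x, w t A2) + Complex.I * ∫ t in A2..y, w x t with hF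
  have hFy : ∀ x ∈ Set.Icc A1 B1, ∀ y1 ∈ Set.Icc A2 B2, ∀ y2 ∈ Set.Icc A2 B2,
      F x y2 - F x y1 = Complex.I * ∫ t in y1..y2, w x t := by
    intro x hx y1 h1 y2 h2
    simp only [hF]
    rw [← intervalIntegral.integral_add_adjacent_intervals (hsep.iiy mB h1 hx) (hsep.iiy h1 h2 hx)]
    ring
  have hFx : ∀ y ∈ Set.Icc A2 B2, ∀ x1 ∈ Set.Icc A1 B1, ∀ x2 ∈ Set.Icc A1 B1,
      F x2 y - F x1 y = ∫ t in x1..x2, w t y := by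
    intro y hy x1 h1 x2 h2
    have := hz x1 h1 x2 h2 A2 mB y hy
    unfold lmBI at this
    simp only [hF]
    rw [← intervalIntegral.integral_add_adjacent_intervals (hsep.iix mA h1 mB) (hsep.iix h1 h2 mB)]
    linear_combination this
  set F' : ℂ → ℂ := fun z => F z.re z.im with hF'
  have hbx : ∀ y ∈ Set.Icc A2 B2, ∀ x1 ∈ Set.Icc A1 B1, ∀ x2 ∈ Set.Icc A1 B1,
      ‖F x2 y - F x1 y‖ ≤ C * |x2 - x1| := by
    intro y hy x1 h1 x2 h2
    rw [hFx y hy x1 h1 x2 h2]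
    exact intervalIntegral.norm_integral_le_of_norm_le_const fun t ht =>
      hsep.bd t (Set.uIcc_subset_Icc h1 h2 (Set.uIoc_subset_uIcc ht)) y hy
  have hby : ∀ x ∈ Set.Icc A1 B1, ∀ y1 ∈ Set.Icc A2 B2, ∀ y2 ∈ Set.Icc A2 B2,
      ‖F x y2 - F x y1‖ ≤ C * |y2 - y1| := by
    intro x hx y1 h1 y2 h2
    rw [hFy x hx y1 h1 y2 h2, norm_mul, Complex.norm_I, one_mul]
    exact intervalIntegral.norm_integral_le_of_norm_le_const fun t ht =>
      hsep.bd x hx t (Set.uIcc_subset_Icc h1 h2 (Set.uIoc_subset_uIcc ht))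
  have mem : ∀ z ∈ Metric.ball z0 r, z.re ∈ Set.Icc A1 B1 ∧ z.im ∈ Set.Icc A2 B2 := fun z hz =>
    ⟨Set.Ioo_subset_Icc_self (hball z hz).1, Set.Ioo_subset_Icc_self (hball z hz).2⟩
  have hcont : ContinuousOn F' (Metric.ball z0 r) := by
    intro z hz
    have hzm := mem z hz
    rw [ContinuousWithinAt, tendsto_iff_norm_sub_tendsto_zero]
    have hlim : Tendsto (fun v : ℂ => C * |v.re - z.re| + C * |v.im - z.im|)
        (𝓝[Metric.ball z0 r] z) (𝓝 0) := by
      have : Continuous (fun v : ℂ => C * |v.re - z.re| + C * |v.im - z.im|) := by fun_prop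
      have := this.tendsto z
      simp only [sub_self, abs_zero, mul_zero, add_zero] at this
      exact this.mono_left nhdsWithin_le_nhds
    refine squeeze_zero' (Eventually.of_forall fun _ => norm_nonneg _) ?_ hlim
    filter_upwards [self_mem_nhdsWithin] with v hv
    have hvm := mem v hv
    have : F' v - F' z = (F v.re v.im - F z.re v.im) + (F z.re v.im - F z.re z.im) := by
      simp only [hF']; ring
    rw [this]
    exact (norm_add_le _ _).trans (add_le_add (hbx _ hvm.2 _ hzm.1 _ hvm.1)
      (hby _ hzm.1 _ hzm.2 _ hvm.2))
  have hFcx : ∀ y ∈ Set.Icc A2 B2, ContinuousOn (fun x => F x y) (Set.Icc A1 B1) := by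
    intro y hy x hx
    rw [ContinuousWithinAt, tendsto_iff_norm_sub_tendsto_zero]
    have hlim : Tendsto (fun v : ℝ => C * |v - x|) (𝓝[Set.Icc A1 B1] x) (𝓝 0) := by
      have : Continuous (fun v : ℝ => C * |v - x|) := by fun_prop
      have := this.tendsto x
      simp only [sub_self, abs_zero, mul_zero] at this
      exact this.mono_left nhdsWithin_le_nhds
    refine squeeze_zero' (Eventually.of_forall fun _ => norm_nonneg _) ?_ hlim
    filter_upwards [self_mem_nhdsWithin] with v hv
    exact hbx _ hy _ hx _ hv
  have hFcy : ∀ x ∈ Set.Icc A1 B1, ContinuousOn (fun y => F x y) (Set.Icc A2 B2) := by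
    intro x hx y hy
    rw [ContinuousWithinAt, tendsto_iff_norm_sub_tendsto_zero]
    have hlim : Tendsto (fun v : ℝ => C * |v - y|) (𝓝[Set.Icc A2 B2] y) (𝓝 0) := by
      have : Continuous (fun v : ℝ => C * |v - y|) := by fun_prop
      have := this.tendsto y
      simp only [sub_self, abs_zero, mul_zero] at this
      exact this.mono_left nhdsWithin_le_nhds
    refine squeeze_zero' (Eventually.of_forall fun _ => norm_nonneg _) ?_ hlim
    filter_upwards [self_mem_nhdsWithin] with v hv
    exact hby _ hx _ hy _ hv
  have hcons : Complex.IsConservativeOn F' (Metric.ball z0 r) := by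
    intro z v hzv
    have hz' := mem z (hzv (by simp [Complex.Rectangle, Complex.mem_reProdIm]))
    have hv' := mem v (hzv (by simp [Complex.Rectangle, Complex.mem_reProdIm]))
    rw [← add_eq_zero_iff_eq_neg, Complex.wedgeIntegral_add_wedgeIntegral_eq]
    have e1 : ∀ (x y : ℝ), F' (x + y * Complex.I) = F x y := by
      intro x y; simp [hF']
    simp only [e1, smul_eq_mul]
    have hx1 : IntervalIntegrable (fun x => F x z.im) MeasureTheory.volume z.re v.re :=
      ((hFcx _ hz'.2).mono (Set.uIcc_subset_Icc hz'.1 hv'.1)).intervalIntegrable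
    have hx2 : IntervalIntegrable (fun x => F x v.im) MeasureTheory.volume z.re v.re :=
      ((hFcx _ hv'.2).mono (Set.uIcc_subset_Icc hz'.1 hv'.1)).intervalIntegrable
    have hy1 : IntervalIntegrable (fun y => F z.re y) MeasureTheory.volume z.im v.im :=
      ((hFcy _ hz'.1).mono (Set.uIcc_subset_Icc hz'.2 hv'.2)).intervalIntegrable
    have hy2 : IntervalIntegrable (fun y => F v.re y) MeasureTheory.volume z.im v.im :=
      ((hFcy _ hv'.1).mono (Set.uIcc_subset_Icc hz'.2 hv'.2)).intervalIntegrable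
    rw [← neg_sub (∫ x in z.re..v.re, F x v.im), ← intervalIntegral.integral_sub hx2 hx1,
      add_sub_assoc, ← mul_sub, ← intervalIntegral.integral_sub hy2 hy1]
    have i1 : ∫ x in z.re..v.re, (F x v.im - F x z.im) =
        ∫ x in z.re..v.re, Complex.I * ∫ y in z.im..v.im, G x y := by
      apply intervalIntegral.integral_congr
      intro x hx
      have hx := Set.uIcc_subset_Icc hz'.1 hv'.1 hx
      simp only
      rw [hFy x hx _ hz'.2 _ hv'.2]
      congr 1
      apply intervalIntegral.integral_congr
      intro y hy
      exact (hGf x hx y (Set.uIcc_subset_Icc hz'.2 hv'.2 hy)).symm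
    have i2 : ∫ y in z.im..v.im, (F v.re y - F z.re y) =
        ∫ y in z.im..v.im, ∫ x in z.re..v.re, G x y := by
      apply intervalIntegral.integral_congr
      intro y hy
      have hy := Set.uIcc_subset_Icc hz'.2 hv'.2 hy
      simp only
      rw [hFx y hy _ hz'.1 _ hv'.1]
      apply intervalIntegral.integral_congr
      intro x hx
      exact (hGf x (Set.uIcc_subset_Icc hz'.1 hv'.1 hx) y hy).symm
    rw [i1, i2, intervalIntegral.integral_const_mul, lm_swap hG hGb]
    ring
  have hFd : DifferentiableOn ℂ F' (Metric.ball z0 r) :=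
    (hcons.isExactOn_ball hcont).differentiableOn Metric.isOpen_ball
  have hFdd := hFd.deriv Metric.isOpen_ball
  refine hFdd.congr fun z hz => ?_
  have hd := (hFd.differentiableAt (Metric.isOpen_ball.mem_nhds hz)).hasDerivAt
  have hzo := hball z hz
  have hzm := mem z hz
  have h1 : HasDerivAt (fun t : ℝ => F' (t + z.im * Complex.I)) (deriv F' z) z.re := by
    have h2 : HasDerivAt (fun t : ℝ => (t : ℂ) + z.im * Complex.I) 1 z.re :=
      (Complex.ofRealCLM.hasDerivAt (x := z.re)).add_const _ 
    have h3 : HasDerivAt F' (deriv F' z) ((z.re : ℂ) + z.im * Complex.I) := by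
      rw [Complex.re_add_im]; exact hd
    have h6 := h3.comp z.re h2
    rw [mul_one] at h6
    exact h6
  have h4 : HasDerivAt (fun t : ℝ => ∫ s in z.re..t, w s z.im) (w z.re z.im) z.re := by
    have hn : Set.Icc A1 B1 ∈ 𝓝 z.re := Icc_mem_nhds hzo.1.1 hzo.1.2
    refine intervalIntegral.integral_hasDerivAt_right (by simp) ?_
      ((hsep.cx _ hzm.2).continuousAt hn)
    exact ContinuousOn.stronglyMeasurableAtFilter_nhdsWithin (hsep.cx _ hzm.2) measurableSet_Icc z.re |>.filter_mono
      (by rw [nhdsWithin_eq_nhds.2 hn])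
  have h5 : HasDerivAt (fun t : ℝ => F' (t + z.im * Complex.I)) (w z.re z.im) z.re := by
    refine (h4.add_const (F z.re z.im)).congr_of_eventuallyEq ?_
    filter_upwards [Icc_mem_nhds hzo.1.1 hzo.1.2] with t ht
    have := hFx _ hzm.2 _ hzm.1 _ ht
    simp only [← this, hF']; simp
  have := h1.unique h5
  rw [this]; simp [hw]


theorem lm_shift_x {f : ℂ → ℂ} {x y : ℝ} {g : ℂ}
    (h : HasDerivAt (fun t : ℝ => f ((x + y * Complex.I) + t)) g 0) :
    HasDerivAt (fun t : ℝ => f (t + y * Complex.I)) g x := by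
  have h2 : HasDerivAt (fun t : ℝ => t - x) 1 x := (hasDerivAt_id x).sub_const x
  have h3 : HasDerivAt (fun t : ℝ => f ((x + y * Complex.I) + t)) g (x - x) := by
    rw [sub_self]; exact h
  have h4 := HasDerivAt.scomp (h := fun t : ℝ => t - x) x h3 h2
  rw [one_smul] at h4
  refine h4.congr_of_eventuallyEq (Eventually.of_forall fun t => ?_)
  simp only [Function.comp]
  congr 1; push_cast; ring

theorem lm_shift_y {f : ℂ → ℂ} {x y : ℝ} {g : ℂ}
    (h : HasDerivAt (fun t : ℝ => f ((x + y * Complex.I) + t * Complex.I)) g 0) :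
    HasDerivAt (fun t : ℝ => f (x + t * Complex.I)) g y := by
  have h2 : HasDerivAt (fun t : ℝ => t - y) 1 y := (hasDerivAt_id y).sub_const y
  have h3 : HasDerivAt (fun t : ℝ => f ((x + y * Complex.I) + t * Complex.I)) g (y - y) := by
    rw [sub_self]; exact h
  have h4 := HasDerivAt.scomp (h := fun t : ℝ => t - y) y h3 h2
  rw [one_smul] at h4
  refine h4.congr_of_eventuallyEq (Eventually.of_forall fun t => ?_)
  simp only [Function.comp]
  congr 1; push_cast; ring

theorem lm_local {f g : ℂ → ℂ} {P : Set ℂ} {z0 : ℂ} {r C N : ℝ} (hr : 0 < r) (hN : 0 ≤ N)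
    (hb : ∀ z ∈ Metric.ball z0 r, ‖f z‖ ≤ C)
    (hgx : ∀ z ∈ Metric.ball z0 r, HasDerivAt (fun t : ℝ => f (z + t)) (g z) 0)
    (hgy : ∀ z ∈ Metric.ball z0 r,
      HasDerivAt (fun t : ℝ => f (z + t * Complex.I)) (Complex.I * g z) 0)
    (hP : IsClosed P) (hd : ∀ z ∈ Metric.ball z0 r, z ∉ P → DifferentiableAt ℂ f z)
    (hL : ∀ z ∈ P, z ∈ Metric.ball z0 r → ∀ t : ℝ, |t| < r →
      ‖f (z + t) - f z‖ ≤ N * |t| ∧ ‖f (z + t * Complex.I) - f z‖ ≤ N * |t|) :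
    DifferentiableOn ℂ f (Metric.ball z0 (r / 4)) := by
  have hC : 0 ≤ C := (norm_nonneg _).trans (hb z0 (Metric.mem_ball_self hr))
  have hcP : ContinuousOn f (P ∩ Metric.ball z0 r) := by
    intro z hz
    rw [ContinuousWithinAt, tendsto_iff_norm_sub_tendsto_zero]
    have hlim : Tendsto (fun v : ℂ => N * |z.im - v.im| + N * |v.re - z.re|)
        (𝓝[P ∩ Metric.ball z0 r] z) (𝓝 0) := by
      have : Continuous (fun v : ℂ => N * |z.im - v.im| + N * |v.re - z.re|) := by fun_prop
      have := this.tendsto z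
      simp only [sub_self, abs_zero, mul_zero, add_zero] at this
      exact this.mono_left nhdsWithin_le_nhds
    refine squeeze_zero' (Eventually.of_forall fun _ => norm_nonneg _) ?_ hlim
    filter_upwards [self_mem_nhdsWithin, mem_nhdsWithin_of_mem_nhds (Metric.ball_mem_nhds z hr)]
      with v hv hvr
    have hvr' : ‖v - z‖ < r := by simpa [dist_eq_norm] using hvr
    have h1 := (hL v hv.1 hv.2 (z.im - v.im) (by
      refine lt_of_le_of_lt ?_ hvr'
      rw [abs_sub_comm]; simpa using Complex.abs_im_le_norm (v - z))).2
    have h2 := (hL z hz.1 hz.2 (v.re - z.re) (by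
      refine lt_of_le_of_lt ?_ hvr'
      simpa using Complex.abs_re_le_norm (v - z))).1
    have e : v + ((z.im - v.im : ℝ) : ℂ) * Complex.I = z + ((v.re - z.re : ℝ) : ℂ) := by
      apply Complex.ext <;> simp
    rw [e] at h1
    have : f v - f z = -(f (z + ((v.re - z.re : ℝ) : ℂ)) - f v) + (f (z + ((v.re - z.re : ℝ) : ℂ)) - f z) := by
      ring
    rw [this]
    refine (norm_add_le _ _).trans ?_
    rw [norm_neg]
    exact add_le_add h1 h2
  have hcD : ContinuousOn f (Metric.ball z0 r \ P) := fun z hz =>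
    (hd z hz.1 hz.2).continuousAt.continuousWithinAt
  classical
  set f' : ℂ → ℂ := (Metric.ball z0 r).indicator f with hf'
  have hf'm : Measurable f' := by
    have e : f' = fun z => (P ∩ Metric.ball z0 r).piecewise f 0 z +
        (Metric.ball z0 r \ P).piecewise f 0 z := by
      funext z
      by_cases h1 : z ∈ Metric.ball z0 r <;> by_cases h2 : z ∈ P <;>
        simp only [hf', Set.indicator, Set.piecewise, Set.mem_inter_iff, Set.mem_sdiff, h1, h2] <;> simp
    rw [e]
    exact (hcP.measurable_piecewise continuousOn_const
      (hP.measurableSet.inter Metric.isOpen_ball.measurableSet)).add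
      (hcD.measurable_piecewise continuousOn_const
        (Metric.isOpen_ball.measurableSet.diff hP.measurableSet))
  have hf'b : ∀ z, ‖f' z‖ ≤ C := by
    intro z
    by_cases h : z ∈ Metric.ball z0 r
    · rw [hf', Set.indicator_of_mem h]; exact hb z h
    · rw [hf', Set.indicator_of_notMem h]; simpa using hC
  obtain ⟨A1, hA1⟩ : ∃ v : ℝ, v = z0.re - r / 4 := ⟨_, rfl⟩
  obtain ⟨B1, hB1⟩ : ∃ v : ℝ, v = z0.re + r / 4 := ⟨_, rfl⟩
  obtain ⟨A2, hA2⟩ : ∃ v : ℝ, v = z0.im - r / 4 := ⟨_, rfl⟩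
  obtain ⟨B2, hB2⟩ : ∃ v : ℝ, v = z0.im + r / 4 := ⟨_, rfl⟩
  have hbox : ∀ x ∈ Set.Icc A1 B1, ∀ y ∈ Set.Icc A2 B2, (x + y * Complex.I : ℂ) ∈ Metric.ball z0 r := by
    intro x hx y hy
    rw [Metric.mem_ball, dist_eq_norm]
    refine (Complex.norm_le_abs_re_add_abs_im _).trans_lt ?_
    have h1 : |x - z0.re| ≤ r / 4 := by
      rw [abs_le]; constructor <;> [linarith [hx.1]; linarith [hx.2]]
    have h2 : |y - z0.im| ≤ r / 4 := by
      rw [abs_le]; constructor <;> [linarith [hy.1]; linarith [hy.2]]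
    simp
    linarith
  have hemb : Continuous (fun p : ℝ × ℝ => (p.1 + p.2 * Complex.I : ℂ)) := by fun_prop
  set S : Set (ℝ × ℝ) := (Set.Icc A1 B1 ×ˢ Set.Icc A2 B2) ∩
    (fun p : ℝ × ℝ => (p.1 + p.2 * Complex.I : ℂ)) ⁻¹' P with hS
  have hSc : IsClosed S := (isClosed_Icc.prod isClosed_Icc).inter (hP.preimage hemb)
  have hgN : ∀ z ∈ P, z ∈ Metric.ball z0 r → ‖g z‖ ≤ N := by
    intro z hz hzb
    refine (hgx z hzb).le_of_lip' hN ?_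
    filter_upwards [Metric.ball_mem_nhds (0 : ℝ) hr] with t ht
    have := (hL z hz hzb t (by simpa using ht)).1
    simpa using this
  set D : ℝ → ℝ → ℂ := fun x y => S.indicator (fun p : ℝ × ℝ => g (p.1 + p.2 * Complex.I)) (x, y) with hD
  have hmemS : ∀ p ∈ S, (p.1 + p.2 * Complex.I : ℂ) ∈ Metric.ball z0 r := fun p hp =>
    hbox _ hp.1.1 _ hp.1.2
  have hDm : Measurable (Function.uncurry D) := by
    have hsm : ∀ n : ℕ, Measurable (fun p : ℝ × ℝ => S.indicator (fun p : ℝ × ℝ =>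
        ((1 / ((n : ℝ) + 1) : ℝ) : ℂ)⁻¹ * (f' ((p.1 + p.2 * Complex.I) + ((1 / ((n : ℝ) + 1) : ℝ) : ℂ)) -
          f' (p.1 + p.2 * Complex.I))) p) := by
      intro n
      refine Measurable.indicator ?_ hSc.measurableSet
      refine Measurable.const_mul (Measurable.sub ?_ ?_) _
      · exact hf'm.comp (hemb.add continuous_const).measurable
      · exact hf'm.comp hemb.measurable
    refine measurable_of_tendsto_metrizable hsm ?_
    rw [tendsto_pi_nhds]
    rintro ⟨x, y⟩
    by_cases hp : (x, y) ∈ S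
    swap
    · simp only [Function.uncurry, hD, Set.indicator_of_notMem hp]; exact tendsto_const_nhds
    simp only [Function.uncurry, hD, Set.indicator_of_mem hp]
    have hzb := hmemS _ hp
    simp only at hzb
    have hder := hgx _ hzb
    rw [hasDerivAt_iff_tendsto_slope_zero] at hder
    have hseq : Tendsto (fun n : ℕ => 1 / ((n : ℝ) + 1)) atTop (𝓝[≠] 0) := by
      rw [tendsto_nhdsWithin_iff]
      exact ⟨tendsto_one_div_add_atTop_nhds_zero_nat, Eventually.of_forall fun n => by
        simp only [Set.mem_compl_iff, Set.mem_singleton_iff]; positivity⟩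
    have h2 := hder.comp hseq
    refine h2.congr' ?_
    have h3 : Tendsto (fun n : ℕ => (x + y * Complex.I : ℂ) + ((1 / ((n : ℝ) + 1) : ℝ) : ℂ)) atTop
        (𝓝 (x + y * Complex.I)) := by
      have := (Complex.continuous_ofReal.tendsto 0).comp tendsto_one_div_add_atTop_nhds_zero_nat
      simpa using this.const_add (x + y * Complex.I : ℂ)
    filter_upwards [h3 (Metric.isOpen_ball.mem_nhds hzb)] with n hn
    have hn : (x + y * Complex.I : ℂ) + ((1 / ((n : ℝ) + 1) : ℝ) : ℂ) ∈ Metric.ball z0 r := hn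
    rw [hf', Set.indicator_of_mem hn, Set.indicator_of_mem hzb]
    simp only [Function.comp, zero_add, Complex.ofReal_zero, add_zero]
    rw [Complex.real_smul, Complex.ofReal_inv]
  have hsep : LMSep (fun x y => f (x + y * Complex.I)) A1 B1 A2 B2 C := by
    refine ⟨fun y hy x hx => ?_, fun x hx y hy => ?_, fun x hx y hy => hb _ (hbox x hx y hy)⟩
    · exact (lm_shift_x (hgx _ (hbox x hx y hy))).continuousAt.continuousWithinAt
    · exact (lm_shift_y (hgy _ (hbox x hx y hy))).continuousAt.continuousWithinAt
  have hdata : LMData f S D A1 B1 A2 B2 C N N := by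
    refine ⟨hsep, hSc, hN, ?_, ?_, ?_, ?_, ?_, hDm.stronglyMeasurable, ?_, ?_⟩
    · intro x y hxy hx hy t ht
      have := (hL _ hxy.2 (hbox x hx y hy) (t - y) (by
        rw [abs_lt]; constructor <;> linarith [hy.1, hy.2, ht.1, ht.2])).2
      convert this using 4
      push_cast; ring
    · intro x y hxy hx hy t ht
      have := (hL _ hxy.2 (hbox x hx y hy) (t - x) (by
        rw [abs_lt]; constructor <;> linarith [hx.1, hx.2, ht.1, ht.2])).1
      convert this using 4
      push_cast; ring
    · intro x y hxy hx hy
      simp only [hD, Set.indicator_of_mem hxy]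
      exact lm_shift_x (hgx _ (hbox x hx y hy))
    · intro x y hxy hx hy
      simp only [hD, Set.indicator_of_mem hxy]
      exact lm_shift_y (hgy _ (hbox x hx y hy))
    · intro x y hxy
      simp only [hD, Set.indicator_of_notMem hxy]
    · intro x y
      by_cases hxy : (x, y) ∈ S
      · simp only [hD, Set.indicator_of_mem hxy]
        exact hgN _ hxy.2 (hmemS _ hxy)
      · simp only [hD, Set.indicator_of_notMem hxy]; simpa using hN
    · intro x y hxy hx hy
      refine hd _ (hbox x hx y hy) fun h => hxy ⟨⟨hx, hy⟩, h⟩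
  refine lm_morera (G := fun x y => f' (x + y * Complex.I)) hsep
    (hf'm.comp hemb.measurable).stronglyMeasurable (fun x y => hf'b _) ?_
    (fun a b c d hab hcd ha hb hc hd => hdata.zero hab hcd ha hb hc hd) ?_
  · intro x hx y hy
    rw [hf']; exact Set.indicator_of_mem (hbox x hx y hy) _
  · intro z hz
    have hz' : ‖z - z0‖ < r / 4 := by simpa [dist_eq_norm] using hz
    have h1 := (Complex.abs_re_le_norm (z - z0)).trans_lt hz'
    have h2 := (Complex.abs_im_le_norm (z - z0)).trans_lt hz'
    rw [abs_lt] at h1 h2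
    simp only [Complex.sub_re, Complex.sub_im] at h1 h2
    exact ⟨⟨by linarith [h1.1], by linarith [h1.2]⟩, ⟨by linarith [h2.1], by linarith [h2.2]⟩⟩


/-- pointwise Lipschitz condition at scale `δ` -/
def LMLip (f : ℂ → ℂ) (U : Set ℂ) (δ N : ℝ) (z : ℂ) : Prop :=
  Metric.ball z δ ⊆ U ∧ ∀ t : ℝ, |t| < δ →
      ‖f (z + t) - f z‖ ≤ N * |t| ∧ ‖f (z + t * Complex.I) - f z‖ ≤ N * |t|

theorem LMLip.limit {f : ℂ → ℂ} {U : Set ℂ} {δ N : ℝ} {u : ℕ → ℂ} {z : ℂ} (hδ : 0 < δ)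
    (hx : ∀ z ∈ U, ContinuousAt (fun t : ℝ => f (z + t)) 0)
    (hy : ∀ z ∈ U, ContinuousAt (fun t : ℝ => f (z + t * Complex.I)) 0)
    (hu : ∀ m, LMLip f U δ N (u m)) (hlim : Tendsto u atTop (𝓝 z)) : LMLip f U δ N z := by
  have hsub : Metric.ball z δ ⊆ U := by
    intro w hw
    have h1 : Tendsto (fun m => dist w (u m)) atTop (𝓝 (dist w z)) := tendsto_const_nhds.dist hlim
    obtain ⟨m, hm⟩ := (h1.eventually (gt_mem_nhds (Metric.mem_ball.1 hw))).exists
    exact (hu m).1 hm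
  have hzU : z ∈ U := hsub (Metric.mem_ball_self hδ)
  set a : ℕ → ℝ := fun m => (u m - z).re with ha
  set b : ℕ → ℝ := fun m => (u m - z).im with hb
  have hsubz : Tendsto (fun m => u m - z) atTop (𝓝 0) := by simpa using hlim.sub_const z
  have ha0 : Tendsto a atTop (𝓝 0) := by
    have h := (Complex.continuous_re.tendsto 0).comp hsubz
    rw [Complex.zero_re] at h
    exact h
  have hb0 : Tendsto b atTop (𝓝 0) := by
    have h := (Complex.continuous_im.tendsto 0).comp hsubz
    rw [Complex.zero_im] at h
    exact h
  have eu : ∀ m, u m = z + a m + b m * Complex.I := by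
    intro m; apply Complex.ext <;> simp [ha, hb]
  have hf : Tendsto (fun m => f (u m)) atTop (𝓝 (f z)) := by
    have h1 : Tendsto (fun m => f (z + a m)) atTop (𝓝 (f z)) := by
      have := (hx z hzU).tendsto.comp ha0
      simp only [Complex.ofReal_zero, add_zero] at this
      exact this
    have h2 : Tendsto (fun m => f (u m) - f (z + a m)) atTop (𝓝 0) := by
      have h3 : Tendsto (fun m => N * |-b m|) atTop (𝓝 0) := by
        simpa using (hb0.neg.abs.const_mul N)
      refine squeeze_zero_norm' ?_ h3
      have h4 : Tendsto (fun m => |-b m|) atTop (𝓝 0) := by simpa using hb0.neg.abs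
      filter_upwards [h4.eventually (gt_mem_nhds hδ)] with m hm
      have := ((hu m).2 (-b m) hm).2
      have e : u m + ((-b m : ℝ) : ℂ) * Complex.I = z + a m := by
        rw [eu m]; push_cast; ring
      rw [e, norm_sub_rev] at this
      exact this
    simpa using h2.add h1
  refine ⟨hsub, fun t ht => ⟨?_, ?_⟩⟩
  · have hzt : z + t ∈ U := hsub (by simpa [dist_eq_norm] using ht)
    have h1 : Tendsto (fun m => f (u m + ((t - a m : ℝ) : ℂ))) atTop (𝓝 (f (z + t))) := by
      have h2 := (hy _ hzt).tendsto.comp hb0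
      simp only [Complex.ofReal_zero, zero_mul, add_zero] at h2
      refine h2.congr fun m => ?_
      simp only [Function.comp]
      rw [eu m]; congr 1; push_cast; ring
    have h3 : Tendsto (fun m => |t - a m|) atTop (𝓝 |t|) := by
      simpa using (ha0.const_sub t).abs
    refine le_of_tendsto_of_tendsto (h1.sub hf).norm (h3.const_mul N) ?_
    filter_upwards [h3.eventually (gt_mem_nhds ht)] with m hm
    exact ((hu m).2 _ hm).1
  · have hzt : z + t * Complex.I ∈ U := hsub (by simpa [dist_eq_norm] using ht)
    have h1 : Tendsto (fun m => f (u m + ((t - b m : ℝ) : ℂ) * Complex.I)) atTop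
        (𝓝 (f (z + t * Complex.I))) := by
      have h2 := (hx _ hzt).tendsto.comp ha0
      simp only [Complex.ofReal_zero, add_zero] at h2
      refine h2.congr fun m => ?_
      simp only [Function.comp]
      rw [eu m]; congr 1; push_cast; ring
    have h3 : Tendsto (fun m => |t - b m|) atTop (𝓝 |t|) := by
      simpa using (hb0.const_sub t).abs
    refine le_of_tendsto_of_tendsto (h1.sub hf).norm (h3.const_mul N) ?_
    filter_upwards [h3.eventually (gt_mem_nhds ht)] with m hm
    exact ((hu m).2 _ hm).2

theorem lm_bigO {u : ℝ → ℂ} {g : ℂ} (h : HasDerivAt u g 0) :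
    ∃ c ε : ℝ, 0 < ε ∧ ∀ t : ℝ, |t| < ε → ‖u t - u 0‖ ≤ c * |t| := by
  obtain ⟨c, hc⟩ := h.isBigO_sub.bound
  obtain ⟨ε, hε, hb⟩ := Metric.eventually_nhds_iff.1 hc
  refine ⟨c, ε, hε, fun t ht => ?_⟩
  have := @hb t (by simpa using ht)
  simpa using this

theorem lm_tolstov {f : ℂ → ℂ} {U : Set ℂ} (hU : IsOpen U)
    (hb : ∀ z ∈ U, ∃ r > (0 : ℝ), ∃ C : ℝ, ∀ w ∈ Metric.ball z r, ‖f w‖ ≤ C)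
    (hg : ∀ z ∈ U, ∃ g : ℂ, HasDerivAt (fun t : ℝ => f (z + t)) g 0 ∧
      HasDerivAt (fun t : ℝ => f (z + t * Complex.I)) (Complex.I * g) 0) :
    DifferentiableOn ℂ f U := by
  have hg' : ∀ z : ℂ, ∃ g : ℂ, z ∈ U → HasDerivAt (fun t : ℝ => f (z + t)) g 0 ∧
      HasDerivAt (fun t : ℝ => f (z + t * Complex.I)) (Complex.I * g) 0 := by
    intro z
    by_cases h : z ∈ U
    · obtain ⟨g, h⟩ := hg z h
      exact ⟨g, fun _ => h⟩
    · exact ⟨0, fun h' => absurd h' h⟩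
  choose g hg using hg'
  set P : Set ℂ := {z | ∀ᶠ w in 𝓝 z, DifferentiableAt ℂ f w}ᶜ with hPd
  have hP : IsClosed P := isOpen_setOfPred_eventually_nhds.isClosed_compl
  by_contra hcon
  have hne : (P ∩ U).Nonempty := by
    by_contra h
    apply hcon
    intro z hz
    have h1 : z ∉ P := fun h2 => h ⟨z, h2, hz⟩
    have h2 : ∀ᶠ w in 𝓝 z, DifferentiableAt ℂ f w := by
      by_contra h3; exact h1 h3
    exact h2.self_of_nhds.differentiableWithinAt
  have hlc : IsLocallyClosed (P ∩ U) := hP.isLocallyClosed.inter hU.isLocallyClosed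
  have : LocallyCompactSpace (P ∩ U : Set ℂ) := hlc.locallyCompactSpace
  have : Nonempty (P ∩ U : Set ℂ) := hne.to_subtype
  set F : ℕ → Set (P ∩ U : Set ℂ) := fun n =>
    {z | LMLip f U (1 / ((n : ℝ) + 1)) ((n : ℝ) + 1) z} with hF
  have hcl : ∀ n, IsClosed (F n) := by
    intro n
    apply IsSeqClosed.isClosed
    intro u z hu hlim
    exact LMLip.limit (u := fun m => (u m : ℂ)) (by positivity)
      (fun z hz => (hg z hz).1.continuousAt) (fun z hz => (hg z hz).2.continuousAt)
      (fun m => hu m) ((continuous_subtype_val.tendsto z).comp hlim)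
  have hun : ⋃ n, F n = Set.univ := by
    rw [Set.eq_univ_iff_forall]
    rintro ⟨z, hzP, hzU⟩
    rw [Set.mem_iUnion]
    obtain ⟨c1, ε1, h1, hb1⟩ := lm_bigO (hg z hzU).1
    obtain ⟨c2, ε2, h2, hb2⟩ := lm_bigO (hg z hzU).2
    obtain ⟨ε3, h3, hb3⟩ := Metric.isOpen_iff.1 hU z hzU
    obtain ⟨n1, hn1⟩ := exists_nat_ge (max c1 c2)
    obtain ⟨n2, hn2⟩ := exists_nat_one_div_lt (lt_min (lt_min h1 h2) h3)
    refine ⟨max n1 n2, ?_⟩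
    have hm1 : (n1 : ℝ) ≤ ((max n1 n2 : ℕ) : ℝ) := by exact_mod_cast le_max_left _ _
    have hm2 : (n2 : ℝ) ≤ ((max n1 n2 : ℕ) : ℝ) := by exact_mod_cast le_max_right _ _
    have hlt : 1 / (((max n1 n2 : ℕ) : ℝ) + 1) < min (min ε1 ε2) ε3 := by
      refine lt_of_le_of_lt ?_ hn2
      apply one_div_le_one_div_of_le (by positivity); linarith
    have hlt3 := hlt.trans_le (min_le_right _ _)
    have hlt1 := hlt.trans_le ((min_le_left _ _).trans (min_le_left _ _))
    have hlt2 := hlt.trans_le ((min_le_left _ _).trans (min_le_right _ _))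
    refine ⟨(Metric.ball_subset_ball hlt3.le).trans hb3, fun t ht => ⟨?_, ?_⟩⟩
    · have := hb1 t (ht.trans hlt1)
      simp only [Complex.ofReal_zero, add_zero] at this
      refine this.trans (mul_le_mul_of_nonneg_right ?_ (abs_nonneg t))
      linarith [le_max_left c1 c2]
    · have := hb2 t (ht.trans hlt2)
      simp only [Complex.ofReal_zero, add_zero, zero_mul] at this
      refine this.trans (mul_le_mul_of_nonneg_right ?_ (abs_nonneg t))
      linarith [le_max_right c1 c2]
  obtain ⟨n, z0, hz0⟩ := nonempty_interior_of_iUnion_of_closed hcl hun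
  obtain ⟨ρ, hρ, hball⟩ := Metric.mem_nhds_iff.1 (mem_interior_iff_mem_nhds.1 hz0)
  obtain ⟨rb, hrb, C, hC⟩ := hb z0 z0.2.2
  have hδ : (0 : ℝ) < 1 / ((n : ℝ) + 1) := by positivity
  set r := min (min ρ (1 / ((n : ℝ) + 1))) rb with hr
  have hr0 : 0 < r := lt_min (lt_min hρ hδ) hrb
  have hr1 : r ≤ ρ := (min_le_left _ _).trans (min_le_left _ _)
  have hr2 : r ≤ 1 / ((n : ℝ) + 1) := (min_le_left _ _).trans (min_le_right _ _)
  have hr3 : r ≤ rb := min_le_right _ _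
  have hz0F : LMLip f U (1 / ((n : ℝ) + 1)) ((n : ℝ) + 1) z0 := by
    have h : z0 ∈ F n := interior_subset hz0
    exact h
  have hbU : Metric.ball (z0 : ℂ) r ⊆ U := (Metric.ball_subset_ball hr2).trans hz0F.1
  have hfin : DifferentiableOn ℂ f (Metric.ball (z0 : ℂ) (r / 4)) := by
    refine lm_local (g := g) (P := P) (C := C) (N := (n : ℝ) + 1) hr0 (by positivity)
      (fun z hz => hC z (Metric.ball_subset_ball hr3 hz)) (fun z hz => (hg z (hbU hz)).1)
      (fun z hz => (hg z (hbU hz)).2) hP ?_ ?_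
    · intro z hz hzP
      have h2 : ∀ᶠ w in 𝓝 z, DifferentiableAt ℂ f w := by
        by_contra h3; exact hzP h3
      exact h2.self_of_nhds
    · intro z hzP hz t ht
      have : (⟨z, hzP, hbU hz⟩ : (P ∩ U : Set ℂ)) ∈ F n := hball (by
        rw [Metric.mem_ball, Subtype.dist_eq]
        exact (Metric.mem_ball.1 hz).trans_le hr1)
      exact this.2 t (ht.trans_le hr2)
  apply z0.2.1
  change ∀ᶠ w in 𝓝 (z0 : ℂ), DifferentiableAt ℂ f w
  filter_upwards [Metric.ball_mem_nhds (z0 : ℂ) (by positivity : 0 < r / 4)] with w hw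
  exact hfin.differentiableAt (Metric.isOpen_ball.mem_nhds hw)


/-- linear one-sided directional derivatives give two-sided ones -/
theorem lm_two_sided {E : Type*} [NormedAddCommGroup E] [NormedSpace ℝ E] {f : E → ℂ} {ζ : E}
    {φ : E →L[ℝ] ℂ} {g : ℂ}
    (hg : ∀ h : E, Tendsto (fun δ : ℝ => δ⁻¹ • (f (ζ + δ • h) - f ζ)) (𝓝[>] (0 : ℝ)) (𝓝 (φ h * g)))
    (h : E) : HasDerivAt (fun t : ℝ => f (ζ + t • h)) (φ h * g) 0 := by
  rw [hasDerivAt_iff_tendsto_slope_zero]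
  simp only [zero_add, zero_smul, add_zero]
  rw [← Set.Iio_union_Ioi, nhdsWithin_union, tendsto_sup]
  refine ⟨?_, hg h⟩
  have h1 : Tendsto (fun t : ℝ => -t) (𝓝[<] 0) (𝓝[>] 0) := by
    simpa using tendsto_neg_nhdsLT_neg (a := (0 : ℝ))
  have h2 := ((hg (-h)).comp h1).neg
  have e : -(φ (-h) * g) = φ h * g := by rw [map_neg]; ring
  rw [e] at h2
  refine h2.congr fun t => ?_
  simp only [Function.comp, smul_neg, neg_smul, neg_neg, inv_neg]

theorem lm_dir {E : Type*} [NormedAddCommGroup E] [NormedSpace ℝ E] {f : E → ℂ} {ζ h : E} {s : ℝ} {c : ℂ}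
    (hd : HasDerivAt (fun t : ℝ => f ((ζ + s • h) + t • h)) c 0) :
    HasDerivAt (fun t : ℝ => f (ζ + t • h)) c s := by
  have h2 : HasDerivAt (fun t : ℝ => t - s) 1 s := (hasDerivAt_id s).sub_const s
  have h3 : HasDerivAt (fun t : ℝ => f ((ζ + s • h) + t • h)) c (s - s) := by
    rw [sub_self]; exact hd
  have h4 := HasDerivAt.scomp (h := fun t : ℝ => t - s) s h3 h2
  rw [one_smul] at h4
  refine h4.congr_of_eventuallyEq (Eventually.of_forall fun t => ?_)
  simp only [Function.comp]
  congr 1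
  rw [sub_smul]; abel

theorem lm_scalar {E : Type*} [NormedAddCommGroup E] [NormedSpace ℝ E] (φ : E →L[ℝ] ℂ)
    (hφ : Function.Surjective φ) {f : E → ℂ} {Ω : Set E} (hΩ : IsOpen Ω)
    (hb : ∀ ζ ∈ Ω, ∃ r > (0 : ℝ), ∃ C : ℝ, ∀ z ∈ Metric.ball ζ r, ‖f z‖ ≤ C)
    (hg : ∀ ζ ∈ Ω, ∃ g : ℂ, ∀ h : E,
      Tendsto (fun δ : ℝ => δ⁻¹ • (f (ζ + δ • h) - f ζ)) (𝓝[>] (0 : ℝ)) (𝓝 (φ h * g)))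
    {ζ0 : E} (h0 : ζ0 ∈ Ω) :
    ∃ F : ℂ → ℂ, ∃ ρ > (0 : ℝ), DifferentiableOn ℂ F (Metric.ball (φ ζ0) ρ) ∧
      ∀ᶠ ζ in 𝓝 ζ0, f ζ = F (φ ζ) := by
  obtain ⟨σ', hσ'⟩ := LinearMap.exists_rightInverse_of_surjective (φ : E →ₗ[ℝ] ℂ)
    (LinearMap.range_eq_top.2 hφ)
  set σ : ℂ →L[ℝ] E := LinearMap.toContinuousLinearMap σ' with hσd
  have hσ : ∀ w, φ (σ w) = w := fun w => LinearMap.congr_fun hσ' w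
  obtain ⟨R, hR, hball⟩ := Metric.isOpen_iff.1 hΩ ζ0 h0
  set p : ℂ → E := fun w => ζ0 + σ (w - φ ζ0) with hp
  have hpc : Continuous p := by fun_prop
  have hp0 : p (φ ζ0) = ζ0 := by simp [hp]
  set U : Set ℂ := p ⁻¹' Metric.ball ζ0 R with hUd
  have hU : IsOpen U := Metric.isOpen_ball.preimage hpc
  have hdiff : DifferentiableOn ℂ (fun w => f (p w)) U := by
    apply lm_tolstov hU
    · intro z hz
      obtain ⟨r, hr, C, hC⟩ := hb (p z) (hball hz)
      obtain ⟨r', hr', hs⟩ := Metric.mem_nhds_iff.1 (hpc.continuousAt (Metric.ball_mem_nhds (p z) hr))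
      exact ⟨r', hr', C, fun w hw => hC _ (hs hw)⟩
    · intro z hz
      obtain ⟨g, hg⟩ := hg (p z) (hball hz)
      refine ⟨g, ?_, ?_⟩
      · have := lm_two_sided hg (σ 1)
        rw [hσ, one_mul] at this
        refine this.congr_of_eventuallyEq (Eventually.of_forall fun t => ?_)
        have e : (z + t - φ ζ0 : ℂ) = (z - φ ζ0) + t • (1 : ℂ) := by
          rw [Complex.real_smul]; ring
        simp only [hp]
        rw [e, map_add, map_smul, add_assoc]
      · have := lm_two_sided hg (σ Complex.I)
        rw [hσ] at this
        refine this.congr_of_eventuallyEq (Eventually.of_forall fun t => ?_)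
        have e : (z + t * Complex.I - φ ζ0 : ℂ) = (z - φ ζ0) + t • Complex.I := by
          rw [Complex.real_smul]; ring
        simp only [hp]
        rw [e, map_add, map_smul, add_assoc]
  have hmem : φ ζ0 ∈ U := by
    change p (φ ζ0) ∈ Metric.ball ζ0 R
    rw [hp0]; exact Metric.mem_ball_self hR
  obtain ⟨ρ, hρ, hρU⟩ := Metric.isOpen_iff.1 hU _ hmem
  refine ⟨fun w => f (p w), ρ, hρ, hdiff.mono hρU, ?_⟩
  have hev : ∀ᶠ ζ in 𝓝 ζ0, φ ζ ∈ U := φ.continuous.continuousAt (hU.mem_nhds hmem)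
  filter_upwards [hev, Metric.ball_mem_nhds ζ0 hR] with ζ h1 h2
  set h : E := p (φ ζ) - ζ with hh
  have hφh : φ h = 0 := by
    simp only [hh, hp, map_sub, map_add, hσ]; ring
  have hseg : ∀ s ∈ Set.Icc (0 : ℝ) 1, ζ + s • h ∈ Metric.ball ζ0 R := by
    intro s hs
    exact (convex_ball ζ0 R).add_smul_sub_mem h2 h1 hs
  have hder : ∀ s ∈ Set.Icc (0 : ℝ) 1, HasDerivAt (fun t : ℝ => f (ζ + t • h)) 0 s := by
    intro s hs
    obtain ⟨g, hg⟩ := hg _ (hball (hseg s hs))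
    have := lm_two_sided hg h
    rw [hφh, zero_mul] at this
    exact lm_dir this
  have := constant_of_has_deriv_right_zero (f := fun t : ℝ => f (ζ + t • h)) (a := 0) (b := 1)
    (fun s hs => (hder s hs).continuousAt.continuousWithinAt)
    (fun s hs => (hder s (Set.Ico_subset_Icc_self hs)).hasDerivWithinAt) 1 (by simp)
  simp only [one_smul, zero_smul, add_zero] at this
  rw [← this, hh]; congr 1; abel


theorem lm_norm_pow {A : Type*} [NormedCommRing A] (x : A) (n : ℕ) : ‖x ^ n‖ ≤ ‖(1 : A)‖ * ‖x‖ ^ n := by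
  induction n with
  | zero => simp
  | succ k ih =>
    rw [pow_succ, pow_succ, ← mul_assoc]
    exact (norm_mul_le _ _).trans (mul_le_mul_of_nonneg_right ih (norm_nonneg _))

theorem lm_lift {A : Type*} [NormedCommRing A] [NormedAlgebra ℂ A] [CompleteSpace A]
    (φ : A →ₐ[ℂ] ℂ) (hφ : Continuous φ) {F : ℂ → ℂ} {z0 : A} {ρ : ℝ} (hρ : 0 < ρ)
    (hF : DifferentiableOn ℂ F (Metric.ball (φ z0) ρ)) :
    ∃ G : A → A, ∀ᶠ z in 𝓝 z0, φ (G z) = F (φ z) ∧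
      ∃ L : A →L[ℂ] A, HasFDerivAt G L z ∧ ∀ h, L h = h * L 1 := by
  have han : AnalyticAt ℂ F (φ z0) := hF.analyticAt (Metric.ball_mem_nhds _ hρ)
  obtain ⟨p, R, hp⟩ := han
  obtain ⟨s, hs0, hsR⟩ := ENNReal.lt_iff_exists_nnreal_btwn.1 hp.r_pos
  have hs0' : 0 < (s : ℝ) := by exact_mod_cast hs0
  obtain ⟨M, hM, hbd⟩ := p.norm_mul_pow_le_of_lt_radius (hsR.trans_le hp.r_le)
  set c : ℕ → ℂ := p.coeff with hc
  have hcb : ∀ n, ‖c n‖ * (s : ℝ) ^ n ≤ M := by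
    intro n
    have : ‖c n‖ ≤ ‖p n‖ := by
      rw [hc, FormalMultilinearSeries.norm_apply_eq_norm_coef]
    exact (mul_le_mul_of_nonneg_right this (by positivity)).trans (hbd n)
  set r : ℝ := s / 2 with hr
  have hr0 : 0 < r := by positivity
  set f : ℕ → A → A := fun n z => c n • (z - z0) ^ n with hf
  set f' : ℕ → A → A →L[ℂ] A := fun n z =>
    ContinuousLinearMap.mul ℂ A (c n • ((n : A) * (z - z0) ^ (n - 1))) with hf'
  set K : ℝ := ‖(1 : A)‖ with hK
  set u : ℕ → ℝ := fun n => K * (M / r) * (n * (1 / 2 : ℝ) ^ n) with hu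
  have hsum : Summable u := by
    refine Summable.mul_left _ ?_
    simpa using summable_pow_mul_geometric_of_norm_lt_one (R := ℝ) 1 (r := 1 / 2) (by norm_num)
  have hder : ∀ n z, z ∈ Metric.ball z0 r → HasFDerivAt (f n) (f' n z) z := by
    intro n z _
    have h1 : HasFDerivAt (fun z : A => z - z0) (ContinuousLinearMap.id ℂ A) z :=
      (hasFDerivAt_id z).sub_const z0
    have h2 := (h1.pow n).const_smul (c n)
    refine h2.congr_fderiv ?_
    ext h
    simp [hf', mul_assoc]
  have hbound : ∀ n z, z ∈ Metric.ball z0 r → ‖f' n z‖ ≤ u n := by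
    intro n z hz
    have hz' : ‖z - z0‖ ≤ r := by simpa [dist_eq_norm] using (Metric.mem_ball.1 hz).le
    rcases n with _ | n
    · simp [hf', hu]
    have h1 : ‖f' (n + 1) z‖ ≤ ‖c (n + 1) • (((n + 1 : ℕ) : A) * (z - z0) ^ n)‖ :=
      ContinuousLinearMap.opNorm_mul_apply_le ℂ A _
    refine h1.trans ?_
    rw [norm_smul, ← nsmul_eq_mul]
    have h2 : ‖(n + 1) • (z - z0) ^ n‖ ≤ (n + 1 : ℕ) * (K * r ^ n) := by
      refine (norm_nsmul_le).trans ?_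
      gcongr
      exact (lm_norm_pow _ _).trans (by gcongr)
    have h3 := hcb (n + 1)
    have hsr : (s : ℝ) = 2 * r := by rw [hr]; ring
    rw [hsr] at h3
    calc ‖c (n + 1)‖ * ‖(n + 1) • (z - z0) ^ n‖ ≤ ‖c (n + 1)‖ * ((n + 1 : ℕ) * (K * r ^ n)) := by gcongr
      _ = (‖c (n + 1)‖ * (2 * r) ^ (n + 1)) * (K / r * ((n + 1 : ℕ) * (1 / 2 : ℝ) ^ (n + 1))) := by
        rw [mul_pow, pow_succ r, one_div, inv_pow]
        field_simp
      _ ≤ M * (K / r * ((n + 1 : ℕ) * (1 / 2 : ℝ) ^ (n + 1))) := by gcongr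
      _ = u (n + 1) := by simp only [hu]; ring
  have hz0m : z0 ∈ Metric.ball z0 r := Metric.mem_ball_self hr0
  have hpre : IsPreconnected (Metric.ball z0 r) := by
    let _ : NormedSpace ℝ A := NormedSpace.restrictScalars ℝ ℂ A
    exact (convex_ball z0 r).isPreconnected
  have hs0sum : Summable (fun n => f n z0) := by
    refine summable_of_ne_finset_zero (s := {0}) fun n hn => ?_
    have : n ≠ 0 := by simpa using hn
    simp [hf, this]
  refine ⟨fun z => ∑' n, f n z, ?_⟩
  have hev : ∀ᶠ z in 𝓝 z0, φ z ∈ Metric.eball (φ z0) R :=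
    hφ.continuousAt (Metric.isOpen_eball.mem_nhds (Metric.mem_eball_self hp.r_pos))
  filter_upwards [hev, Metric.ball_mem_nhds z0 hr0] with z hz1 hz2
  have hfs : Summable (fun n => f n z) :=
    summable_of_summable_hasFDerivAt_of_isPreconnected hsum Metric.isOpen_ball hpre hder hbound hz0m
      hs0sum hz2
  refine ⟨?_, ∑' n, f' n z, ?_, ?_⟩
  · have h1 : HasSum (fun n => φ (f n z)) (φ (∑' n, f n z)) := hfs.hasSum.map φ hφ
    have h2 := hp.hasSum_sub hz1
    refine h1.unique (h2.congr_fun ?_)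
    intro n
    simp [hf, hc, FormalMultilinearSeries.apply_eq_pow_smul_coeff, mul_comm]
  · exact hasFDerivAt_tsum_of_isPreconnected hsum Metric.isOpen_ball hpre hder hbound hz0m
      hs0sum hz2
  · intro h
    have hm : ∀ n h, f' n z h = h * f' n z 1 := by
      intro n h
      simp [hf', mul_comm]
    have hs' : Summable (fun n => f' n z) := Summable.of_norm_bounded hsum fun n => hbound n z hz2
    clear_value f'
    have h1 : ∀ h, (∑' n, f' n z) h = ∑' n, f' n z h := by
      intro h
      have h3 := hs'.hasSum.mapL (ContinuousLinearMap.apply ℂ A h)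
      exact h3.tsum_eq.symm
    have h2 : Summable (fun n => f' n z 1) :=
      (hs'.hasSum.mapL (ContinuousLinearMap.apply ℂ A (1 : A))).summable
    rw [h1, h1, ← h2.tsum_mul_left]
    exact tsum_congr fun n => hm n h


theorem lm_coatom {A : Type*} [CommRing A] [Algebra ℂ A] [FiniteDimensional ℂ A] (J : Ideal A)
    (hJ : J ≠ ⊥) :
    ∃ J' : Ideal A, J' < J ∧ ∃ φ : A →ₐ[ℂ] ℂ, ∃ l : A →ₗ[ℂ] ℂ,
      (∀ a, ∀ x ∈ J, l (a * x) = φ a * l x) ∧ (∀ x ∈ J, l x = 0 → x ∈ J') ∧ ∃ x0 ∈ J, l x0 = 1 := by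
  have hNoe : IsNoetherian A A := isNoetherian_of_tower ℂ inferInstance
  have hNR : IsNoetherianRing A := hNoe
  obtain ⟨J', hJ', hmax⟩ := (wellFounded_gt (α := Ideal A)).has_min {I | I < J} ⟨⊥, bot_lt_iff_ne_bot.2 hJ⟩
  have hJ' : J' < J := hJ'
  obtain ⟨x0, hx0, hx0'⟩ := SetLike.exists_of_lt hJ'
  have key : ∀ y ∈ J, y ∉ J' → ∀ x ∈ J, ∃ j ∈ J', ∃ a, x = j + a * y := by
    intro y hy hy' x hx
    have h1 : J' ⊔ Ideal.span {y} = J := by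
      have hle : J' ⊔ Ideal.span {y} ≤ J :=
        sup_le hJ'.le ((Ideal.span_singleton_le_iff_mem J).2 hy)
      by_contra hne
      have hlt : J' ⊔ Ideal.span {y} < J := lt_of_le_of_ne hle hne
      refine hmax _ hlt (lt_of_le_of_ne le_sup_left fun h => hy' ?_)
      rw [h]
      exact (le_sup_right : Ideal.span {y} ≤ J' ⊔ Ideal.span {y}) (Ideal.mem_span_singleton_self y)
    rw [← h1] at hx
    obtain ⟨j, hj, v, hv, rfl⟩ := Submodule.mem_sup.1 hx
    obtain ⟨a, rfl⟩ := Ideal.mem_span_singleton'.1 hv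
    exact ⟨j, hj, a, rfl⟩
  let m : Ideal A := Submodule.comap (LinearMap.toSpanSingleton A A x0) J'
  have hm : ∀ a, a ∈ m ↔ a * x0 ∈ J' := fun a => Iff.rfl
  have hmm : m.IsMaximal := by
    rw [Ideal.isMaximal_iff]
    refine ⟨fun h => hx0' (by simpa using (hm 1).1 h), fun I a hI ha haI => ?_⟩
    obtain ⟨j, hj, b, hb⟩ := key (a * x0) (J.mul_mem_left a hx0) (fun h => ha ((hm a).2 h)) x0 hx0
    have h1 : 1 - b * a ∈ m := by
      rw [hm]
      have : (1 - b * a) * x0 = j := by linear_combination hb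
      rw [this]; exact hj
    have h2 := I.add_mem (hI h1) (I.mul_mem_left b haI)
    simpa using h2
  have hbij : Function.Bijective (algebraMap ℂ (A ⧸ m)) :=
    IsAlgClosed.algebraMap_bijective_of_isIntegral
  let e : ℂ ≃ₐ[ℂ] (A ⧸ m) := AlgEquiv.ofBijective (Algebra.ofId ℂ (A ⧸ m)) hbij
  let φ : A →ₐ[ℂ] ℂ := (e.symm : (A ⧸ m) →ₐ[ℂ] ℂ).comp (Ideal.Quotient.mkₐ ℂ m)
  have hφ : ∀ a, a - algebraMap ℂ A (φ a) ∈ m := by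
    intro a
    rw [← Ideal.Quotient.eq]
    have h1 : e (φ a) = Ideal.Quotient.mk m a := e.apply_symm_apply _
    rw [← h1]
    rfl
  have hφ2 : ∀ a, ∃ j ∈ J', a * x0 = j + φ a • x0 := by
    intro a
    refine ⟨_, (hm _).1 (hφ a), ?_⟩
    rw [Algebra.smul_def]; ring
  obtain ⟨l0, hl0, hl0'⟩ := Submodule.exists_le_ker_of_notMem
    (p := J'.restrictScalars ℂ) (v := x0) (by simpa using hx0')
  let l : A →ₗ[ℂ] ℂ := (l0 x0)⁻¹ • l0
  have hlx0 : l x0 = 1 := by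
    simp [l, inv_mul_cancel₀ hl0]
  have hlJ : ∀ j ∈ J', l j = 0 := by
    intro j hj
    have : l0 j = 0 := hl0' hj
    simp [l, this]
  have hdec : ∀ x ∈ J, ∃ j ∈ J', ∃ t : ℂ, x = j + t • x0 := by
    intro x hx
    obtain ⟨j, hj, a, rfl⟩ := key x0 hx0 hx0' x hx
    obtain ⟨j2, hj2, h2⟩ := hφ2 a
    exact ⟨j + j2, J'.add_mem hj hj2, φ a, by rw [h2, add_assoc]⟩
  refine ⟨J', hJ', φ, l, ?_, ?_, x0, hx0, hlx0⟩
  · intro a x hx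
    obtain ⟨j, hj, t, rfl⟩ := hdec x hx
    obtain ⟨j2, hj2, h2⟩ := hφ2 a
    rw [mul_add, mul_smul_comm, h2]
    simp only [map_add, map_smul, hlJ _ (J'.mul_mem_left a hj), hlJ _ hj, hlJ _ hj2, hlx0, smul_eq_mul]
    ring
  · intro x hx hl
    obtain ⟨j, hj, t, rfl⟩ := hdec x hx
    rw [map_add, map_smul, hlJ j hj, hlx0] at hl
    have : t = 0 := by simpa using hl
    simpa [this] using hj


section HilleAux

variable {A : Type*} [NormedCommRing A] [NormedAlgebra ℂ A] {E : Submodule ℝ A}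

/-- little-o form of Lorch differentiability -/
def HLD (Φ : E → A) (ζ : E) (L : A) : Prop :=
  (fun h : E => Φ (ζ + h) - Φ ζ - (h : A) * L) =o[𝓝 0] (fun h : E => h)

theorem HLD.gateaux {Φ : E → A} {ζ : E} {L : A} (h : HLD Φ ζ L) : GateauxDiffAt Φ ζ L := by
  intro v
  have h1 : Tendsto (fun δ : ℝ => δ • v) (𝓝[>] 0) (𝓝 0) := by
    have : Continuous (fun δ : ℝ => δ • v) := by fun_prop
    have := this.tendsto 0
    rw [zero_smul] at this
    exact this.mono_left nhdsWithin_le_nhds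
  have h2 := h.comp_tendsto h1
  have h3 : ((fun h : E => h) ∘ fun δ : ℝ => δ • v) =O[𝓝[>] 0] (fun δ : ℝ => δ) := by
    refine Asymptotics.IsBigO.of_bound ‖v‖ (Eventually.of_forall fun δ => ?_)
    simp only [Function.comp]
    rw [norm_smul, mul_comm]
  have h4 := (h2.trans_isBigO h3).tendsto_inv_smul_nhds_zero
  have h5 := h4.add_const ((v : A) * L)
  rw [zero_add] at h5
  refine h5.congr' ?_
  filter_upwards [self_mem_nhdsWithin] with δ hδ
  have hδ : δ ≠ 0 := ne_of_gt hδ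
  simp only [Function.comp]
  rw [smul_sub, Submodule.coe_smul, smul_mul_assoc, inv_smul_smul₀ hδ, sub_add_cancel]

theorem HLD.continuousAt {Φ : E → A} {ζ : E} {L : A} (h : HLD Φ ζ L) : ContinuousAt Φ ζ := by
  have h1 : Tendsto (fun h : E => Φ (ζ + h) - Φ ζ - (h : A) * L) (𝓝 0) (𝓝 0) :=
    h.trans_tendsto tendsto_id
  have h2 : Tendsto (fun h : E => (h : A) * L + Φ ζ) (𝓝 0) (𝓝 (Φ ζ)) := by
    have : Continuous (fun h : E => (h : A) * L + Φ ζ) := by fun_prop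
    simpa using this.tendsto 0
  have h3 := h1.add h2
  rw [zero_add] at h3
  have h4 : Tendsto (fun h : E => Φ (ζ + h)) (𝓝 0) (𝓝 (Φ ζ)) := h3.congr fun h => by abel
  have h5 : Tendsto (fun z : E => z - ζ) (𝓝 ζ) (𝓝 0) := by
    have : Continuous (fun z : E => z - ζ) := by fun_prop
    simpa using this.tendsto ζ
  exact (h4.comp h5).congr fun z => by simp

theorem HLD.add {Φ Ψ : E → A} {ζ : E} {L K : A} (h : HLD Φ ζ L) (k : HLD Ψ ζ K) :
    HLD (fun z => Φ z + Ψ z) ζ (L + K) := by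
  unfold HLD at *
  refine (Asymptotics.IsLittleO.add h k).congr_left fun z => ?_
  simp only
  ring

theorem HLD.of_hasFDerivAt {G : A → A} {ζ : E} {L : A →L[ℂ] A} (hG : HasFDerivAt G L (ζ : A))
    (hL : ∀ h, L h = h * L 1) (x : A) : HLD (fun z : E => G z * x) ζ (L 1 * x) := by
  rw [hasFDerivAt_iff_isLittleO_nhds_zero] at hG
  have h1 : Tendsto (fun h : E => (h : A)) (𝓝 0) (𝓝 0) := by
    simpa using (continuous_subtype_val (p := fun a : A => a ∈ E)).tendsto 0
  have h2 := hG.comp_tendsto h1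
  unfold HLD
  have h3 : (fun h : E => G ((ζ + h : E) : A) * x - G ζ * x - (h : A) * (L 1 * x)) =O[𝓝 0]
      ((fun h : A => G (ζ + h) - G ζ - L h) ∘ fun h : E => (h : A)) := by
    refine Asymptotics.IsBigO.of_bound ‖x‖ (Eventually.of_forall fun h => ?_)
    simp only [Function.comp]
    have e : G ((ζ + h : E) : A) * x - G ζ * x - (h : A) * (L 1 * x) =
        (G (ζ + h) - G ζ - L h) * x := by
      rw [hL h, Submodule.coe_add]; ring
    rw [e, mul_comm ‖x‖]
    exact norm_mul_le _ _
  refine (h3.trans_isLittleO h2).trans_isBigO ?_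
  exact Asymptotics.IsBigO.of_bound 1 (Eventually.of_forall fun h => by simp)

theorem lorch_iff_HLD {Ω : Set E} (hΩ : IsOpen Ω) {Φ : E → A} {ζ : E} (hζ : ζ ∈ Ω) {L : A} :
    LorchDiffAt Ω Φ ζ L ↔ HLD Φ ζ L := by
  unfold HLD LorchDiffAt
  rw [Asymptotics.isLittleO_iff]
  constructor
  · intro h ε hε
    obtain ⟨δ, hδ, hh⟩ := h ε hε
    have h1 : ∀ᶠ v : E in 𝓝 0, ζ + v ∈ Ω := by
      have hc : Continuous (fun v : E => ζ + v) := by fun_prop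
      exact hc.continuousAt (hΩ.mem_nhds (by simpa using hζ))
    filter_upwards [h1, Metric.ball_mem_nhds (0 : E) hδ] with v hv1 hv2
    exact hh v (by simpa using hv2) hv1
  · intro h ε hε
    obtain ⟨δ, hδ, hh⟩ := Metric.eventually_nhds_iff.1 (h hε)
    exact ⟨δ, hδ, fun v hv _ => hh (by simpa using hv)⟩

theorem hille_induction [FiniteDimensional ℂ A] (h1E : (1 : A) ∈ E) (hC : CondC E) (J : Ideal A) :
    ∀ (Ω : Set E) (Φ : E → A), IsOpen Ω →
      (∀ ζ ∈ Ω, ∃ r > (0 : ℝ), ∃ C : ℝ, ∀ z ∈ Metric.ball ζ r, ‖Φ z‖ ≤ C) →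
      (∀ ζ ∈ Ω, ∃ g : A, GateauxDiffAt Φ ζ g) → (∀ ζ ∈ Ω, Φ ζ ∈ J) →
      ∀ ζ0 ∈ Ω, ∃ L : A, HLD Φ ζ0 L := by
  have hcomp : CompleteSpace A := FiniteDimensional.complete ℂ A
  have hArt : IsArtinian A A := isArtinian_of_tower ℂ inferInstance
  induction J using WellFoundedLT.induction with
  | _ J ih =>
  intro Ω Φ hΩ hb hg hJ ζ0 h0
  by_cases hbot : J = ⊥
  · refine ⟨0, ?_⟩
    unfold HLD
    have hev : ∀ᶠ v : E in 𝓝 0, ζ0 + v ∈ Ω := by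
      have hc : Continuous (fun v : E => ζ0 + v) := by fun_prop
      exact hc.continuousAt (hΩ.mem_nhds (by simpa using h0))
    refine (Asymptotics.isLittleO_zero _ _).congr' ?_ EventuallyEq.rfl
    filter_upwards [hev] with v hv
    have e1 := hJ _ hv
    have e2 := hJ _ h0
    rw [hbot, Ideal.mem_bot] at e1 e2
    rw [e1, e2]; simp
  obtain ⟨J', hJ', φ, l, hl, hlk, x0, hx0, hlx0⟩ := lm_coatom J hbot
  have hφc : Continuous φ := φ.toLinearMap.continuous_of_finiteDimensional
  have hlc : Continuous l := l.continuous_of_finiteDimensional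
  let lC : A →L[ℂ] ℂ := ⟨l, hlc⟩
  let φE : E →L[ℝ] ℂ := ⟨(φ.toLinearMap.restrictScalars ℝ).comp E.subtype,
    hφc.comp continuous_subtype_val⟩
  have hφE : ∀ h : E, φE h = φ h := fun h => rfl
  have hsurj : Function.Surjective φE := hC φ
  have hJc : IsClosed (J : Set A) :=
    Submodule.closed_of_finiteDimensional (J.restrictScalars ℂ)
  obtain ⟨F, ρ, hρ, hF, hfF⟩ := lm_scalar φE hsurj (f := fun z => l (Φ z)) hΩ (by
    intro ζ hζ
    obtain ⟨r, hr, C, hC⟩ := hb ζ hζ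
    exact ⟨r, hr, ‖lC‖ * C, fun z hz => (lC.le_opNorm _).trans
      (mul_le_mul_of_nonneg_left (hC z hz) (norm_nonneg _))⟩) (by
    intro ζ hζ
    obtain ⟨g, hg⟩ := hg ζ hζ
    have hgJ : g ∈ J := by
      have h1 := hg ⟨1, h1E⟩
      rw [one_mul] at h1
      refine hJc.mem_of_tendsto h1 ?_
      have hev : ∀ᶠ δ : ℝ in 𝓝[>] 0, ζ + δ • (⟨1, h1E⟩ : E) ∈ Ω := by
        have hc : Continuous (fun δ : ℝ => ζ + δ • (⟨1, h1E⟩ : E)) := by fun_prop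
        exact mem_nhdsWithin_of_mem_nhds (hc.continuousAt (hΩ.mem_nhds (by simpa using hζ)))
      filter_upwards [hev] with δ hδ
      have h2 := J.sub_mem (hJ _ hδ) (hJ _ hζ)
      have h3 := (J.restrictScalars ℂ).smul_mem ((δ⁻¹ : ℝ) : ℂ) h2
      exact h3
    refine ⟨l g, fun h => ?_⟩
    have h1 := (hlc.tendsto _).comp (hg h)
    rw [hl _ _ hgJ, ← hφE] at h1
    refine h1.congr fun δ => ?_
    simp only [Function.comp]
    rw [← map_sub, ← LinearMap.map_smul_of_tower]) h0
  obtain ⟨G, hG⟩ := lm_lift φ hφc (z0 := (ζ0 : A)) hρ hF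
  have hG' : ∀ᶠ ζ : E in 𝓝 ζ0, φ (G ζ) = F (φ ζ) ∧
      ∃ L : A →L[ℂ] A, HasFDerivAt G L (ζ : A) ∧ ∀ h, L h = h * L 1 :=
    (continuous_subtype_val (p := fun a : A => a ∈ E)).continuousAt.eventually hG
  obtain ⟨Ω', hΩ'sub, hΩ', h0'⟩ := mem_nhds_iff.1
    (inter_mem (inter_mem hG' hfF) (hΩ.mem_nhds h0))
  have hLD : ∀ ζ ∈ Ω', ∃ K, HLD (fun z : E => G z * (-x0)) ζ K := by
    intro ζ hζ
    obtain ⟨L, hL, hLm⟩ := (hΩ'sub hζ).1.1.2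
    exact ⟨_, HLD.of_hasFDerivAt hL hLm (-x0)⟩
  obtain ⟨L1, hL1⟩ := ih J' hJ' Ω' (fun z => Φ z + G z * (-x0)) hΩ' (by
    intro ζ hζ
    obtain ⟨r, hr, C, hC⟩ := hb ζ (hΩ'sub hζ).2
    obtain ⟨K, hK⟩ := hLD ζ hζ
    have hev := hK.continuousAt.norm.eventually (gt_mem_nhds (lt_add_one _))
    obtain ⟨r', hr', hr2⟩ := Metric.eventually_nhds_iff.1 hev
    refine ⟨min r r', lt_min hr hr', C + (‖G ζ * (-x0)‖ + 1), fun z hz => ?_⟩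
    refine (norm_add_le _ _).trans (add_le_add (hC z (Metric.ball_subset_ball (min_le_left _ _) hz)) ?_)
    exact (hr2 (Metric.ball_subset_ball (min_le_right _ _) hz)).le) (by
    intro ζ hζ
    obtain ⟨g, hg⟩ := hg ζ (hΩ'sub hζ).2
    obtain ⟨K, hK⟩ := hLD ζ hζ
    refine ⟨g + K, fun h => ?_⟩
    have := (hg h).add (hK.gateaux h)
    rw [← mul_add] at this
    refine this.congr fun δ => ?_
    rw [← smul_add]; congr 1; beta_reduce; ring) (by
    intro ζ hζ
    have hm := hΩ'sub hζ
    refine hlk _ (J.add_mem (hJ _ hm.2) (J.mul_mem_left _ (J.neg_mem hx0))) ?_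
    have e1 : l (Φ ζ) = F (φ ζ) := hm.1.2
    rw [map_add, hl _ _ (J.neg_mem hx0), map_neg, hlx0, e1, hm.1.1.1]; ring) ζ0 h0'
  obtain ⟨L, hL, hLm⟩ := (hΩ'sub h0').1.1.2
  have hfin := hL1.add (HLD.of_hasFDerivAt hL hLm x0)
  refine ⟨L1 + L 1 * x0, ?_⟩
  have hfun : Φ = fun z : E => (Φ z + G z * (-x0)) + G z * x0 := by
    funext z
    ring
  rw [hfun]
  exact hfin

end HilleAux

/-- Theorem 1 (analog of the Hille theorem): under condition (C), for a function
`Φ` on an open set `Ω ⊆ E_k`, local boundedness + Gâteaux differentiability,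
monogeneity (continuity + Gâteaux differentiability), and Lorch differentiability
are all equivalent. -/
theorem hille_analog_equivalences
    {A : Type*} [NormedCommRing A] [NormedAlgebra ℂ A] [FiniteDimensional ℂ A]
    {k : ℕ} (hk : 2 ≤ k) (e : Fin k → A) (he0 : e ⟨0, by omega⟩ = 1)
    (hli : LinearIndependent ℝ e)
    (hC : CondC (Submodule.span ℝ (Set.range e)))
    (Ω : Set (Submodule.span ℝ (Set.range e))) (hΩ : IsOpen Ω)
    (Φ : Submodule.span ℝ (Set.range e) → A) :
    ((IsLocBoundedOn Ω Φ ∧ ∀ ζ ∈ Ω, ∃ g : A, GateauxDiffAt Φ ζ g) ↔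
      (ContinuousOn Φ Ω ∧ ∀ ζ ∈ Ω, ∃ g : A, GateauxDiffAt Φ ζ g)) ∧
    ((ContinuousOn Φ Ω ∧ ∀ ζ ∈ Ω, ∃ g : A, GateauxDiffAt Φ ζ g) ↔
      (∀ ζ ∈ Ω, ∃ L : A, LorchDiffAt Ω Φ ζ L)) := by
  have hloc : ∀ {Ψ : Submodule.span ℝ (Set.range e) → A}, ContinuousOn Ψ Ω → IsLocBoundedOn Ω Ψ := by
    intro Ψ hc ζ hζ
    have hca := (hc.continuousAt (hΩ.mem_nhds hζ)).norm.eventually (gt_mem_nhds (lt_add_one _))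
    obtain ⟨r, hr, hb⟩ := Metric.eventually_nhds_iff.1 hca
    exact ⟨r, hr, _, fun z _ hz => (hb (by rwa [dist_eq_norm])).le⟩
  have h1E : (1 : A) ∈ Submodule.span ℝ (Set.range e) := by
    rw [← he0]; exact Submodule.subset_span ⟨_, rfl⟩
  have h13 : (IsLocBoundedOn Ω Φ ∧ ∀ ζ ∈ Ω, ∃ g : A, GateauxDiffAt Φ ζ g) →
      ∀ ζ ∈ Ω, ∃ L : A, LorchDiffAt Ω Φ ζ L := by
    rintro ⟨hb, hg⟩ ζ hζ
    obtain ⟨L, hL⟩ := hille_induction h1E hC ⊤ Ω Φ hΩ (by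
      intro z hz
      obtain ⟨r, hr, C, hrC⟩ := hb z hz
      obtain ⟨r', hr', hs⟩ := Metric.isOpen_iff.1 hΩ z hz
      refine ⟨min r r', lt_min hr hr', C, fun w hw => hrC w
        (hs (Metric.ball_subset_ball (min_le_right _ _) hw)) ?_⟩
      have := Metric.mem_ball.1 (Metric.ball_subset_ball (min_le_left _ _) hw)
      rwa [dist_eq_norm] at this) hg (fun _ _ => Submodule.mem_top) ζ hζ
    exact ⟨L, (lorch_iff_HLD hΩ hζ).2 hL⟩
  have h32 : (∀ ζ ∈ Ω, ∃ L : A, LorchDiffAt Ω Φ ζ L) →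
      (ContinuousOn Φ Ω ∧ ∀ ζ ∈ Ω, ∃ g : A, GateauxDiffAt Φ ζ g) := by
    intro h
    refine ⟨fun ζ hζ => ?_, fun ζ hζ => ?_⟩
    · obtain ⟨L, hL⟩ := h ζ hζ
      exact ((lorch_iff_HLD hΩ hζ).1 hL).continuousAt.continuousWithinAt
    · obtain ⟨L, hL⟩ := h ζ hζ
      exact ⟨L, ((lorch_iff_HLD hΩ hζ).1 hL).gateaux⟩
  exact ⟨⟨fun h => h32 (h13 h), fun h => ⟨hloc h.1, h.2⟩⟩,
    ⟨fun h => h13 ⟨hloc h.1, h.2⟩, h32⟩⟩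
end
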